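/- arXiv:1002.1998 — 2 statements merged into one kernel-verified Lean document; each statement's English description precedes it below -/
import Mathlib

section
/- If the Riemann Hypothesis is false, then there are infinitely many k ≥ 1 with N_k / φ(N_k) < e^γ · log(log N_k) and infinitely many k ≥ 1 with N_k / φ(N_k) > e^γ · log(log N_k), where N_k = p_1 p_2 ⋯ p_k. -/
/-! Write `θ(x) = ∑_{p ≤ x} log p`, `R(x) = ∑_{p ≤ x} 1/p`, `C = ∑_p (-log(1 - 1/p) - 1/p)`. For
`N = ∏_{p ≤ x} p` one has `log N = θ(x)` and `log (N / φ(N)) = R(x) + C + O(1/x)`, so the sign of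
`L(x) = γ + log log θ(x) - log (N / φ(N))` (`nicolasLog`) has to be shown to change infinitely often.

*Oscillation of the linearisation.* Replacing `log log θ(x)` by its tangent at `x` turns `L` into
`K(x) = (θ(x) - x) / (x log x) - (R(x) + C - log log x - γ)` (`nicolasK`). If the Riemann
Hypothesis fails, the functional equation gives a zero `ρ` with `1/2 < Re ρ < 1`
(`exists_zero_of_not_RH`); fix `1 - Re ρ < b < 1/2`. Let `Y(z) = (∑_p p^{-1-z} + C + log z) / z`. The
Mellin transform of `K(x) log x` is `(Y' - Y - 1) / (z + 1)` (`kFun_mellin`), and `z Y` is, up to a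
function holomorphic for `Re z > -1/2`, the logarithm of `z ζ(1 + z)`. Since `z ζ(1 + z)` is positive
on the real ray `(-1/2, ∞)` (`zQ_pos`), this transform has no singularity on that ray. If `K(x) ≤ x^{-b}`
for all large `x`, or `-K(x) ≤ x^{-b}` for all large `x`, Landau's lemma (`landau_mellin`) continues the
transform, hence `B = Y' - Y`, holomorphically to `Re z > -b`. Solving this linear differential equation
on a disc continues `Y` itself, and `exp (z Y)` is then a continuation without zeros of a function that
vanishes at `ρ - 1` (`no_continuation`). So `x^b K(x)` exceeds `1` and falls below `-1` arbitrarily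
far out (`nicolasK_oscillates`).

*From `K` to `L`.* Concavity of `log log` gives `L ≤ K + 2/x`, so negative values of `K` give negative
values of `L`. For the other sign no upper bound for `(θ(x) - x)²` is available. Instead, take
`y` maximising `t^b K(t)` between two points where `K` is negative and around a point where `t^b K(t) > 1`.
The function `K` is continuous, since the jumps of `θ` and `R` at a prime cancel, and smooth between
primes; comparing the one-sided derivatives at `y` yields `θ(y) > y` and
`(θ(y) - y) / (y log y) ≤ b K(y) + 1/y` (`nicolasK_local_max`). Then
`L(y) ≥ K(y) - (θ(y) - y) / (y log y) ≥ (1 - b) K(y) - 1/y > 0`, because `K(y) > y^{-b} ≥ 2/y`.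
-/

/-- `primorialOfFirstPrimes k = p₁ p₂ ⋯ p_k`, the product of the first `k` primes. -/
noncomputable def primorialOfFirstPrimes (k : ℕ) : ℕ := ∏ i ∈ Finset.range k, Nat.nth Nat.Prime i

section

open Filter Topology MeasureTheory ProbabilityTheory Set

/-! ### Landau's lemma -/

/-- Identity theorem: two functions holomorphic at a real point that agree at nearby real points
agree in a complex neighbourhood. -/
lemma eventuallyEq_of_eventuallyEq_ofReal {f g : ℂ → ℂ} {x : ℝ} (hf : AnalyticAt ℂ f x)
    (hg : AnalyticAt ℂ g x) (h : ∀ᶠ t : ℝ in 𝓝 x, f t = g t) : f =ᶠ[𝓝 (x : ℂ)] g := by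
  refine (hf.frequently_eq_iff_eventually_eq hg).1 ?_
  have ht : Tendsto (fun t : ℝ => (t : ℂ)) (𝓝[≠] x) (𝓝[≠] (x : ℂ)) := by
    refine tendsto_nhdsWithin_of_tendsto_nhds_of_eventually_within _
      ((Complex.continuous_ofReal.tendsto x).mono_left nhdsWithin_le_nhds) ?_
    filter_upwards [self_mem_nhdsWithin] with t ht
    simpa using ht
  exact ht.frequently (h.filter_mono nhdsWithin_le_nhds).frequently

/-- Identity theorem along a real interval `s`; nothing is assumed about the domains away from
`s`. -/
lemma eqOn_real_of_eventuallyEq {f g : ℂ → ℂ} {s : Set ℝ} (hs : IsPreconnected s)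
    (hf : ∀ x ∈ s, AnalyticAt ℂ f (x : ℂ)) (hg : ∀ x ∈ s, AnalyticAt ℂ g (x : ℂ)) {x₀ : ℝ}
    (hx₀ : x₀ ∈ s) (h : ∀ᶠ t : ℝ in 𝓝 x₀, f t = g t) : ∀ x ∈ s, f x = g x := by
  have key : ∀ F : ℂ → ℂ, (∀ x ∈ s, AnalyticAt ℂ F (x : ℂ)) →
      AnalyticOnNhd ℝ (fun t : ℝ => F t) s := fun F hF x hx =>
    ((hF x hx).restrictScalars (𝕜 := ℝ)).comp (Complex.ofRealCLM.analyticAt x)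
  exact fun x hx => (key f hf).eqOn_of_preconnected_of_eventuallyEq (key g hg) hs hx₀ h hx

/-- **Landau's lemma** for exponential integrals with a nonnegative exponent variable `X`: if
`∫ exp (t X) dμ` converges for `t < t₁` and equals there a function `F` that is holomorphic near the
real ray `t < t₀`, then it converges for all `t < t₀`. At the abscissa of convergence the Taylor series
of `F` about a point slightly to the left has nonnegative coefficients and a positive margin, so
Tonelli gives convergence beyond the abscissa. -/
lemma landau_integrableExpSet {Ω : Type*} [MeasurableSpace Ω] {μ : Measure Ω} {X : Ω → ℝ}
    (hX : Measurable X) (hX0 : ∀ᵐ ω ∂μ, 0 ≤ X ω) {t₁ t₀ : ℝ}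
    (h₁ : ∀ t < t₁, t ∈ integrableExpSet X μ) {V : Set ℂ} (hV : IsOpen V) {F : ℂ → ℂ}
    (hF : DifferentiableOn ℂ F V) (hVr : ∀ t : ℝ, t < t₀ → (t : ℂ) ∈ V)
    (hFr : ∀ t : ℝ, t < t₁ → F t = complexMGF X μ t) :
    ∀ t < t₀, t ∈ integrableExpSet X μ := by
  by_contra! hcon
  obtain ⟨t', ht', htn⟩ := hcon
  -- `τ` is the abscissa of convergence
  set S := {t | ∀ u < t, u ∈ integrableExpSet X μ} with hS
  have hbdd : BddAbove S := ⟨t', fun t ht => by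
    by_contra! hlt; exact htn (ht t' hlt)⟩
  have hne : S.Nonempty := ⟨t₁, h₁⟩
  set τ := sSup S with hτ
  have hτle : τ ≤ t' := csSup_le hne fun t ht => by
    by_contra! hlt; exact htn (ht t' hlt)
  have hτ1 : t₁ ≤ τ := le_csSup hbdd h₁
  have hlt : ∀ u < τ, u ∈ integrableExpSet X μ := fun u hu => by
    obtain ⟨t, ht, hut⟩ := exists_lt_of_lt_csSup hne hu
    exact ht u hut
  have hconv : ∀ u < τ, u ∈ interior (integrableExpSet X μ) := fun u hu =>
    mem_interior.2 ⟨Iio τ, hlt, isOpen_Iio, hu⟩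
  -- a complex disc around `τ` on which `F` is holomorphic
  obtain ⟨r, hr, hball⟩ := Metric.isOpen_iff.1 hV (τ : ℂ) (hVr τ (by linarith))
  set a : ℝ := τ - r / 4 with ha
  have haτ : a < τ := by linarith
  have hFa : ∀ x ∈ Iio τ, AnalyticAt ℂ F (x : ℂ) := fun x hx =>
    hF.analyticAt (hV.mem_nhds (hVr x (by have : x < τ := hx; linarith)))
  have hMa : ∀ x ∈ Iio τ, AnalyticAt ℂ (complexMGF X μ) (x : ℂ) := fun x hx =>
    analyticAt_complexMGF (by simpa using hconv x hx)
  have heq : ∀ x ∈ Iio τ, F x = complexMGF X μ x := by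
    refine eqOn_real_of_eventuallyEq isPreconnected_Iio hFa hMa (x₀ := t₁ - 1)
      (by simp only [mem_Iio]; linarith) ?_
    filter_upwards [Iio_mem_nhds (show t₁ - 1 < t₁ by linarith)] with t ht using hFr t ht
  have hev : F =ᶠ[𝓝 (a : ℂ)] complexMGF X μ :=
    eventuallyEq_of_eventuallyEq_ofReal (hFa a haτ) (hMa a haτ)
      (by filter_upwards [Iio_mem_nhds haτ] with t ht using heq t ht)
  have hder : ∀ n : ℕ, iteratedDeriv n F a = ((∫ ω, X ω ^ n * Real.exp (a * X ω) ∂μ : ℝ) : ℂ) := by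
    intro n
    rw [hev.iteratedDeriv_eq n, iteratedDeriv_complexMGF (by simpa using hconv a haτ) n,
      ← integral_complex_ofReal]
    simp
  -- `a + δ = τ + r / 8` lies beyond `τ` but in the disc of radius `r / 2` about `a`
  set δ : ℝ := 3 * r / 8 with hδ
  -- the Taylor expansion of `F` at `a`, evaluated beyond `τ`
  have hsum : HasSum (fun n : ℕ => (((n.factorial : ℝ)⁻¹ * (δ ^ n *
      ∫ ω, X ω ^ n * Real.exp (a * X ω) ∂μ) : ℝ) : ℂ)) (F ((a + δ : ℝ) : ℂ)) := by
    have hsub : Metric.ball (a : ℂ) (r / 2) ⊆ V := by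
      refine (Metric.ball_subset_ball' ?_).trans hball
      rw [Complex.dist_eq, ← Complex.ofReal_sub, Complex.norm_real, Real.norm_eq_abs, ha,
        show τ - r / 4 - τ = -(r / 4) by ring, abs_neg, abs_of_pos (by positivity)]
      linarith
    have hz : ((a + δ : ℝ) : ℂ) ∈ Metric.ball (a : ℂ) (r / 2) := by
      rw [Metric.mem_ball, Complex.dist_eq, ← Complex.ofReal_sub, Complex.norm_real,
        Real.norm_eq_abs, add_sub_cancel_left, abs_of_pos (by positivity)]
      linarith
    have := Complex.hasSum_taylorSeries_on_ball (hF.mono hsub) hz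
    convert! this using 2 with n
    rw [hder n]
    push_cast
    simp
  have hsumR : Summable (fun n : ℕ => (n.factorial : ℝ)⁻¹ * (δ ^ n *
      ∫ ω, X ω ^ n * Real.exp (a * X ω) ∂μ)) :=
    (Complex.hasSum_re hsum).summable
  have hXn : ∀ n : ℕ, Integrable (fun ω => X ω ^ n * Real.exp (a * X ω)) μ := fun n =>
    integrable_pow_mul_exp_of_mem_interior_integrableExpSet (hconv a haτ) n
  -- by Tonelli the exponential integral converges at `a + δ`
  have hfin : Integrable (fun ω => Real.exp ((a + δ) * X ω)) μ := by
    refine ⟨by fun_prop, ?_⟩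
    rw [hasFiniteIntegral_iff_ofReal (ae_of_all _ fun ω => (Real.exp_pos _).le)]
    have hexp : ∀ᵐ ω ∂μ, ENNReal.ofReal (Real.exp ((a + δ) * X ω)) =
        ∑' n : ℕ, ENNReal.ofReal ((n.factorial : ℝ)⁻¹ * (δ ^ n *
          (X ω ^ n * Real.exp (a * X ω)))) := by
      filter_upwards [hX0] with ω hω
      have h1 : HasSum (fun n : ℕ => (n.factorial : ℝ)⁻¹ * (δ ^ n *
          (X ω ^ n * Real.exp (a * X ω)))) (Real.exp ((a + δ) * X ω)) := by
        have := (NormedSpace.expSeries_div_hasSum_exp (δ * X ω)).mul_right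
          (Real.exp (a * X ω))
        rw [← Real.exp_eq_exp_ℝ, ← Real.exp_add] at this
        convert! this using 2
        · rw [mul_pow]; field_simp
        · ring
      rw [← h1.tsum_eq, ENNReal.ofReal_tsum_of_nonneg (fun n => by positivity) h1.summable]
    rw [lintegral_congr_ae hexp, lintegral_tsum (fun n => by fun_prop)]
    have hterm : ∀ n : ℕ, ∫⁻ ω, ENNReal.ofReal ((n.factorial : ℝ)⁻¹ * (δ ^ n *
        (X ω ^ n * Real.exp (a * X ω)))) ∂μ = ENNReal.ofReal ((n.factorial : ℝ)⁻¹ * (δ ^ n *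
          ∫ ω, X ω ^ n * Real.exp (a * X ω) ∂μ)) := by
      intro n
      rw [← integral_const_mul, ← integral_const_mul]
      rw [ofReal_integral_eq_lintegral_ofReal (((hXn n).const_mul _).const_mul _)]
      filter_upwards [hX0] with ω hω
      positivity
    simp_rw [hterm]
    rw [← ENNReal.ofReal_tsum_of_nonneg _ hsumR]
    · exact ENNReal.ofReal_lt_top
    · intro n
      have : 0 ≤ ∫ ω, X ω ^ n * Real.exp (a * X ω) ∂μ :=
        integral_nonneg_of_ae (by filter_upwards [hX0] with ω hω; positivity)
      positivity
  have hmem : a + δ ∈ S := fun u hu => by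
    have h0 : min u (τ - 1) ∈ integrableExpSet X μ := hlt _ (by
      have := min_le_right u (τ - 1); linarith)
    exact (convex_integrableExpSet.ordConnected.out h0 hfin) ⟨min_le_left _ _, hu.le⟩
  have := le_csSup hbdd hmem
  rw [← hτ] at this
  linarith

/-- The measure `h(x) dx / x` on `(1, ∞)` for a nonnegative `h`. The Mellin transform
`∫₁^∞ h(x) x^{-z-1} dx` is the moment generating function of `log x` under it, evaluated at `-z`. -/
noncomputable def mellinMeasure (h : ℝ → ℝ) : Measure ℝ :=
  (volume.restrict (Ioi 1)).withDensity fun x => ENNReal.ofReal (h x / x)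

lemma rpow_sub_one_eq {x : ℝ} (hx : 1 < x) (t : ℝ) :
    x ^ (t - 1) = Real.exp (t * Real.log x) / x := by
  rw [Real.rpow_sub_one (by linarith), Real.rpow_def_of_pos (by linarith), mul_comm]

lemma mem_integrableExpSet_mellinMeasure {h : ℝ → ℝ} (hm : Measurable h)
    (h0 : ∀ x, 0 ≤ h x) {t : ℝ} :
    t ∈ integrableExpSet Real.log (mellinMeasure h) ↔
      IntegrableOn (fun x => h x * x ^ (t - 1)) (Ioi 1) := by
  rw [integrableExpSet, mem_ofPred_eq, mellinMeasure,
    integrable_withDensity_iff_integrable_smul' (by fun_prop) (by simp)]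
  refine integrable_congr ?_
  filter_upwards [ae_restrict_mem measurableSet_Ioi] with x (hx : 1 < x)
  rw [ENNReal.toReal_ofReal (div_nonneg (h0 x) (by linarith)), rpow_sub_one_eq hx, smul_eq_mul]
  ring

lemma complexMGF_mellinMeasure {h : ℝ → ℝ} (hm : Measurable h) (h0 : ∀ x, 0 ≤ h x) (z : ℂ) :
    complexMGF Real.log (mellinMeasure h) z =
      ∫ x in Ioi (1 : ℝ), (h x : ℂ) * (x : ℂ) ^ (z - 1) := by
  rw [complexMGF, mellinMeasure,
    integral_withDensity_eq_integral_toReal_smul (by fun_prop) (by simp)]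
  refine setIntegral_congr_fun measurableSet_Ioi fun x (hx : 1 < x) => ?_
  have hx' : (x : ℂ) ≠ 0 := by exact_mod_cast (by linarith : x ≠ 0)
  rw [ENNReal.toReal_ofReal (div_nonneg (h0 x) (by linarith)), Complex.cpow_sub _ _ hx',
    Complex.cpow_one, Complex.cpow_def_of_ne_zero hx', Complex.real_smul, mul_comm z,
    Complex.ofReal_log (by linarith)]
  push_cast
  ring

lemma ae_mellinMeasure {h : ℝ → ℝ} : ∀ᵐ x ∂(mellinMeasure h), 0 ≤ Real.log x := by
  refine (withDensity_absolutelyContinuous _ _).ae_le ?_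
  filter_upwards [ae_restrict_mem measurableSet_Ioi] with x (hx : 1 < x)
  exact Real.log_nonneg hx.le

/-- **Landau's lemma** for the Mellin transform `∫₁^∞ g(x) x^{-s-1} dx` of a function that is
nonnegative on `(X₀, ∞)`: if the transform agrees for real `s > s₁` with a function `G` holomorphic on an
open set that contains the real ray `s > σ₀`, then it continues holomorphically to the whole half-plane
`Re z > σ₀`. -/
lemma landau_mellin {g : ℝ → ℝ} (hg : Measurable g) {X₀ : ℝ} (hX₀ : 1 ≤ X₀)
    (hpos : ∀ x > X₀, 0 ≤ g x) {σ₀ s₁ : ℝ}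
    (hconv : ∀ s > s₁, IntegrableOn (fun x => g x * x ^ (-s - 1)) (Ioi 1))
    {G : ℂ → ℂ} {U : Set ℂ} (hU : IsOpen U) (hUr : ∀ s : ℝ, σ₀ < s → (s : ℂ) ∈ U)
    (hG : DifferentiableOn ℂ G U)
    (hGr : ∀ s : ℝ, s₁ < s → G s = ∫ x in Ioi (1 : ℝ), (g x : ℂ) * (x : ℂ) ^ (-(s : ℂ) - 1)) :
    ∃ Φ : ℂ → ℂ, DifferentiableOn ℂ Φ {z | σ₀ < z.re} ∧ ∀ s : ℝ, s₁ < s → Φ s = G s := by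
  set p : ℝ → ℝ := fun x => max (g x) 0
  set q : ℝ → ℝ := fun x => max (-g x) 0
  have hp : Measurable p := by fun_prop
  have hq : Measurable q := by fun_prop
  have hp0 : ∀ x, 0 ≤ p x := fun x => le_max_right _ _
  have hq0 : ∀ x, 0 ≤ q x := fun x => le_max_right _ _
  have hpq : ∀ x, g x = p x - q x := fun x => by
    simp only [p, q]; rcases le_total 0 (g x) with h | h
    · rw [max_eq_left h, max_eq_right (by linarith)]; ring
    · rw [max_eq_right h, max_eq_left (by linarith)]; ring
  have hple : ∀ x, |p x| ≤ |g x| := fun x => by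
    rw [abs_of_nonneg (hp0 x)]; exact max_le (le_abs_self _) (abs_nonneg _)
  have hqle : ∀ x, |q x| ≤ |g x| := fun x => by
    rw [abs_of_nonneg (hq0 x)]; exact max_le (neg_le_abs _) (abs_nonneg _)
  have hI : ∀ {f : ℝ → ℝ}, Measurable f → (∀ x, |f x| ≤ |g x|) → ∀ t : ℝ, t < -s₁ →
      IntegrableOn (fun x => f x * x ^ (t - 1)) (Ioi 1) := by
    intro f hf hfg t ht
    have := hconv (-t) (by linarith)
    rw [neg_neg] at this
    refine Integrable.mono this (by fun_prop) (ae_of_all _ fun x => ?_)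
    rw [norm_mul, norm_mul]
    exact mul_le_mul_of_nonneg_right (hfg x) (norm_nonneg _)
  have hpI : ∀ t < -s₁, t ∈ integrableExpSet Real.log (mellinMeasure p) := fun t ht =>
    (mem_integrableExpSet_mellinMeasure hp hp0).2 (hI hp hple t ht)
  -- the negative part lives on a bounded interval, so its transform is entire
  have hqI : ∀ t, t ∈ integrableExpSet Real.log (mellinMeasure q) := by
    intro t
    rw [mem_integrableExpSet_mellinMeasure hq hq0]
    set t₂ := min t (-s₁ - 1)
    have h2 := (hI hq hqle t₂ (by have := min_le_right t (-s₁ - 1); linarith)).const_mul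
      (X₀ ^ (t - t₂))
    refine Integrable.mono h2 (by fun_prop) ?_
    filter_upwards [ae_restrict_mem measurableSet_Ioi] with x (hx : 1 < x)
    rcases le_or_gt x X₀ with h | h
    · rw [show t - 1 = (t - t₂) + (t₂ - 1) by ring, Real.rpow_add (by linarith),
        mul_left_comm, norm_mul, norm_mul (X₀ ^ _)]
      refine mul_le_mul_of_nonneg_right ?_ (norm_nonneg _)
      rw [Real.norm_of_nonneg (by positivity), Real.norm_of_nonneg (by positivity)]
      exact Real.rpow_le_rpow (by linarith) h (by have := min_le_left t (-s₁ - 1); linarith)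
    · have : q x = 0 := max_eq_right (by linarith [hpos x h])
      simp [this]
  have hqI' : ∀ t, t ∈ interior (integrableExpSet Real.log (mellinMeasure q)) := by
    have : integrableExpSet Real.log (mellinMeasure q) = univ := eq_univ_of_forall hqI
    simp [this]
  have hqD : Differentiable ℂ (complexMGF Real.log (mellinMeasure q)) := fun z =>
    (hasDerivAt_complexMGF (hqI' z.re)).differentiableAt
  have hcI : ∀ {f : ℝ → ℝ}, Measurable f → (∀ x, |f x| ≤ |g x|) → ∀ t : ℝ, t < -s₁ →
      IntegrableOn (fun x : ℝ => (f x : ℂ) * (x : ℂ) ^ ((t : ℂ) - 1)) (Ioi 1) := by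
    intro f hf hfg t ht
    refine IntegrableOn.congr_fun (hI hf hfg t ht).ofReal (fun x (hx : 1 < x) => ?_)
      measurableSet_Ioi
    simp [Complex.ofReal_cpow (by linarith : (0 : ℝ) ≤ x)]
  have hsub : ∀ t : ℝ, t < -s₁ → complexMGF Real.log (mellinMeasure p) t -
      complexMGF Real.log (mellinMeasure q) t = G (-t) := by
    intro t ht
    have := hGr (-t) (by linarith)
    push_cast at this
    rw [this, complexMGF_mellinMeasure hp hp0, complexMGF_mellinMeasure hq hq0,
      ← integral_sub (hcI hp hple t ht) (hcI hq hqle t ht), neg_neg]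
    refine integral_congr_ae (ae_of_all _ fun x => ?_)
    simp only [hpq x]
    push_cast
    ring
  have key := landau_integrableExpSet (μ := mellinMeasure p) Real.measurable_log
    ae_mellinMeasure (t₁ := -s₁) (t₀ := -σ₀) hpI (V := {z | -z ∈ U})
    (hU.preimage continuous_neg) (F := fun z => G (-z) + complexMGF Real.log (mellinMeasure q) z)
    ((hG.comp (differentiable_neg.differentiableOn) fun z hz => hz).add hqD.differentiableOn)
    (fun t ht => by
      have := hUr (-t) (by linarith)
      simpa using this)
    (fun t ht => by rw [← hsub t ht]; ring)
  refine ⟨fun z => complexMGF Real.log (mellinMeasure p) (-z) -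
    complexMGF Real.log (mellinMeasure q) (-z), ?_, ?_⟩
  · refine DifferentiableOn.sub ?_ (hqD.comp differentiable_neg).differentiableOn
    refine (differentiableOn_complexMGF (μ := mellinMeasure p) (X := Real.log)).comp
      differentiable_neg.differentiableOn fun z (hz : σ₀ < z.re) => ?_
    exact mem_interior.2 ⟨Iio (-σ₀), key, isOpen_Iio, by simpa using hz⟩
  · intro s hs
    have := hsub (-s) (by linarith)
    push_cast at this
    simpa only [neg_neg] using this

/-! ### Mellin transforms of elementary functions -/

/-- Differentiating the Mellin transform of a nonnegative function under the integral sign. -/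
lemma mellin_log_deriv {h : ℝ → ℝ} (hm : Measurable h) (h0 : ∀ x, 0 ≤ h x) {σ₁ : ℝ}
    (hI : ∀ s > σ₁, IntegrableOn (fun x => h x * x ^ (-s - 1)) (Ioi 1)) {s : ℝ} (hs : σ₁ < s) :
    IntegrableOn (fun x => Real.log x * h x * x ^ (-s - 1)) (Ioi 1) ∧
    HasDerivAt (fun z : ℂ => ∫ x in Ioi (1 : ℝ), (h x : ℂ) * (x : ℂ) ^ (-z - 1))
      (-∫ x in Ioi (1 : ℝ), ((Real.log x * h x * x ^ (-s - 1) : ℝ) : ℂ)) s := by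
  have hmem : -s ∈ interior (integrableExpSet Real.log (mellinMeasure h)) := by
    refine mem_interior.2 ⟨Iio (-σ₁), fun t ht => ?_, isOpen_Iio, by simpa using hs⟩
    have := hI (-t) (by simp only [mem_Iio] at ht; linarith)
    rw [neg_neg] at this
    exact (mem_integrableExpSet_mellinMeasure hm h0).2 this
  constructor
  · have := integrable_pow_mul_exp_of_mem_interior_integrableExpSet hmem 1
    rw [mellinMeasure, integrable_withDensity_iff_integrable_smul' (by fun_prop) (by simp)] at this
    refine (integrable_congr ?_).1 this
    filter_upwards [ae_restrict_mem measurableSet_Ioi] with x (hx : 1 < x)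
    rw [ENNReal.toReal_ofReal (div_nonneg (h0 x) (by linarith)), rpow_sub_one_eq hx, smul_eq_mul]
    ring
  · have h1 : HasDerivAt (complexMGF Real.log (mellinMeasure h)) _ (-(s : ℂ)) :=
      hasDerivAt_complexMGF (by simpa using hmem)
    have h2 := h1.comp (s : ℂ) (hasDerivAt_neg (s : ℂ))
    have h3 : (complexMGF Real.log (mellinMeasure h) ∘ fun z => -z) =
        (fun z : ℂ => ∫ x in Ioi (1 : ℝ), (h x : ℂ) * (x : ℂ) ^ (-z - 1)) := by
      funext z
      simp only [Function.comp, complexMGF_mellinMeasure hm h0]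
    change HasDerivAt (complexMGF Real.log (mellinMeasure h) ∘ fun z => -z) _ _ at h2
    rw [h3] at h2
    convert! h2 using 1
    rw [mul_neg_one, mellinMeasure,
      integral_withDensity_eq_integral_toReal_smul (by fun_prop) (by simp)]
    congr 1
    refine setIntegral_congr_fun measurableSet_Ioi fun x (hx : 1 < x) => ?_
    rw [ENNReal.toReal_ofReal (div_nonneg (h0 x) (by linarith)), rpow_sub_one_eq hx,
      Complex.real_smul]
    push_cast
    ring

lemma integrableOn_one_mellin {s : ℝ} (hs : 0 < s) :
    IntegrableOn (fun x : ℝ => x ^ (-s - 1)) (Ioi 1) :=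
  integrableOn_Ioi_rpow_of_lt (by linarith) one_pos

lemma integral_one_mellin {z : ℂ} (hz : 0 < z.re) :
    ∫ x in Ioi (1 : ℝ), (x : ℂ) ^ (-z - 1) = 1 / z := by
  rw [integral_Ioi_cpow_of_lt (by simp; linarith) one_pos]
  simp [neg_div_neg_eq]

lemma log_mellin {s : ℝ} (hs : 0 < s) :
    IntegrableOn (fun x => Real.log x * x ^ (-s - 1)) (Ioi 1) ∧
    ∫ x in Ioi (1 : ℝ), ((Real.log x * x ^ (-s - 1) : ℝ) : ℂ) = 1 / (s : ℂ) ^ 2 := by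
  have := mellin_log_deriv (h := fun _ => 1) measurable_const (by simp) (σ₁ := 0)
    (fun s hs => by simpa using integrableOn_one_mellin hs) hs
  simp only [mul_one] at this
  refine ⟨this.1, ?_⟩
  have h2 := this.2
  have hs' : (s : ℂ) ≠ 0 := by exact_mod_cast hs.ne'
  have h3 : HasDerivAt (fun z : ℂ => ∫ x in Ioi (1 : ℝ), ((1 : ℝ) : ℂ) * (x : ℂ) ^ (-z - 1))
      (-((s : ℂ) ^ 2)⁻¹) s := by
    refine (hasDerivAt_inv hs').congr_of_eventuallyEq ?_
    filter_upwards [(isOpen_lt continuous_const Complex.continuous_re).mem_nhds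
      (show (0 : ℝ) < (s : ℂ).re by simpa using hs)] with z hz
    simp [integral_one_mellin hz]
  rw [one_div]
  exact neg_injective (h2.unique h3)

/-- `∫₀^∞ v log v e^{-v} dv = Γ'(2) = 1 - γ`. -/
lemma integral_mul_log_mul_exp_neg :
    ∫ v in Ioi (0 : ℝ), v * Real.log v * Real.exp (-v) = 1 - Real.eulerMascheroniConstant := by
  have h1 := Complex.hasDerivAt_GammaIntegral (s := 2) (by simp)
  have h2 : HasDerivAt Complex.Gamma _ 2 := h1.congr_of_eventuallyEq (by
    filter_upwards [(isOpen_lt continuous_const Complex.continuous_re).mem_nhds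
      (show (0 : ℝ) < (2 : ℂ).re by simp)] with z hz
    exact Complex.Gamma_eq_integral hz)
  have h3 := h2.deriv
  have h4 := Complex.deriv_Gamma_nat 1
  norm_num at h4
  rw [h4] at h3
  apply Complex.ofReal_injective
  rw [← integral_complex_ofReal]
  push_cast
  rw [show (1 : ℂ) - Real.eulerMascheroniConstant = -Real.eulerMascheroniConstant + 1 by ring, h3]
  refine setIntegral_congr_fun measurableSet_Ioi fun x (hx : 0 < x) => ?_
  norm_num
  ring

lemma integrableOn_mul_log_mul_exp_neg :
    IntegrableOn (fun v : ℝ => v * Real.log v * Real.exp (-v)) (Ioi 0) := by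
  by_contra h
  have h1 := integral_undef h
  rw [integral_mul_log_mul_exp_neg] at h1
  have := Real.eulerMascheroniConstant_lt_two_thirds
  linarith

/-- Rescaling `integral_mul_log_mul_exp_neg`; this is where Euler's constant enters. -/
lemma loglog_exp {s : ℝ} (hs : 0 < s) :
    IntegrableOn (fun u : ℝ => u * Real.log u * Real.exp (-(s * u))) (Ioi 0) ∧
    ∫ u in Ioi (0 : ℝ), u * Real.log u * Real.exp (-(s * u)) =
      (1 - Real.eulerMascheroniConstant - Real.log s) / s ^ 2 := by
  have key : ∀ u ∈ Ioi (0 : ℝ), u * Real.log u * Real.exp (-(s * u)) =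
      (1 / s) * ((s * u) * Real.log (s * u) * Real.exp (-(s * u)))
        - (Real.log s / s) * ((s * u) ^ (2 - 1 : ℝ) * Real.exp (-(s * u))) := by
    intro u (hu : 0 < u)
    rw [Real.log_mul hs.ne' hu.ne']
    norm_num
    field_simp
    ring
  have hG : IntegrableOn (fun v : ℝ => v ^ (2 - 1 : ℝ) * Real.exp (-v)) (Ioi 0) := by
    simpa [mul_comm] using Real.GammaIntegral_convergent (s := 2) (by norm_num)
  have i1 : IntegrableOn (fun u : ℝ => (s * u) * Real.log (s * u) * Real.exp (-(s * u)))
      (Ioi 0) := by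
    have := (integrableOn_Ioi_comp_mul_left_iff
      (fun v : ℝ => v * Real.log v * Real.exp (-v)) 0 hs).2
      (by simpa using integrableOn_mul_log_mul_exp_neg)
    simpa using this
  have i2 : IntegrableOn (fun u : ℝ => (s * u) ^ (2 - 1 : ℝ) * Real.exp (-(s * u)))
      (Ioi 0) := by
    have := (integrableOn_Ioi_comp_mul_left_iff
      (fun v : ℝ => v ^ (2 - 1 : ℝ) * Real.exp (-v)) 0 hs).2
      (by simpa using hG)
    simpa using this
  constructor
  · exact IntegrableOn.congr_fun ((i1.const_mul _).sub (i2.const_mul _))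
      (fun u hu => (key u hu).symm) measurableSet_Ioi
  · rw [setIntegral_congr_fun measurableSet_Ioi key,
      integral_sub (i1.const_mul _) (i2.const_mul _), integral_const_mul, integral_const_mul,
      integral_comp_mul_left_Ioi (fun v : ℝ => v * Real.log v * Real.exp (-v)) 0 hs,
      integral_comp_mul_left_Ioi (fun v : ℝ => v ^ (2 - 1 : ℝ) * Real.exp (-v)) 0 hs,
      mul_zero, integral_mul_log_mul_exp_neg]
    have : ∫ v in Ioi (0 : ℝ), v ^ (2 - 1 : ℝ) * Real.exp (-v) = 1 := by
      have := Real.Gamma_eq_integral (s := 2) (by norm_num)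
      rw [Real.Gamma_two] at this
      refine Eq.trans ?_ this.symm
      exact setIntegral_congr_fun measurableSet_Ioi fun x hx => mul_comm _ _
    rw [this]
    simp only [smul_eq_mul]
    field_simp

/-- The Mellin transform of `log x * log log x`, by the substitution `x = exp u`. -/
lemma loglog_mellin {s : ℝ} (hs : 0 < s) :
    IntegrableOn (fun x : ℝ => Real.log x * Real.log (Real.log x) * x ^ (-s - 1)) (Ioi 1) ∧
    ∫ x in Ioi (1 : ℝ), Real.log x * Real.log (Real.log x) * x ^ (-s - 1) =
      (1 - Real.eulerMascheroniConstant - Real.log s) / s ^ 2 := by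
  have him : Real.exp '' Ioi 0 = Ioi 1 := by
    ext x
    constructor
    · rintro ⟨u, hu, rfl⟩
      simpa using hu
    · intro (hx : 1 < x)
      exact ⟨Real.log x, Real.log_pos hx, Real.exp_log (by linarith)⟩
  have hd : ∀ x ∈ Ioi (0 : ℝ), HasDerivWithinAt Real.exp (Real.exp x) (Ioi 0) x :=
    fun x _ => (Real.hasDerivAt_exp x).hasDerivWithinAt
  have hinj : InjOn Real.exp (Ioi 0) := Real.exp_injective.injOn
  have hf : ∀ u ∈ Ioi (0 : ℝ), |Real.exp u| • (Real.log (Real.exp u) *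
      Real.log (Real.log (Real.exp u)) * Real.exp u ^ (-s - 1)) =
      u * Real.log u * Real.exp (-(s * u)) := by
    intro u _
    rw [abs_of_pos (Real.exp_pos u), Real.log_exp, ← Real.exp_mul, smul_eq_mul, mul_left_comm,
      ← Real.exp_add]
    ring_nf
  rw [← him, integrableOn_image_iff_integrableOn_abs_deriv_smul measurableSet_Ioi hd hinj,
    integral_image_eq_integral_abs_deriv_smul measurableSet_Ioi hd hinj,
    setIntegral_congr_fun measurableSet_Ioi hf]
  exact ⟨IntegrableOn.congr_fun (loglog_exp hs).1 (fun u hu => (hf u hu).symm) measurableSet_Ioi,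
    (loglog_exp hs).2⟩

/-! ### Mellin transforms of prime sums -/

/-- The function `n ↦ 1/n` supported on the primes. -/
noncomputable def primeInv (n : ℕ) : ℝ := if n.Prime then (n : ℝ)⁻¹ else 0

/-- `∑_{p ≤ x} 1/p`. -/
noncomputable def primeInvSum (x : ℝ) : ℝ := ∑ k ∈ Finset.Icc 1 ⌊x⌋₊, primeInv k

/-- `∑_p p^{-1-z}`, the prime zeta function at `1 + z`, meaningful for `Re z > 0`. -/
noncomputable def primeL (z : ℂ) : ℂ := LSeries (fun n => (primeInv n : ℂ)) z

lemma primeInv_nonneg (n : ℕ) : 0 ≤ primeInv n := by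
  unfold primeInv; split_ifs <;> positivity

lemma primeInv_le_one (n : ℕ) : primeInv n ≤ 1 := by
  unfold primeInv; split_ifs with h
  · exact inv_le_one_of_one_le₀ (by exact_mod_cast h.one_le)
  · exact zero_le_one

lemma abscissa_primeInv : LSeries.abscissaOfAbsConv (fun n => (primeInv n : ℂ)) ≤ 0 := by
  have := LSeries.abscissaOfAbsConv_le_of_le_const_mul_rpow (f := fun n => (primeInv n : ℂ))
    (x := -1) ⟨1, fun n _ => ?_⟩
  · refine this.trans (le_of_eq ?_)
    rw [← EReal.coe_one, ← EReal.coe_add]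
    norm_num
  · rw [Complex.norm_real, Real.norm_of_nonneg (primeInv_nonneg n), Real.rpow_neg_one, one_mul]
    unfold primeInv; split_ifs <;> simp

lemma abscissa_primeInv_lt {z : ℂ} (hz : 0 < z.re) :
    LSeries.abscissaOfAbsConv (fun n => (primeInv n : ℂ)) < z.re :=
  abscissa_primeInv.trans_lt (by exact_mod_cast hz)

lemma differentiableAt_primeL {z : ℂ} (hz : 0 < z.re) : DifferentiableAt ℂ primeL z :=
  (LSeries_hasDerivAt (abscissa_primeInv_lt hz)).differentiableAt

lemma primeInvSum_mono : Monotone primeInvSum := fun _ _ h =>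
  Finset.sum_le_sum_of_subset_of_nonneg
    (Finset.Icc_subset_Icc_right (Nat.floor_le_floor h)) fun n _ _ => primeInv_nonneg n

lemma primeInvSum_nonneg (x : ℝ) : 0 ≤ primeInvSum x :=
  Finset.sum_nonneg fun n _ => primeInv_nonneg n

lemma primeInvSum_le {x : ℝ} (hx : 0 ≤ x) : primeInvSum x ≤ x := by
  refine (Finset.sum_le_card_nsmul _ _ 1 fun n _ => primeInv_le_one n).trans ?_
  simpa using Nat.floor_le hx

lemma integrableOn_of_le_mul {h : ℝ → ℝ} (hm : Measurable h) (h0 : ∀ x, 0 ≤ h x) {C : ℝ}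
    (hC : ∀ x > 1, h x ≤ C * x) {s : ℝ} (hs : 1 < s) :
    IntegrableOn (fun x => h x * x ^ (-s - 1)) (Ioi 1) := by
  refine Integrable.mono ((integrableOn_one_mellin (s := s - 1) (by linarith)).const_mul C)
    (by fun_prop) ?_
  filter_upwards [ae_restrict_mem measurableSet_Ioi] with x (hx : 1 < x)
  have hx0 : 0 < x := by linarith
  have hC0 : 0 ≤ C := by
    have := (h0 x).trans (hC x hx)
    exact nonneg_of_mul_nonneg_left this hx0
  rw [Real.norm_of_nonneg (mul_nonneg (h0 x) (by positivity)),
    Real.norm_of_nonneg (by positivity), show -(s - 1) - 1 = 1 + (-s - 1) by ring,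
    Real.rpow_add hx0, Real.rpow_one, ← mul_assoc]
  exact mul_le_mul_of_nonneg_right (hC x hx) (by positivity)

lemma primeL_eq_integral {z : ℂ} (hz : 1 < z.re) :
    primeL z = z * ∫ x in Ioi (1 : ℝ), (primeInvSum x : ℂ) * (x : ℂ) ^ (-z - 1) := by
  rw [primeL, LSeries_eq_mul_integral_of_nonneg primeInv zero_le_one hz ?_ primeInv_nonneg]
  · simp only [primeInvSum, Complex.ofReal_sum, neg_add']
  · refine Asymptotics.IsBigO.of_bound 1 (Eventually.of_forall fun n => ?_)
    have := primeInvSum_le (x := n) (by positivity)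
    have h0 := primeInvSum_nonneg n
    rw [primeInvSum, Nat.floor_natCast] at this h0
    rw [Real.norm_of_nonneg h0, Real.rpow_one, Real.norm_of_nonneg (by positivity), one_mul]
    exact this

/-- The Mellin transform of `log x * ∑_{p ≤ x} 1/p`. -/
lemma primeInvSum_log_mellin {s : ℝ} (hs : 1 < s) :
    IntegrableOn (fun x => Real.log x * primeInvSum x * x ^ (-s - 1)) (Ioi 1) ∧
    ∫ x in Ioi (1 : ℝ), ((Real.log x * primeInvSum x * x ^ (-s - 1) : ℝ) : ℂ) =
      primeL s / s ^ 2 - deriv primeL s / s := by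
  have key := mellin_log_deriv primeInvSum_mono.measurable primeInvSum_nonneg (σ₁ := 1)
    (fun s hs => integrableOn_of_le_mul primeInvSum_mono.measurable primeInvSum_nonneg (C := 1)
      (fun x hx => by simpa using primeInvSum_le (by linarith : (0:ℝ) ≤ x)) hs) hs
  refine ⟨key.1, ?_⟩
  have hs' : (s : ℂ) ≠ 0 := by exact_mod_cast (by linarith : s ≠ 0)
  have h1 : HasDerivAt (fun z => primeL z / z)
      ((deriv primeL s * s - primeL s * 1) / (s : ℂ) ^ 2) s :=
    (differentiableAt_primeL (by simp; linarith)).hasDerivAt.div (hasDerivAt_id _) hs'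
  have h2 := key.2.congr_of_eventuallyEq (f₁ := fun z => primeL z / z) (by
    filter_upwards [(isOpen_lt continuous_const Complex.continuous_re).mem_nhds
      (show (1 : ℝ) < (s : ℂ).re by simpa using hs)] with z hz
    have hz' : z ≠ 0 := by
      rintro rfl; simp at hz; linarith
    rw [primeL_eq_integral hz, mul_div_cancel_left₀ _ hz'])
  rw [← neg_eq_iff_eq_neg.2 (h1.unique h2)]
  field_simp
  ring

/-- The Mellin transform of `θ(x) / x`; the Dirichlet series of `log p` at `s + 1` is minus the
derivative of `∑_p p^{-1-s}`. -/
lemma theta_mellin {s : ℝ} (hs : 1 < s) :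
    IntegrableOn (fun x => Chebyshev.theta x / x * x ^ (-s - 1)) (Ioi 1) ∧
    ∫ x in Ioi (1 : ℝ), ((Chebyshev.theta x / x * x ^ (-s - 1) : ℝ) : ℂ) =
      - deriv primeL s / (s + 1) := by
  have hmono : Monotone Chebyshev.theta := Chebyshev.theta_mono
  have hle : ∀ x > 1, Chebyshev.theta x ≤ Real.log 4 * x := fun x hx =>
    Chebyshev.theta_le_log4_mul_x (by linarith)
  have hform : ∀ x ∈ Ioi (1 : ℝ), Chebyshev.theta x / x * x ^ (-s - 1) =
      Chebyshev.theta x * x ^ (-(s + 1) - 1) := by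
    intro x (hx : 1 < x)
    rw [show -s - 1 = (-(s + 1) - 1) + 1 by ring, Real.rpow_add_one (by linarith)]
    field_simp
  constructor
  · exact IntegrableOn.congr_fun (integrableOn_of_le_mul hmono.measurable
      Chebyshev.theta_nonneg hle (by linarith : 1 < s + 1)) (fun x hx => (hform x hx).symm)
      measurableSet_Ioi
  · set f : ℕ → ℝ := fun n => if n.Prime then Real.log n else 0 with hf
    have hf0 : ∀ n, 0 ≤ f n := fun n => by
      simp only [hf]; split_ifs
      · exact Real.log_natCast_nonneg n
      · exact le_rfl
    have hsum : ∀ x : ℝ, ∑ k ∈ Finset.Icc 1 ⌊x⌋₊, f k = Chebyshev.theta x := fun x => by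
      rw [Chebyshev.theta, Finset.sum_filter]; rfl
    have h1 : LSeries (fun n => (f n : ℂ)) (s + 1) = (s + 1) *
        ∫ x in Ioi (1 : ℝ), ((Chebyshev.theta x / x * x ^ (-s - 1) : ℝ) : ℂ) := by
      rw [LSeries_eq_mul_integral_of_nonneg f zero_le_one (by simp; linarith) ?_ hf0]
      · congr 1
        refine setIntegral_congr_fun measurableSet_Ioi fun x hx => ?_
        have hx' : (1 : ℝ) < x := hx
        rw [hform x hx, ← hsum]
        push_cast [Complex.ofReal_cpow (by linarith : (0 : ℝ) ≤ x)]
        congr 2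
        ring
      · refine Asymptotics.IsBigO.of_bound (Real.log 4) (Eventually.of_forall fun n => ?_)
        have := Chebyshev.theta_le_log4_mul_x (x := n) (by positivity)
        rw [← hsum, Nat.floor_natCast] at this
        rw [Real.norm_of_nonneg (Finset.sum_nonneg fun n _ => hf0 n), Real.rpow_one,
          Real.norm_of_nonneg (by positivity)]
        exact this
    have h2 : deriv primeL s = - LSeries (fun n => (f n : ℂ)) (s + 1) := by
      unfold primeL
      rw [LSeries_deriv (abscissa_primeInv_lt (by simp; linarith))]
      congr 1
      refine tsum_congr fun n => ?_
      rcases eq_or_ne n 0 with rfl | hn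
      · simp
      · have hn' : (n : ℂ) ≠ 0 := by exact_mod_cast hn
        rw [LSeries.term_of_ne_zero hn, LSeries.term_of_ne_zero hn, LSeries.logMul,
          Complex.cpow_add _ _ hn', Complex.cpow_one]
        simp only [hf, primeInv]
        split_ifs
        · push_cast
          field_simp
        · simp
    have hs' : (s : ℂ) + 1 ≠ 0 := by exact_mod_cast (by linarith : s + 1 ≠ 0)
    rw [h2, h1]
    field_simp

/-- `(θ(x) - x)/x - log x · (∑_{p ≤ x} 1/p + c - log log x - γ)`. The factor `log x` is multiplied
through so that the Mellin transform is elementary in terms of `∑_p p^{-1-z}`. -/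
noncomputable def kFun (c x : ℝ) : ℝ := Chebyshev.theta x / x - 1 -
  Real.log x * (primeInvSum x + c - Real.log (Real.log x) - Real.eulerMascheroniConstant)

/-- `Y(z) = (∑_p p^{-1-z} + c + log z) / z`. -/
noncomputable def YFun (c : ℝ) (z : ℂ) : ℂ := (primeL z + c + Complex.log z) / z

lemma hasDerivAt_YFun (c : ℝ) {s : ℝ} (hs : 0 < s) : HasDerivAt (YFun c)
    (((deriv primeL s + (s : ℂ)⁻¹) * s - (primeL s + c + Complex.log s) * 1) / (s : ℂ) ^ 2) s := by
  have hs' : (s : ℂ) ≠ 0 := by exact_mod_cast hs.ne'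
  refine HasDerivAt.div (HasDerivAt.add ?_ ?_) (hasDerivAt_id _) hs'
  · exact (differentiableAt_primeL (by simpa using hs)).hasDerivAt.add_const _
  · exact Complex.hasDerivAt_log (Complex.ofReal_mem_slitPlane.2 hs)

lemma measurable_kFun (c : ℝ) : Measurable (kFun c) := by
  have h1 : Measurable Chebyshev.theta := Chebyshev.theta_mono.measurable
  have h2 : Measurable primeInvSum := primeInvSum_mono.measurable
  unfold kFun
  fun_prop

/-- The Mellin transform of `kFun c` at `s` is `(Y' - Y - 1) / (s + 1)` with `Y = YFun c`. -/
lemma kFun_mellin (c : ℝ) {s : ℝ} (hs : 1 < s) :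
    IntegrableOn (fun x => kFun c x * x ^ (-s - 1)) (Ioi 1) ∧
    ∫ x in Ioi (1 : ℝ), ((kFun c x * x ^ (-s - 1) : ℝ) : ℂ) =
      (deriv (YFun c) s - YFun c s - 1) / (s + 1) := by
  have hs0 : 0 < s := by linarith
  obtain ⟨i1, e1⟩ := theta_mellin hs
  have i2 := integrableOn_one_mellin hs0
  have e2 := integral_one_mellin (z := s) (by simpa using hs0)
  obtain ⟨i3, e3⟩ := primeInvSum_log_mellin hs
  obtain ⟨i4, e4⟩ := log_mellin hs0
  obtain ⟨i5, e5⟩ := loglog_mellin hs0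
  have hk : ∀ x, kFun c x * x ^ (-s - 1) = Chebyshev.theta x / x * x ^ (-s - 1) - x ^ (-s - 1) -
      Real.log x * primeInvSum x * x ^ (-s - 1) -
      (c - Real.eulerMascheroniConstant) * (Real.log x * x ^ (-s - 1)) +
      Real.log x * Real.log (Real.log x) * x ^ (-s - 1) := by
    intro x; unfold kFun; ring
  simp_rw [hk]
  have e2' : ((∫ x in Ioi (1 : ℝ), x ^ (-s - 1) : ℝ) : ℂ) = 1 / s := by
    rw [← integral_complex_ofReal, ← e2]
    refine setIntegral_congr_fun measurableSet_Ioi fun x (hx : 1 < x) => ?_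
    push_cast [Complex.ofReal_cpow (by linarith : (0 : ℝ) ≤ x)]
    rfl
  refine ⟨(((i1.sub i2).sub i3).sub (i4.const_mul _)).add i5, ?_⟩
  rw [integral_complex_ofReal] at e1 e3 e4 ⊢
  have E := integral_add' (((i1.sub i2).sub i3).sub (i4.const_mul
    (c - Real.eulerMascheroniConstant))) i5
  rw [integral_sub' ((i1.sub i2).sub i3) (i4.const_mul _), integral_sub' (i1.sub i2) i3,
    integral_sub' i1 i2, integral_const_mul, e5] at E
  simp only [Pi.add_apply, Pi.sub_apply] at E
  rw [E]
  push_cast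
  rw [e1, e3, e4, e2', (hasDerivAt_YFun c hs0).deriv, YFun, Complex.ofReal_log hs0.le]
  have hs' : (s : ℂ) ≠ 0 := by exact_mod_cast hs0.ne'
  have hs'' : (s : ℂ) + 1 ≠ 0 := by exact_mod_cast (by linarith : s + 1 ≠ 0)
  field_simp
  ring

/-! ### The prime zeta function and the Euler product -/

/-- The term `-log(1 - p^{-1-z}) - p^{-1-z}` at a prime `p`, and `0` at a non-prime. -/
noncomputable def primeTerm (n : ℕ) (z : ℂ) : ℂ :=
  if n.Prime then -Complex.log (1 - (n : ℂ) ^ (-(1 + z))) - (n : ℂ) ^ (-(1 + z)) else 0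

/-- The real version of `primeTerm`. -/
noncomputable def primeTermR (n : ℕ) (s : ℝ) : ℝ :=
  if n.Prime then -Real.log (1 - (n : ℝ) ^ (-(1 + s))) - (n : ℝ) ^ (-(1 + s)) else 0

/-- `∑_p (-log(1 - p^{-1-z}) - p^{-1-z})`, convergent and holomorphic for `Re z > -1/2`. -/
noncomputable def primeTermSum (z : ℂ) : ℂ := ∑' n, primeTerm n z

lemma prime_rpow_sq_le {n : ℕ} (hn : n.Prime) {σ : ℝ} (hσ : -1 / 2 ≤ σ) :
    ((n : ℝ) ^ (-(1 + σ))) ^ 2 ≤ 1 / 2 := by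
  have h2 : (2 : ℝ) ≤ n := by exact_mod_cast hn.two_le
  rw [← Real.rpow_natCast, ← Real.rpow_mul (by linarith)]
  calc (n : ℝ) ^ (-(1 + σ) * (2 : ℕ)) ≤ (n : ℝ) ^ (-1 : ℝ) :=
        Real.rpow_le_rpow_of_exponent_le (by linarith) (by push_cast; linarith)
    _ = 1 / n := by rw [Real.rpow_neg_one, one_div]
    _ ≤ 1 / 2 := one_div_le_one_div_of_le (by norm_num) h2

lemma prime_rpow_le {n : ℕ} (hn : n.Prime) {σ : ℝ} (hσ : -1 / 2 ≤ σ) :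
    (n : ℝ) ^ (-(1 + σ)) ≤ 3 / 4 := by
  have := prime_rpow_sq_le hn hσ
  have : 0 ≤ (n : ℝ) ^ (-(1 + σ)) := by positivity
  nlinarith

lemma norm_prime_cpow {n : ℕ} (hn : n.Prime) (z : ℂ) :
    ‖(n : ℂ) ^ (-(1 + z))‖ = (n : ℝ) ^ (-(1 + z.re)) := by
  rw [Complex.norm_natCast_cpow_of_pos hn.pos]; simp

lemma norm_primeTerm_le (n : ℕ) {σ : ℝ} (hσ : -1 / 2 ≤ σ) {z : ℂ} (hz : σ ≤ z.re) :
    ‖primeTerm n z‖ ≤ 2 * (n : ℝ) ^ (-2 * (1 + σ)) := by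
  unfold primeTerm
  split_ifs with hn
  · set w : ℂ := -(n : ℂ) ^ (-(1 + z)) with hw
    have hwn : ‖w‖ = (n : ℝ) ^ (-(1 + z.re)) := by rw [hw, norm_neg, norm_prime_cpow hn]
    have hw1 : ‖w‖ ≤ 3 / 4 := hwn ▸ prime_rpow_le hn (hσ.trans hz)
    have h1 := Complex.norm_log_one_add_sub_self_le (z := w) (by linarith)
    have h2 : -Complex.log (1 - (n : ℂ) ^ (-(1 + z))) - (n : ℂ) ^ (-(1 + z)) =
        -(Complex.log (1 + w) - w) := by rw [hw]; ring_nf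
    rw [h2, norm_neg]
    refine h1.trans ?_
    have h3 : ‖w‖ ≤ (n : ℝ) ^ (-(1 + σ)) := by
      rw [hwn]
      exact Real.rpow_le_rpow_of_exponent_le (by exact_mod_cast hn.one_le) (by linarith)
    have h4 : (n : ℝ) ^ (-2 * (1 + σ)) = ((n : ℝ) ^ (-(1 + σ))) ^ 2 := by
      rw [← Real.rpow_natCast, ← Real.rpow_mul (by positivity)]
      congr 1; push_cast; ring
    have h5 : (1 - ‖w‖)⁻¹ ≤ 4 := by
      rw [inv_le_comm₀ (by linarith) (by norm_num)]; linarith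
    have h6 : ‖w‖ ^ 2 ≤ ((n : ℝ) ^ (-(1 + σ))) ^ 2 := by gcongr
    rw [h4]
    nlinarith [sq_nonneg ‖w‖]
  · simp; positivity

lemma summable_bound {σ : ℝ} (hσ : -1 / 2 < σ) :
    Summable fun n : ℕ => 2 * (n : ℝ) ^ (-2 * (1 + σ)) :=
  (Real.summable_nat_rpow.2 (by linarith)).mul_left 2

lemma summable_primeTerm {z : ℂ} (hz : -1 / 2 < z.re) : Summable fun n => primeTerm n z :=
  Summable.of_norm_bounded (summable_bound hz) fun n => norm_primeTerm_le n hz.le le_rfl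

lemma differentiableOn_primeTermSum :
    DifferentiableOn ℂ primeTermSum {z | -1 / 2 < z.re} := by
  intro z (hz : -1 / 2 < z.re)
  obtain ⟨σ, h1, h2⟩ := exists_between hz
  have hopen : IsOpen {w : ℂ | σ < w.re} := isOpen_lt continuous_const Complex.continuous_re
  have := Complex.differentiableOn_tsum_of_summable_norm (F := primeTerm) (summable_bound h1)
    (fun n => ?_) hopen (fun n w hw => norm_primeTerm_le n h1.le (le_of_lt hw))
  · exact (this.differentiableAt (hopen.mem_nhds h2)).differentiableWithinAt
  · intro w (hw : σ < w.re)
    refine DifferentiableAt.differentiableWithinAt ?_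
    unfold primeTerm
    by_cases hn : n.Prime
    · simp only [hn, if_true]
      have hd : DifferentiableAt ℂ (fun z : ℂ => (n : ℂ) ^ (-(1 + z))) w :=
        DifferentiableAt.const_cpow (by fun_prop) (Or.inl (by exact_mod_cast hn.ne_zero))
      refine DifferentiableAt.sub (DifferentiableAt.neg (DifferentiableAt.clog (hd.const_sub 1) ?_)) hd
      refine Or.inl ?_
      have := (Complex.re_le_norm ((n : ℂ) ^ (-(1 + w)))).trans
        ((norm_prime_cpow hn w).le.trans (prime_rpow_le hn (by linarith)))
      simp only [Complex.sub_re, Complex.one_re]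
      linarith
    · simp [hn]

lemma primeTerm_ofReal (n : ℕ) {s : ℝ} (hs : -1 / 2 ≤ s) : primeTerm n s = primeTermR n s := by
  unfold primeTerm primeTermR
  split_ifs with hn
  · have := prime_rpow_le hn hs
    push_cast [Complex.ofReal_log (by linarith : 0 ≤ 1 - (n : ℝ) ^ (-(1 + s))),
      Complex.ofReal_cpow (by positivity : (0 : ℝ) ≤ n)]
    rfl
  · simp

lemma primeTermSum_ofReal {s : ℝ} (hs : -1 / 2 ≤ s) :
    primeTermSum s = ((∑' n, primeTermR n s : ℝ) : ℂ) := by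
  rw [Complex.ofReal_tsum, primeTermSum]
  exact tsum_congr fun n => primeTerm_ofReal n hs

lemma primeL_term (z : ℂ) (n : ℕ) : LSeries.term (fun n => (primeInv n : ℂ)) z n =
    if n.Prime then (n : ℂ) ^ (-(1 + z)) else 0 := by
  rcases eq_or_ne n 0 with rfl | hn
  · simp [Nat.not_prime_zero]
  · have hn' : (n : ℂ) ≠ 0 := by exact_mod_cast hn
    rw [LSeries.term_of_ne_zero hn]
    unfold primeInv
    split_ifs
    · rw [Complex.cpow_neg, Complex.cpow_add _ _ hn', Complex.cpow_one]
      push_cast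
      field_simp
    · simp

lemma primeL_ofReal (s : ℝ) : ∃ r : ℝ, primeL s = r := by
  refine ⟨∑' n : ℕ, if n.Prime then (n : ℝ) ^ (-(1 + s)) else 0, ?_⟩
  rw [Complex.ofReal_tsum, primeL, LSeries]
  refine tsum_congr fun n => ?_
  rw [primeL_term]
  split_ifs
  · push_cast [Complex.ofReal_cpow (by positivity : (0 : ℝ) ≤ n)]; rfl
  · simp

/-- The Euler product, with the prime zeta function split off. -/
lemma zeta_eq_exp {z : ℂ} (hz : 0 < z.re) :
    riemannZeta (1 + z) = Complex.exp (primeTermSum z + primeL z) := by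
  rw [← riemannZeta_eulerProduct_exp_log (by simpa using hz), primeTermSum, primeL, LSeries,
    ← (summable_primeTerm (by linarith)).tsum_add
      (LSeriesSummable_of_abscissaOfAbsConv_lt_re (abscissa_primeInv_lt hz))]
  congr 1
  refine (tsum_subtype {p : ℕ | p.Prime}
    (fun p : ℕ => -Complex.log (1 - (p : ℂ) ^ (-(1 + z))))).trans ?_
  refine tsum_congr fun n => ?_
  rw [primeL_term]
  unfold primeTerm
  by_cases hn : n.Prime <;> simp [hn, indicator]

/-! ### Continuation of the transform along the real axis -/

lemma fract_mellin {s : ℝ} (hs : 0 < s) :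
    IntegrableOn (fun x : ℝ => Int.fract x * x ^ (-s - 1)) (Ioi 1) := by
  refine Integrable.mono (integrableOn_one_mellin hs) (by fun_prop) ?_
  filter_upwards [ae_restrict_mem measurableSet_Ioi] with x (hx : 1 < x)
  rw [norm_mul, Real.norm_of_nonneg (Int.fract_nonneg x)]
  exact mul_le_of_le_one_left (norm_nonneg _) (Int.fract_lt_one x).le

/-- `∫₁^∞ {x} x^{-z-1} dx`, encoded as a moment generating function to have its holomorphy on
`Re z > 0` at hand. -/
noncomputable def fractM (z : ℂ) : ℂ := complexMGF Real.log (mellinMeasure Int.fract) (-z)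

lemma fractM_ofReal {s : ℝ} :
    fractM s = ((∫ x in Ioi (1 : ℝ), Int.fract x * x ^ (-s - 1) : ℝ) : ℂ) := by
  rw [fractM, complexMGF_mellinMeasure measurable_fract Int.fract_nonneg,
    ← integral_complex_ofReal]
  refine setIntegral_congr_fun measurableSet_Ioi fun x (hx : 1 < x) => ?_
  push_cast [Complex.ofReal_cpow (by linarith : (0 : ℝ) ≤ x)]
  rfl

lemma analyticAt_fractM {s : ℝ} (hs : 0 < s) : AnalyticAt ℂ fractM s := by
  have h : (-(s : ℂ)).re ∈ interior (integrableExpSet Real.log (mellinMeasure Int.fract)) := by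
    refine mem_interior.2 ⟨Iio 0, fun t ht => ?_, isOpen_Iio, by simpa using hs⟩
    have := fract_mellin (s := -t) (by simpa using ht)
    rw [neg_neg] at this
    exact (mem_integrableExpSet_mellinMeasure measurable_fract Int.fract_nonneg).2 this
  exact (analyticAt_complexMGF h).fun_comp analyticAt_id.neg

lemma zeta₁_eq_of_one_lt {s : ℝ} (hs : 1 < s) :
    riemannZeta₁ s = s - s * (s - 1) * fractM s := by
  have hs1 : (s : ℂ) ≠ 1 := by exact_mod_cast hs.ne'
  have hs1' : (s : ℂ) - 1 ≠ 0 := sub_ne_zero.2 hs1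
  have h0 : riemannZeta₁ s = (s - 1) * riemannZeta s := by
    rw [riemannZeta_eq_inv_sub_mul hs1, mul_inv_cancel_left₀ hs1']
  have h1 : riemannZeta s =
      s * ∫ t in Ioi (1 : ℝ), (((⌊t⌋₊ : ℝ) * t ^ (-s - 1) : ℝ) : ℂ) := by
    have := LSeries_eq_mul_integral_of_nonneg (fun _ => 1) (r := 1) (s := s) zero_le_one
      (by simpa using hs) (Asymptotics.IsBigO.of_bound 1 (by simp)) (by simp)
    simp only [Complex.ofReal_one] at this
    rw [← LSeries_one_eq_riemannZeta (by simpa using hs)]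
    refine this.trans ?_
    congr 1
    refine setIntegral_congr_fun measurableSet_Ioi fun x (hx : 1 < x) => ?_
    rw [neg_add', Finset.sum_const, Nat.card_Icc]
    push_cast [Complex.ofReal_cpow (by linarith : (0 : ℝ) ≤ x)]
    simp
  have h2 : ∀ x ∈ Ioi (1 : ℝ), (⌊x⌋₊ : ℝ) * x ^ (-s - 1) =
      x ^ (-(s - 1) - 1) - Int.fract x * x ^ (-s - 1) := by
    intro x (hx : 1 < x)
    rw [show -(s - 1) - 1 = (-s - 1) + 1 by ring, Real.rpow_add_one (by linarith),
      natCast_floor_eq_intCast_floor (by linarith : (0:ℝ) ≤ x), Int.fract]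
    ring
  have h3 : ((∫ x in Ioi (1 : ℝ), x ^ (-(s - 1) - 1) : ℝ) : ℂ) = 1 / (s - 1) := by
    have := integral_one_mellin (z := ((s - 1 : ℝ) : ℂ)) (by simpa using hs)
    rw [← integral_complex_ofReal]
    push_cast at this
    rw [← this]
    refine setIntegral_congr_fun measurableSet_Ioi fun x (hx : 1 < x) => ?_
    push_cast [Complex.ofReal_cpow (by linarith : (0 : ℝ) ≤ x)]
    rfl
  rw [h0, h1, integral_complex_ofReal, setIntegral_congr_fun measurableSet_Ioi h2,
    integral_sub (integrableOn_one_mellin (by linarith)) (fract_mellin (by linarith)),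
    Complex.ofReal_sub, h3, ← fractM_ofReal]
  field_simp

/-- On `(0, 1)` the function `(s - 1) ζ(s) = s + s (1 - s) ∫₁^∞ {x} x^{-s-1} dx` is positive. -/
lemma zeta₁_pos_of_lt_one {s : ℝ} (hs : 0 < s) (hs1 : s < 1) :
    ∃ r : ℝ, 0 < r ∧ riemannZeta₁ s = r := by
  have key := eqOn_real_of_eventuallyEq (f := riemannZeta₁)
    (g := fun z => z - z * (z - 1) * fractM z) (s := Ioi 0) (x₀ := 2) isPreconnected_Ioi
    (fun x _ => differentiable_riemannZeta₁.analyticAt _)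
    (fun x hx => by
      have := analyticAt_fractM hx
      fun_prop) (by simp)
    (by
      filter_upwards [Ioi_mem_nhds (show (1 : ℝ) < 2 by norm_num)] with t ht
      exact zeta₁_eq_of_one_lt ht) s hs
  rw [fractM_ofReal] at key
  set I := ∫ x in Ioi (1 : ℝ), Int.fract x * x ^ (-s - 1)
  have hI : 0 ≤ I := setIntegral_nonneg measurableSet_Ioi fun x (hx : 1 < x) =>
    mul_nonneg (Int.fract_nonneg x) (by positivity)
  refine ⟨s + s * (1 - s) * I, ?_, ?_⟩
  · have : 0 ≤ s * (1 - s) * I := mul_nonneg (mul_nonneg hs.le (by linarith)) hI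
    linarith
  · rw [key]; push_cast; ring

/-- `z ζ(1 + z)`, as an entire function. -/
noncomputable def zQ (z : ℂ) : ℂ := riemannZeta₁ (1 + z)

lemma differentiable_zQ : Differentiable ℂ zQ := by
  unfold zQ; fun_prop

lemma zQ_eq_exp {z : ℂ} (hz : 0 < z.re) :
    zQ z = z * Complex.exp (primeTermSum z + primeL z) := by
  have hz0 : z ≠ 0 := by rintro rfl; simp at hz
  rw [← zeta_eq_exp hz, riemannZeta_eq_inv_sub_mul (by simpa using hz0), zQ]
  simp [hz0]

/-- Positivity of `z ζ(1 + z)` on the real ray `(-1/2, ∞)`: the transforms have no real singularity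
there, which is what Landau's lemma requires. -/
lemma zQ_pos {s : ℝ} (hs : -1 / 2 < s) : ∃ r : ℝ, 0 < r ∧ zQ s = r := by
  rcases lt_trichotomy s 0 with h | rfl | h
  · obtain ⟨r, hr, he⟩ := zeta₁_pos_of_lt_one (s := 1 + s) (by linarith) (by linarith)
    exact ⟨r, hr, by rw [zQ, ← he]; push_cast; rfl⟩
  · exact ⟨1, one_pos, by simp [zQ]⟩
  · obtain ⟨r, hr⟩ := primeL_ofReal s
    rw [zQ_eq_exp (by simpa using h), primeTermSum_ofReal (by linarith), hr]
    exact ⟨s * Real.exp (∑' n, primeTermR n s + r), by positivity, by push_cast; rfl⟩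

/-- The Mertens-type constant `∑_p (-log(1 - 1/p) - 1/p)`. -/
noncomputable def mertensC : ℝ := ∑' n, primeTermR n 0

/-- `log(zQ z) + C - ∑_p (-log(1 - p^{-1-z}) - p^{-1-z})`, the continuation of
`log z + ∑_p p^{-1-z} + C`, where `C = mertensC`. -/
noncomputable def WFun (z : ℂ) : ℂ := Complex.log (zQ z) + mertensC - primeTermSum z

/-- The domain of `WFun`: the half-plane `Re z > -1/2` without the points where `zQ` takes a value
in `(-∞, 0]`, so that the principal branch of its logarithm is holomorphic. -/
def domU : Set ℂ := {z | -1 / 2 < z.re ∧ zQ z ∈ Complex.slitPlane}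

lemma isOpen_domU : IsOpen domU :=
  (isOpen_lt continuous_const Complex.continuous_re).inter
    (Complex.isOpen_slitPlane.preimage differentiable_zQ.continuous)

lemma ofReal_mem_domU {s : ℝ} (hs : -1 / 2 < s) : (s : ℂ) ∈ domU := by
  obtain ⟨r, hr, he⟩ := zQ_pos hs
  exact ⟨by simpa using hs, by rw [he]; exact Complex.ofReal_mem_slitPlane.2 hr⟩

lemma differentiableOn_WFun : DifferentiableOn ℂ WFun domU := by
  unfold WFun
  refine ((DifferentiableOn.clog differentiable_zQ.differentiableOn fun z hz => hz.2).add_const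
    _).sub (differentiableOn_primeTermSum.mono fun z hz => hz.1)

lemma WFun_zero : WFun 0 = 0 := by
  have := primeTermSum_ofReal (s := 0) (by norm_num)
  rw [Complex.ofReal_zero] at this
  simp [WFun, this, zQ, mertensC]

lemma WFun_ofReal {s : ℝ} (hs : 0 < s) : WFun s = primeL s + mertensC + Complex.log s := by
  obtain ⟨r, hr⟩ := primeL_ofReal s
  rw [WFun, zQ_eq_exp (by simpa using hs), primeTermSum_ofReal (by linarith), hr,
    ← Complex.ofReal_add, ← Complex.ofReal_exp, ← Complex.ofReal_mul,
    ← Complex.ofReal_log (by positivity), Real.log_mul hs.ne' (Real.exp_pos _).ne', Real.log_exp,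
    ← Complex.ofReal_log hs.le]
  push_cast
  ring

/-- The continuation of `YFun mertensC` across `0`, namely `WFun z / z`. The singularity at `0` is
removable because the constant `mertensC` makes `WFun` vanish there. -/
noncomputable def YC : ℂ → ℂ := dslope WFun 0

lemma differentiableOn_YC : DifferentiableOn ℂ YC domU :=
  (Complex.differentiableOn_dslope (isOpen_domU.mem_nhds
    (by simpa using ofReal_mem_domU (s := 0) (by norm_num)))).2 differentiableOn_WFun

lemma YC_mul (z : ℂ) : z * YC z = WFun z := by
  have := sub_smul_dslope WFun 0 z
  simpa [WFun_zero, YC] using this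

lemma YC_eventuallyEq {s : ℝ} (hs : 0 < s) : YC =ᶠ[𝓝 (s : ℂ)] YFun mertensC := by
  refine eventuallyEq_of_eventuallyEq_ofReal
    (differentiableOn_YC.analyticAt (isOpen_domU.mem_nhds (ofReal_mem_domU (by linarith)))) ?_ ?_
  · have : DifferentiableOn ℂ (YFun mertensC) {z : ℂ | 0 < z.re} := by
      intro z (hz : 0 < z.re)
      refine DifferentiableAt.differentiableWithinAt ?_
      unfold YFun
      refine DifferentiableAt.div (((differentiableAt_primeL hz).add_const _).add
        (Complex.differentiableAt_log (Or.inl hz))) differentiableAt_id ?_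
      rintro rfl; simp at hz
    exact this.analyticAt ((isOpen_lt continuous_const Complex.continuous_re).mem_nhds
      (by simpa using hs))
  · filter_upwards [Ioi_mem_nhds hs] with t (ht : 0 < t)
    have ht' : (t : ℂ) ≠ 0 := by exact_mod_cast ht.ne'
    rw [YFun, ← WFun_ofReal ht, ← YC_mul, mul_div_cancel_left₀ _ ht']

/-! ### A zero to the right of the critical line -/

/-- At negative odd integers the functional equation has no vanishing factor. -/
lemma riemannZeta_neg_odd_ne_zero (m : ℕ) : riemannZeta (-(2 * m + 1 : ℕ)) ≠ 0 := by
  have h1 := riemannZeta_one_sub (s := 2 * (m + 1 : ℕ)) (fun n h => by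
      have := congrArg Complex.re h
      simp at this
      have h2 : (0 : ℝ) ≤ n := by positivity
      have h3 : (0 : ℝ) ≤ m := by positivity
      linarith) (fun h => by
      have := congrArg Complex.re h
      simp at this
      have h3 : (0 : ℝ) ≤ m := by positivity
      linarith)
  have h2 : (1 : ℂ) - 2 * (m + 1 : ℕ) = -(2 * m + 1 : ℕ) := by push_cast; ring
  rw [← h2, h1]
  have hre : 0 < (2 * ((m + 1 : ℕ) : ℂ)).re := by simp; positivity
  refine mul_ne_zero (mul_ne_zero (mul_ne_zero (mul_ne_zero two_ne_zero ?_) ?_) ?_) ?_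
  · rw [Complex.cpow_def_of_ne_zero (by simp [Real.pi_ne_zero])]
    exact Complex.exp_ne_zero _
  · exact Complex.Gamma_ne_zero_of_re_pos hre
  · rw [show (Real.pi : ℂ) * (2 * (m + 1 : ℕ)) / 2 = (m + 1 : ℕ) * Real.pi by ring,
      ← Complex.ofReal_natCast, ← Complex.ofReal_mul, ← Complex.ofReal_cos, Real.cos_nat_mul_pi]
    exact Complex.ofReal_ne_zero.2 (pow_ne_zero _ (by norm_num))
  · refine riemannZeta_ne_zero_of_one_le_re ?_
    simp
    have h3 : (0 : ℝ) ≤ m := by positivity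
    linarith

/-- If the Riemann Hypothesis fails, the functional equation yields a zero to the right of the
critical line. -/
lemma exists_zero_of_not_RH (hRH : ¬ RiemannHypothesis) :
    ∃ ρ : ℂ, riemannZeta ρ = 0 ∧ 1 / 2 < ρ.re ∧ ρ.re < 1 := by
  unfold RiemannHypothesis at hRH
  push Not at hRH
  obtain ⟨s, hs, hn, h1, hre⟩ := hRH
  have hlt : ∀ z : ℂ, riemannZeta z = 0 → z.re < 1 := fun z hz => by
    by_contra! h
    exact riemannZeta_ne_zero_of_one_le_re h hz
  rcases lt_or_gt_of_ne hre with h | h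
  · have hz : riemannZeta (1 - s) = 0 := by
      rw [riemannZeta_one_sub ?_ h1, hs, mul_zero]
      rintro n rfl
      rcases Nat.even_or_odd' n with ⟨m, rfl | rfl⟩
      · rcases m with _ | m
        · simp [riemannZeta_zero] at hs
        · exact hn m (by push_cast; ring)
      · exact riemannZeta_neg_odd_ne_zero m hs
    exact ⟨1 - s, hz, by simp; linarith, hlt _ hz⟩
  · exact ⟨s, hs, h, hlt _ hs⟩

/-! ### Failure of one-sided bounds -/

/-- A holomorphic continuation of `YC' - YC` past `ρ - 1`, for a zero `ρ` of zeta, would, after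
solving the linear differential equation `Y' - Y = B`, make `exp(z Y)` a continuation without zeros
of `zQ z * exp(mertensC - primeTermSum z)`, which vanishes at `ρ - 1`. -/
lemma no_continuation {ρ : ℂ} (hρ : riemannZeta ρ = 0) (h1 : ρ.re < 1) {b : ℝ}
    (hb0 : 1 - ρ.re < b) (hb : b < 1 / 2) {B : ℂ → ℂ}
    (hB : DifferentiableOn ℂ B {z | -b < z.re})
    (hBr : ∀ s : ℝ, 1 < s → B s = deriv YC s - YC s) : False := by
  -- a disc centred on the real axis that touches the line `Re z = -b` and contains both `2` and
  -- `ρ - 1`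
  set x := ρ.re - 1 with hx
  set y := ρ.im with hy
  have hbx : 0 < b + x := by linarith
  set R : ℝ := y ^ 2 / (b + x) + 3 with hR
  have hR3 : 3 ≤ R := by
    have : 0 ≤ y ^ 2 / (b + x) := by positivity
    linarith
  set D := Metric.ball (R : ℂ) (R + b) with hD
  have hDre : ∀ z ∈ D, -b < z.re := by
    intro z hz
    have h := (Complex.abs_re_le_norm (z - R)).trans_lt (by simpa [hD, dist_eq_norm] using hz)
    rw [abs_lt] at h
    simp at h
    linarith
  have h2D : ((2 : ℝ) : ℂ) ∈ D := by
    rw [hD, Metric.mem_ball, Complex.dist_eq, ← Complex.ofReal_sub, Complex.norm_real,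
      Real.norm_eq_abs, abs_lt]
    constructor <;> linarith
  have hρD : ρ - 1 ∈ D := by
    rw [hD, Metric.mem_ball, dist_eq_norm]
    refine lt_of_pow_lt_pow_left₀ 2 (by linarith) ?_
    rw [Complex.sq_norm, Complex.normSq_apply]
    have e1 : (ρ - 1 - (R : ℂ)).re = x - R := by simp [hx]
    have e2 : (ρ - 1 - (R : ℂ)).im = y := by simp [hy]
    rw [e1, e2]
    have : R * (b + x) = y ^ 2 + 3 * (b + x) := by rw [hR]; field_simp
    nlinarith
  have hDopen : IsOpen D := Metric.isOpen_ball
  have hEB : DifferentiableOn ℂ (fun z => Complex.exp (-z) * B z) D :=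
    DifferentiableOn.mul (by fun_prop) (hB.mono hDre)
  -- `exp z * (Z z + C)` will be the solution of `Y' - Y = B` that extends `YC`
  obtain ⟨Z, hZ⟩ := hEB.isExactOn_ball
  have hYan : AnalyticAt ℂ YC ((2 : ℝ) : ℂ) :=
    differentiableOn_YC.analyticAt (isOpen_domU.mem_nhds (ofReal_mem_domU (by norm_num)))
  have hBan : AnalyticAt ℂ B ((2 : ℝ) : ℂ) :=
    hB.analyticAt ((isOpen_lt continuous_const Complex.continuous_re).mem_nhds (hDre _ h2D))
  have hBY : B =ᶠ[𝓝 ((2 : ℝ) : ℂ)] fun z => deriv YC z - YC z := by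
    refine eventuallyEq_of_eventuallyEq_ofReal hBan (hYan.deriv.sub hYan) ?_
    filter_upwards [Ioi_mem_nhds (show (1 : ℝ) < 2 by norm_num)] with t ht using hBr t ht
  obtain ⟨r, hr, hball⟩ := Metric.eventually_nhds_iff_ball.1
    (hBY.and ((hDopen.eventually_mem h2D).and
      (isOpen_domU.eventually_mem (ofReal_mem_domU (s := 2) (by norm_num)))))
  set E : ℂ → ℂ := fun z => Complex.exp (-z) * YC z - Z z with hE
  have hEd : ∀ z ∈ Metric.ball ((2 : ℝ) : ℂ) r, HasDerivAt E 0 z := by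
    intro z hz
    obtain ⟨q1, q2, q3⟩ := hball z hz
    have d1 : HasDerivAt YC (deriv YC z) z :=
      (differentiableOn_YC.differentiableAt (isOpen_domU.mem_nhds q3)).hasDerivAt
    have d2 := (((hasDerivAt_neg z).cexp).mul d1).sub (hZ z q2)
    convert! d2 using 1
    simp only [q1]
    ring
  have hconst : ∀ z ∈ Metric.ball ((2 : ℝ) : ℂ) r, E z = E ((2 : ℝ) : ℂ) := fun z hz =>
    Metric.isOpen_ball.is_const_of_deriv_eq_zero (convex_ball _ _).isPreconnected
      (fun w hw => (hEd w hw).differentiableAt.differentiableWithinAt)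
      (fun w hw => (hEd w hw).deriv) hz (Metric.mem_ball_self hr)
  set C := E ((2 : ℝ) : ℂ)
  -- the continuation of `exp(z Y(z))` and the zeta factor agree on the disc
  have hL : AnalyticOnNhd ℂ (fun z => Complex.exp (z * (Complex.exp z * (Z z + C)))) D := by
    refine DifferentiableOn.analyticOnNhd ?_ hDopen
    have : DifferentiableOn ℂ Z D := fun z hz => (hZ z hz).differentiableAt.differentiableWithinAt
    fun_prop
  have hRt : AnalyticOnNhd ℂ (fun z => zQ z * Complex.exp (mertensC - primeTermSum z)) D := by
    refine DifferentiableOn.analyticOnNhd ?_ hDopen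
    have : DifferentiableOn ℂ primeTermSum D := differentiableOn_primeTermSum.mono fun z hz => by
      have := hDre z hz
      change -1 / 2 < z.re
      linarith
    have := differentiable_zQ.differentiableOn (s := D)
    fun_prop
  have hagree := hL.eqOn_of_preconnected_of_eventuallyEq hRt (convex_ball _ _).isPreconnected h2D
    (by
      filter_upwards [Metric.ball_mem_nhds _ hr] with z hz
      obtain ⟨-, -, q3⟩ := hball z hz
      have hY : Complex.exp z * (Z z + C) = YC z := by
        rw [← hconst z hz]
        simp only [hE, add_sub_cancel, ← mul_assoc, ← Complex.exp_add, add_neg_cancel,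
          Complex.exp_zero, one_mul]
      have hq : zQ z ≠ 0 := Complex.slitPlane_ne_zero q3.2
      rw [hY, YC_mul, WFun, add_sub_assoc, Complex.exp_add, Complex.exp_log hq])
  have hfin := hagree hρD
  have hρ1 : ρ ≠ 1 := by rintro rfl; simp at h1
  have hz : zQ (ρ - 1) = 0 := by
    have := riemannZeta_eq_inv_sub_mul hρ1
    rw [hρ, eq_comm, mul_eq_zero, inv_eq_zero, sub_eq_zero] at this
    simpa [zQ, hρ1] using this
  simp [hz] at hfin

/-- A zero `ρ` of zeta forbids the one-sided bounds `± kFun x ≤ x^{-b} log x` for all large `x`,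
when `b > 1 - Re ρ`: by Landau's lemma such a bound continues the transform of `kFun` to
`Re z > -b`, beyond the point `ρ - 1`. -/
lemma not_eventually_bounded {ρ : ℂ} (hρ : riemannZeta ρ = 0) (h1 : ρ.re < 1) {b : ℝ}
    (hb0 : 1 - ρ.re < b) (hb : b < 1 / 2) {ε : ℝ} (hε : ε * ε = 1) {X₀ : ℝ} (hX₀ : 1 ≤ X₀)
    (h : ∀ x > X₀, ε * kFun mertensC x ≤ x ^ (-b) * Real.log x) : False := by
  set c := mertensC with hc
  set g : ℝ → ℝ := fun x => x ^ (-b) * Real.log x - ε * kFun c x with hg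
  have hbpos : 0 < b := by linarith
  have hgm : Measurable g := by
    have := measurable_kFun c
    fun_prop
  have hform : ∀ s : ℝ, ∀ x ∈ Ioi (1 : ℝ), g x * x ^ (-s - 1) =
      Real.log x * x ^ (-(s + b) - 1) - ε * (kFun c x * x ^ (-s - 1)) := by
    intro s x (hx : 1 < x)
    rw [show -(s + b) - 1 = -b + (-s - 1) by ring, Real.rpow_add (by linarith), hg]
    ring
  have hcε : (ε : ℂ) * ε = 1 := by exact_mod_cast hε
  obtain ⟨Φ, hΦ, hΦr⟩ := landau_mellin hgm hX₀ (fun x hx => by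
      have := h x hx; simp only [hg]; linarith) (σ₀ := -b) (s₁ := 1)
    (fun s hs => IntegrableOn.congr_fun
      ((log_mellin (by linarith : 0 < s + b)).1.sub ((kFun_mellin c hs).1.const_mul ε))
      (fun x hx => (hform s x hx).symm) measurableSet_Ioi)
    (G := fun z => 1 / (z + b) ^ 2 - ε * ((deriv YC z - YC z - 1) / (z + 1)))
    (U := domU ∩ {z | -b < z.re})
    (isOpen_domU.inter (isOpen_lt continuous_const Complex.continuous_re))
    (fun s hs => ⟨ofReal_mem_domU (by linarith), by simpa using hs⟩)
    (by
      have i1 : DifferentiableOn ℂ YC (domU ∩ {z | -b < z.re}) :=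
        differentiableOn_YC.mono inter_subset_left
      have i2 : DifferentiableOn ℂ (deriv YC) (domU ∩ {z | -b < z.re}) :=
        (differentiableOn_YC.deriv isOpen_domU).mono inter_subset_left
      have n1 : ∀ z ∈ domU ∩ {z | -b < z.re}, (z + b) ^ 2 ≠ 0 := fun z hz => by
        refine pow_ne_zero 2 fun h0 => ?_
        have := congrArg Complex.re h0
        have h2 : -b < z.re := hz.2
        simp at this
        linarith
      have n2 : ∀ z ∈ domU ∩ {z | -b < z.re}, z + 1 ≠ 0 := fun z hz h0 => by
        have := congrArg Complex.re h0
        have h2 : -b < z.re := hz.2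
        simp at this
        linarith
      refine DifferentiableOn.sub ?_ (DifferentiableOn.const_mul ?_ _)
      · exact DifferentiableOn.div (by fun_prop) (by fun_prop) n1
      · exact ((i2.sub i1).sub_const 1).div (by fun_prop) n2)
    (fun s hs => by
      have hY := YC_eventuallyEq (s := s) (by linarith)
      have e1 := (log_mellin (by linarith : 0 < s + b)).2
      have e2 := (kFun_mellin c hs).2
      rw [integral_complex_ofReal] at e1 e2
      have e3 : ∫ x in Ioi (1 : ℝ), (g x : ℂ) * (x : ℂ) ^ (-(s : ℂ) - 1) =
          ((∫ x in Ioi (1 : ℝ), g x * x ^ (-s - 1) : ℝ) : ℂ) := by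
        rw [← integral_complex_ofReal]
        refine setIntegral_congr_fun measurableSet_Ioi fun x (hx : 1 < x) => ?_
        push_cast [Complex.ofReal_cpow (by linarith : (0 : ℝ) ≤ x)]
        rfl
      rw [e3, setIntegral_congr_fun measurableSet_Ioi (hform s),
        integral_sub (log_mellin (by linarith : 0 < s + b)).1
          ((kFun_mellin c hs).1.const_mul ε), integral_const_mul]
      push_cast
      rw [e1, e2, hY.deriv_eq, hY.eq_of_nhds]
      push_cast
      rfl)
  refine no_continuation hρ h1 hb0 hb
    (B := fun z => 1 + (z + 1) * (ε * (1 / (z + b) ^ 2 - Φ z))) ?_ ?_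
  · have n1 : ∀ z ∈ {z : ℂ | -b < z.re}, (z + b) ^ 2 ≠ 0 := fun z (hz : -b < z.re) => by
      refine pow_ne_zero 2 fun h0 => ?_
      have := congrArg Complex.re h0
      simp at this
      linarith
    have : DifferentiableOn ℂ (fun z : ℂ => 1 / (z + b) ^ 2) {z : ℂ | -b < z.re} :=
      DifferentiableOn.div (by fun_prop) (by fun_prop) n1
    exact (DifferentiableOn.mul (by fun_prop) ((this.sub hΦ).const_mul _)).const_add 1
  · intro s hs
    have hs' : (s : ℂ) + 1 ≠ 0 := by exact_mod_cast (by linarith : s + 1 ≠ 0)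
    simp only [hΦr s hs]
    rw [sub_sub_cancel, ← mul_assoc (ε : ℂ), hcε, one_mul, mul_div_cancel₀ _ hs']
    ring

/-! ### The Euler product over primes up to `x` and primorials -/

/-- `∑_{p ≤ x} -log(1 - 1/p)`, the logarithm of `N / φ(N)` for `N = ∏_{p ≤ x} p`. -/
noncomputable def eulerLogSum (x : ℝ) : ℝ :=
  ∑ n ∈ Finset.Icc 1 ⌊x⌋₊, if n.Prime then -Real.log (1 - (n : ℝ)⁻¹) else 0

lemma primeTermR_zero (n : ℕ) :
    primeTermR n 0 = if n.Prime then -Real.log (1 - (n : ℝ)⁻¹) - (n : ℝ)⁻¹ else 0 := by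
  simp [primeTermR, Real.rpow_neg_one]

lemma primeTermR_zero_nonneg (n : ℕ) : 0 ≤ primeTermR n 0 := by
  rw [primeTermR_zero]
  split_ifs with hn
  · have h2 : (2 : ℝ) ≤ n := by exact_mod_cast hn.two_le
    have h3 : (n : ℝ)⁻¹ ≤ 2⁻¹ := inv_anti₀ (by norm_num) h2
    have := Real.log_le_sub_one_of_pos (show 0 < 1 - (n : ℝ)⁻¹ by linarith)
    linarith
  · exact le_rfl

lemma primeTermR_zero_le (n : ℕ) : primeTermR (n + 2) 0 ≤ 1 / (n + 1 : ℝ) - 1 / (n + 2 : ℝ) := by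
  have hp : (0 : ℝ) < n + 1 := by positivity
  rw [primeTermR_zero]
  split_ifs with hn
  · push_cast
    have h1 := Real.log_le_sub_one_of_pos (show 0 < (1 - ((n : ℝ) + 2)⁻¹)⁻¹ by
      have : ((n : ℝ) + 2)⁻¹ < 1 := inv_lt_one_of_one_lt₀ (by linarith)
      exact inv_pos.2 (by linarith))
    rw [Real.log_inv] at h1
    have h2 : (1 - ((n : ℝ) + 2)⁻¹)⁻¹ - 1 = 1 / (n + 1 : ℝ) := by
      have : 1 - ((n : ℝ) + 2)⁻¹ = (n + 1) / (n + 2) := by field_simp; ring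
      rw [this, inv_div]; field_simp; ring
    rw [h2] at h1
    rw [one_div ((n : ℝ) + 2)]
    linarith
  · rw [sub_nonneg]
    exact one_div_le_one_div_of_le hp (by linarith)

lemma summable_primeTermR_zero : Summable fun n => primeTermR n 0 := by
  have := summable_primeTerm (z := ((0 : ℝ) : ℂ)) (by simp; norm_num)
  simp_rw [primeTerm_ofReal _ (show (-1 / 2 : ℝ) ≤ 0 by norm_num)] at this
  exact_mod_cast this

lemma eulerLogSum_eq (x : ℝ) :
    eulerLogSum x = primeInvSum x + ∑ n ∈ Finset.Icc 1 ⌊x⌋₊, primeTermR n 0 := by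
  rw [eulerLogSum, primeInvSum, ← Finset.sum_add_distrib]
  refine Finset.sum_congr rfl fun n _ => ?_
  rw [primeTermR_zero, primeInv]
  split_ifs <;> ring

lemma sum_primeTermR_eq (N : ℕ) : ∑ n ∈ Finset.Icc 1 N, primeTermR n 0 =
    mertensC - ∑' n, primeTermR (n + (N + 1)) 0 := by
  rw [mertensC, ← summable_primeTermR_zero.sum_add_tsum_nat_add (N + 1), add_sub_cancel_right,
    Finset.range_eq_Ico, ← Finset.sum_Ioo_add_eq_sum_Ico (by omega)]
  have : primeTermR 0 0 = 0 := by rw [primeTermR_zero, if_neg Nat.not_prime_zero]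
  rw [this, add_zero]
  refine Finset.sum_congr ?_ fun _ _ => rfl
  ext; simp; omega

lemma eulerLogSum_le (x : ℝ) : eulerLogSum x ≤ primeInvSum x + mertensC := by
  rw [eulerLogSum_eq, sum_primeTermR_eq]
  have : 0 ≤ ∑' n, primeTermR (n + (⌊x⌋₊ + 1)) 0 := tsum_nonneg fun n => primeTermR_zero_nonneg _
  linarith

lemma eulerLogSum_ge {x : ℝ} (hx : 1 < x) :
    primeInvSum x + mertensC - 2 / x ≤ eulerLogSum x := by
  have hN1 : 1 ≤ ⌊x⌋₊ := Nat.one_le_floor_iff x |>.2 hx.le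
  obtain ⟨N, hN⟩ : ∃ N, ⌊x⌋₊ = N + 1 := ⟨⌊x⌋₊ - 1, by omega⟩
  rw [eulerLogSum_eq, sum_primeTermR_eq, hN]
  have htail : ∑' n, primeTermR (n + (N + 1 + 1)) 0 ≤ 1 / (N + 1 : ℝ) := by
    refine Real.tsum_le_of_sum_range_le (fun n => primeTermR_zero_nonneg _) fun m => ?_
    have : ∑ n ∈ Finset.range m, primeTermR (n + (N + 1 + 1)) 0 ≤
        1 / (N + 1 : ℝ) - 1 / (N + m + 1 : ℝ) := by
      induction m with
      | zero => simp
      | succ m ih =>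
        rw [Finset.sum_range_succ]
        have := primeTermR_zero_le (m + N)
        rw [show m + (N + 1 + 1) = m + N + 2 by ring]
        push_cast at this ⊢
        have e : (N : ℝ) + (m + 1) + 1 = m + N + 2 := by ring
        have e' : (N : ℝ) + m + 1 = m + N + 1 := by ring
        rw [e]
        rw [e'] at ih
        linarith
    have h0 : 0 ≤ 1 / (N + m + 1 : ℝ) := by positivity
    linarith
  have hlt : x < N + 2 := by
    have := Nat.lt_floor_add_one x
    rw [hN] at this
    push_cast at this
    linarith
  have : 1 / (N + 1 : ℝ) ≤ 2 / x := by
    rw [div_le_div_iff₀ (by positivity) (by linarith)]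
    have : (0 : ℝ) ≤ N := by positivity
    linarith
  linarith

lemma sum_nth_count {M : Type*} [AddCommMonoid M] (F : ℕ → M) (n : ℕ) :
    ∑ i ∈ Finset.range (Nat.count Nat.Prime n), F (Nat.nth Nat.Prime i) =
      ∑ j ∈ Finset.range n, if j.Prime then F j else 0 := by
  induction n with
  | zero => simp
  | succ n ih =>
    rw [Finset.sum_range_succ, Nat.count_succ, ← ih]
    split_ifs with h
    · rw [Finset.sum_range_succ, Nat.nth_count h]
    · simp

lemma sum_nth_floor (F : ℕ → ℝ) (x : ℝ) :
    ∑ i ∈ Finset.range (Nat.count Nat.Prime (⌊x⌋₊ + 1)), F (Nat.nth Nat.Prime i) =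
      ∑ j ∈ Finset.Icc 1 ⌊x⌋₊, if j.Prime then F j else 0 := by
  rw [sum_nth_count, Finset.range_eq_Ico, ← Finset.sum_Ioo_add_eq_sum_Ico (by omega),
    if_neg Nat.not_prime_zero, add_zero]
  refine Finset.sum_congr ?_ fun _ _ => rfl
  ext; simp; omega

lemma prime_nth (i : ℕ) : (Nat.nth Nat.Prime i).Prime := Nat.prime_nth_prime i

lemma totient_prod_nth (k : ℕ) : Nat.totient (∏ i ∈ Finset.range k, Nat.nth Nat.Prime i) =
    ∏ i ∈ Finset.range k, (Nat.nth Nat.Prime i - 1) := by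
  induction k with
  | zero => simp
  | succ k ih =>
    rw [Finset.prod_range_succ, Finset.prod_range_succ, Nat.totient_mul, ih,
      Nat.totient_prime (prime_nth k)]
    refine Nat.Coprime.prod_left fun i hi => (Nat.coprime_primes (prime_nth i) (prime_nth k)).2 ?_
    intro h
    have := Nat.nth_injective Nat.infinite_setOfPred_prime h
    simp at hi
    omega

lemma log_prod_nth (x : ℝ) : Real.log ((∏ i ∈ Finset.range (Nat.count Nat.Prime (⌊x⌋₊ + 1)),
    Nat.nth Nat.Prime i : ℕ) : ℝ) = Chebyshev.theta x := by
  rw [Nat.cast_prod, Real.log_prod fun i _ => by exact_mod_cast (prime_nth i).ne_zero,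
    sum_nth_floor (fun n => Real.log n), Chebyshev.theta, Finset.sum_filter]
  rfl

lemma prod_nth_div_totient (x : ℝ) :
    ((∏ i ∈ Finset.range (Nat.count Nat.Prime (⌊x⌋₊ + 1)), Nat.nth Nat.Prime i : ℕ) : ℝ) /
      (Nat.totient (∏ i ∈ Finset.range (Nat.count Nat.Prime (⌊x⌋₊ + 1)), Nat.nth Nat.Prime i) : ℝ) =
      Real.exp (eulerLogSum x) := by
  rw [eulerLogSum, ← sum_nth_floor (fun n => -Real.log (1 - (n : ℝ)⁻¹)), totient_prod_nth,
    Real.exp_sum, Nat.cast_prod, Nat.cast_prod, ← Finset.prod_div_distrib]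
  refine Finset.prod_congr rfl fun i _ => ?_
  have h2 : (2 : ℝ) ≤ Nat.nth Nat.Prime i := by exact_mod_cast (prime_nth i).two_le
  have h3 : ((Nat.nth Nat.Prime i : ℝ))⁻¹ ≤ 2⁻¹ := inv_anti₀ (by norm_num) h2
  rw [Nat.cast_sub (prime_nth i).one_le, Real.exp_neg, Real.exp_log (by linarith)]
  have h4 : (Nat.nth Nat.Prime i : ℝ) - 1 ≠ 0 := by linarith
  have h5 : (1 : ℝ) - (Nat.nth Nat.Prime i : ℝ)⁻¹ = (Nat.nth Nat.Prime i - 1) /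
    Nat.nth Nat.Prime i := by field_simp
  rw [h5, inv_div]
  simp

/-! ### Oscillation and the sign of `nicolasLog` -/

/-- The oscillating quantity `(θ(x) - x) / (x log x) - (∑_{p ≤ x} 1/p + C - log log x - γ)`. -/
noncomputable def nicolasK (x : ℝ) : ℝ :=
  (Chebyshev.theta x - x) / (x * Real.log x) -
    (primeInvSum x + mertensC - Real.log (Real.log x) - Real.eulerMascheroniConstant)

/-- The smooth function that agrees with `nicolasK` between two consecutive integers, where `θ`
has the constant value `A` and the sum of prime reciprocals the constant value `R`. -/
noncomputable def nicolasQ (A R t : ℝ) : ℝ :=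
  (A - t) / (t * Real.log t) -
    (R + mertensC - Real.log (Real.log t) - Real.eulerMascheroniConstant)

lemma nicolasK_eq_Q (x : ℝ) : nicolasK x = nicolasQ (Chebyshev.theta x) (primeInvSum x) x := rfl

lemma kFun_eq_nicolasK {x : ℝ} (hx : 1 < x) : kFun mertensC x = nicolasK x * Real.log x := by
  have := Real.log_pos hx
  rw [kFun, nicolasK]
  field_simp

lemma hasDerivAt_nicolasQ (A R : ℝ) {t : ℝ} (ht : 1 < t) :
    HasDerivAt (nicolasQ A R) ((t - A) * (Real.log t + 1) / (t * Real.log t) ^ 2) t := by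
  have hl := Real.log_pos ht
  have ht0 : t ≠ 0 := by positivity
  have h1 : HasDerivAt (fun t => t * Real.log t) (1 * Real.log t + t * t⁻¹) t :=
    (hasDerivAt_id t).mul (Real.hasDerivAt_log ht0)
  have h2 := ((hasDerivAt_const t A).sub (hasDerivAt_id t)).div h1 (by positivity)
  have h3 := (Real.hasDerivAt_log ht0).log hl.ne'
  have h4 := h2.sub (((h3.const_sub (R + mertensC))).sub_const Real.eulerMascheroniConstant)
  refine h4.congr_deriv ?_
  simp only [Pi.sub_apply, id]
  field_simp
  ring

lemma theta_primeInvSum_succ (m : ℕ) :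
    Chebyshev.theta ((m + 1 : ℕ) : ℝ) = Chebyshev.theta m +
        (if (m + 1).Prime then Real.log ((m + 1 : ℕ) : ℝ) else 0) ∧
    primeInvSum ((m + 1 : ℕ) : ℝ) = primeInvSum m +
        (if (m + 1).Prime then (((m + 1 : ℕ) : ℝ))⁻¹ else 0) := by
  constructor
  · rw [Chebyshev.theta_eq_sum_Icc, Chebyshev.theta_eq_sum_Icc, Nat.floor_natCast,
      Nat.floor_natCast, Finset.sum_filter, Finset.sum_filter, Finset.sum_Icc_succ_top (by omega)]
  · rw [primeInvSum, primeInvSum, Nat.floor_natCast, Nat.floor_natCast,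
      Finset.sum_Icc_succ_top (by omega)]
    rfl

lemma primeInvSum_floor (x : ℝ) : primeInvSum x = primeInvSum (⌊x⌋₊ : ℝ) := by
  rw [primeInvSum, primeInvSum, Nat.floor_natCast]

lemma nicolasK_right {y t : ℝ} (hy : 0 ≤ y) (h1 : y ≤ t) (h2 : t < ⌊y⌋₊ + 1) :
    nicolasK t = nicolasQ (Chebyshev.theta y) (primeInvSum y) t := by
  have : ⌊t⌋₊ = ⌊y⌋₊ := by
    rw [Nat.floor_eq_iff (hy.trans h1)]
    exact ⟨(Nat.floor_le hy).trans h1, h2⟩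
  rw [nicolasK_eq_Q, Chebyshev.theta_eq_theta_coe_floor t, primeInvSum_floor t, this,
    ← Chebyshev.theta_eq_theta_coe_floor, ← primeInvSum_floor]

/-- On the closed interval `[m, m + 1]` the function `nicolasK` is given by a single smooth
formula: the jumps of its two parts at a prime cancel. -/
lemma nicolasK_Icc {m : ℕ} (hm : 1 ≤ m) {t : ℝ} (h1 : (m : ℝ) ≤ t) (h2 : t ≤ m + 1) :
    nicolasK t = nicolasQ (Chebyshev.theta m) (primeInvSum m) t := by
  rcases h2.lt_or_eq with h | h
  · exact nicolasK_right (Nat.cast_nonneg m) h1 (by rwa [Nat.floor_natCast])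
  · have hm' : (1 : ℝ) ≤ m := by exact_mod_cast hm
    have ht : t = ((m + 1 : ℕ) : ℝ) := by rw [h]; push_cast; ring
    have hl : 0 < Real.log t := Real.log_pos (by linarith)
    have ht0 : 0 < t := by linarith
    rw [nicolasK_eq_Q, ht, (theta_primeInvSum_succ m).1, (theta_primeInvSum_succ m).2, ← ht]
    unfold nicolasQ
    split_ifs
    · field_simp
      ring
    · simp

lemma nicolasK_left {y : ℝ} (hy : 2 < y) : ∃ A R m : ℝ, 1 < m ∧ m < y ∧
    Chebyshev.theta y - Real.log y ≤ A ∧ ∀ t ∈ Icc m y, nicolasK t = nicolasQ A R t := by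
  obtain ⟨m, hm⟩ : ∃ m : ℕ, ⌈y⌉₊ = m + 1 :=
    ⟨⌈y⌉₊ - 1, by have := Nat.ceil_pos.2 (show 0 < y by linarith); omega⟩
  have h1 : y ≤ m + 1 := by have := Nat.le_ceil y; rw [hm] at this; exact_mod_cast this
  have h2 : (m : ℝ) < y := Nat.lt_ceil.1 (by omega)
  have hm2 : 2 ≤ m := by
    have : (1 : ℝ) < m := by linarith
    exact_mod_cast this
  refine ⟨Chebyshev.theta m, primeInvSum m, m, by exact_mod_cast hm2, h2, ?_,
    fun t ht => nicolasK_Icc (by omega) ht.1 (ht.2.trans h1)⟩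
  have hl : 0 < Real.log y := Real.log_pos (by linarith)
  rcases h1.lt_or_eq with h | h
  · have : ⌊y⌋₊ = m := (Nat.floor_eq_iff (by linarith)).2 ⟨h2.le, h⟩
    rw [Chebyshev.theta_eq_theta_coe_floor y, this]
    linarith
  · have ht : y = ((m + 1 : ℕ) : ℝ) := by rw [h]; push_cast; ring
    have := (theta_primeInvSum_succ m).1
    rw [← ht] at this
    rw [this]
    split_ifs <;> linarith

/-- Although `θ` and the sum of prime reciprocals jump, `nicolasK` is continuous beyond `2`. -/
lemma continuousAt_nicolasK {y : ℝ} (hy : 2 < y) : ContinuousAt nicolasK y := by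
  rw [continuousAt_iff_continuous_left_right]
  constructor
  · obtain ⟨A, R, m, hm, hmy, -, h⟩ := nicolasK_left hy
    refine ((hasDerivAt_nicolasQ A R (by linarith)).continuousAt.continuousWithinAt
      ).congr_of_eventuallyEq ?_ (h y ⟨hmy.le, le_rfl⟩)
    filter_upwards [Icc_mem_nhdsLE hmy] with t ht using h t ht
  · refine ((hasDerivAt_nicolasQ (Chebyshev.theta y) (primeInvSum y)
      (by linarith)).continuousAt.continuousWithinAt).congr_of_eventuallyEq ?_ rfl
    filter_upwards [Ico_mem_nhdsGE (Nat.lt_floor_add_one y)] with t ht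
      using nicolasK_right (by linarith) ht.1 ht.2

lemma deriv_nonpos_of_right_max {f : ℝ → ℝ} {f' y m : ℝ} (hf : HasDerivAt f f' y) (hm : y < m)
    (h : ∀ t ∈ Ioo y m, f t ≤ f y) : f' ≤ 0 := by
  have := (hasDerivWithinAt_iff_tendsto_slope' (s := Ioi y) (by simp)).1 hf.hasDerivWithinAt
  refine le_of_tendsto this ?_
  filter_upwards [Ioo_mem_nhdsGT hm] with t ht
  rw [slope_def_field]
  exact div_nonpos_of_nonpos_of_nonneg (sub_nonpos.2 (h t ht)) (sub_nonneg.2 ht.1.le)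

lemma deriv_nonneg_of_left_max {f : ℝ → ℝ} {f' y m : ℝ} (hf : HasDerivAt f f' y) (hm : m < y)
    (h : ∀ t ∈ Ioo m y, f t ≤ f y) : 0 ≤ f' := by
  have := (hasDerivWithinAt_iff_tendsto_slope' (s := Iio y) (by simp)).1 hf.hasDerivWithinAt
  refine ge_of_tendsto this ?_
  filter_upwards [Ioo_mem_nhdsLT hm] with t ht
  rw [slope_def_field]
  exact div_nonneg_of_nonpos (sub_nonpos.2 (h t ht)) (sub_nonpos.2 ht.2.le)

lemma hasDerivAt_nicolasQ_mul (A R b : ℝ) {y : ℝ} (hy : 1 < y) :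
    HasDerivAt (fun t => nicolasQ A R t * t ^ b)
      (y ^ b * ((y - A) * (Real.log y + 1) / (y * Real.log y) ^ 2 + b * nicolasQ A R y / y)) y := by
  have hy0 : 0 < y := by linarith
  refine ((hasDerivAt_nicolasQ A R hy).mul
    (Real.hasDerivAt_rpow_const (p := b) (Or.inl hy0.ne'))).congr_deriv ?_
  rw [Real.rpow_sub_one hy0.ne']
  ring

/-- At a positive local maximum `y` of `nicolasK t * t ^ b` one has
`0 < (θ(y) - y) / (y log y) ≤ b * nicolasK y + 1 / y`. -/
lemma nicolasK_local_max {y b x₁ x₂ : ℝ} (hy : 2 < y) (hb : 0 < b) (h1 : x₁ < y) (h2 : y < x₂)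
    (hK : 0 < nicolasK y)
    (hmax : ∀ t ∈ Icc x₁ x₂, nicolasK t * t ^ b ≤ nicolasK y * y ^ b) :
    y < Chebyshev.theta y ∧
      (Chebyshev.theta y - y) / (y * Real.log y) ≤ b * nicolasK y + 1 / y := by
  have hy0 : 0 < y := by linarith
  have hl : 0 < Real.log y := Real.log_pos (by linarith)
  have hyb : 0 < y ^ b := Real.rpow_pos_of_pos hy0 b
  constructor
  · have hd := hasDerivAt_nicolasQ_mul (Chebyshev.theta y) (primeInvSum y) b
      (show 1 < y by linarith)
    have := deriv_nonpos_of_right_max hd (m := min x₂ (⌊y⌋₊ + 1))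
      (lt_min h2 (Nat.lt_floor_add_one y)) fun t ht => by
        have := hmax t ⟨(h1.trans ht.1).le, ht.2.le.trans (min_le_left _ _)⟩
        rwa [nicolasK_right hy0.le ht.1.le (ht.2.trans_le (min_le_right _ _)),
          nicolasK_eq_Q] at this
    rw [← nicolasK_eq_Q] at this
    have h3 := nonpos_of_mul_nonpos_right this hyb
    by_contra! h4
    have h5 : 0 ≤ (y - Chebyshev.theta y) * (Real.log y + 1) / (y * Real.log y) ^ 2 := by
      have := sub_nonneg.2 h4
      positivity
    have h6 : 0 < b * nicolasK y / y := by positivity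
    linarith
  · obtain ⟨A, R, m, hm, hmy, hA, h⟩ := nicolasK_left hy
    have hd := hasDerivAt_nicolasQ_mul A R b (show 1 < y by linarith)
    have hyy := h y ⟨hmy.le, le_rfl⟩
    have := deriv_nonneg_of_left_max hd (m := max x₁ m) (max_lt h1 hmy) fun t ht => by
        have := hmax t ⟨(le_max_left _ _).trans ht.1.le, (ht.2.trans h2).le⟩
        rwa [h t ⟨(le_max_right _ _).trans ht.1.le, ht.2.le⟩, hyy] at this
    rw [← hyy] at this
    have h3 := nonneg_of_mul_nonneg_right this hyb
    have h4 : (A - y) * (Real.log y + 1) ≤ b * nicolasK y * y * Real.log y ^ 2 := by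
      have e : (y - A) * (Real.log y + 1) / (y * Real.log y) ^ 2 + b * nicolasK y / y =
        (b * nicolasK y * y * Real.log y ^ 2 - (A - y) * (Real.log y + 1)) /
          (y * Real.log y) ^ 2 := by field_simp; ring
      rw [e, le_div_iff₀ (by positivity), zero_mul] at h3
      linarith
    have hbK : 0 < b * nicolasK y := by positivity
    have h5 : A - y ≤ b * nicolasK y * y * Real.log y := by
      by_contra! h6
      have h7 : (b * nicolasK y * y * Real.log y) * (Real.log y + 1) <
        (A - y) * (Real.log y + 1) := by gcongr
      have h8 : 0 < b * nicolasK y * y * Real.log y := by positivity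
      nlinarith
    rw [div_le_iff₀ (by positivity)]
    have e : (b * nicolasK y + 1 / y) * (y * Real.log y) =
      b * nicolasK y * y * Real.log y + Real.log y := by field_simp
    rw [e]; linarith

/-- `γ + log log θ(x) + ∑_{p ≤ x} log(1 - 1/p)`, the logarithm of
`e^γ log log N / (N / φ(N))` for `N = ∏_{p ≤ x} p`. -/
noncomputable def nicolasLog (x : ℝ) : ℝ :=
  Real.eulerMascheroniConstant + Real.log (Real.log (Chebyshev.theta x)) - eulerLogSum x

lemma one_lt_theta {x : ℝ} (hx : 3 ≤ x) : 1 < Chebyshev.theta x := by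
  refine lt_of_lt_of_le ?_ (Chebyshev.theta_mono hx)
  rw [Chebyshev.theta_eq_log_primorial, Real.lt_log_iff_exp_lt]
  · have : primorial 3 = 6 := by decide
    rw [show ⌊(3 : ℝ)⌋₊ = 3 by simp, this]
    have := Real.exp_one_lt_d9
    push_cast; linarith
  · exact_mod_cast primorial_pos _

/-- The upper bound by `nicolasK` needs only the concavity of `log log` and the tail bound for the
Euler product. -/
lemma nicolasLog_le {x : ℝ} (hx : 3 ≤ x) : nicolasLog x ≤ nicolasK x + 2 / x := by
  have h1 := one_lt_theta hx
  have hl : 0 < Real.log x := Real.log_pos (by linarith)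
  have hx0 : 0 < x := by linarith
  have hlt := Real.log_pos h1
  have h2 := Real.log_le_sub_one_of_pos (show 0 < Chebyshev.theta x / x by positivity)
  rw [Real.log_div (by positivity) hx0.ne'] at h2
  have h3 := Real.log_le_sub_one_of_pos (div_pos hlt hl)
  rw [Real.log_div (by positivity) hl.ne'] at h3
  have h4 : Real.log (Chebyshev.theta x) / Real.log x - 1 ≤
      (Chebyshev.theta x - x) / (x * Real.log x) := by
    have e : (Chebyshev.theta x - x) / (x * Real.log x) =
      (Chebyshev.theta x / x - 1) / Real.log x := by field_simp
    rw [e, div_sub_one hl.ne']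
    gcongr
  have h5 := eulerLogSum_ge (show 1 < x by linarith)
  unfold nicolasLog nicolasK
  linarith

lemma two_le_rpow {x b : ℝ} (hx : 4 ≤ x) (hb : b < 1 / 2) : 2 / x ≤ x ^ (-b) := by
  have hx0 : 0 < x := by linarith
  rw [div_le_iff₀ hx0, ← Real.rpow_add_one hx0.ne']
  calc (2 : ℝ) = 4 ^ (1 / 2 : ℝ) := by
        rw [show (4 : ℝ) = 2 ^ (2 : ℝ) by norm_num, ← Real.rpow_mul (by norm_num)]; norm_num
    _ ≤ x ^ (1 / 2 : ℝ) := Real.rpow_le_rpow (by norm_num) hx (by norm_num)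
    _ ≤ x ^ (-b + 1) := Real.rpow_le_rpow_of_exponent_le (by linarith) (by linarith)

/-- If RH fails then, for a suitable `0 < b < 1/2`, `x ^ b * nicolasK x` takes arbitrarily far out
values above `1` and values below `-1`. -/
lemma nicolasK_oscillates (hRH : ¬ RiemannHypothesis) : ∃ b : ℝ, 0 < b ∧ b < 1 / 2 ∧
    ∀ X : ℝ, (∃ x > X, 4 ≤ x ∧ x ^ (-b) < nicolasK x) ∧
      ∃ x > X, 4 ≤ x ∧ nicolasK x < - x ^ (-b) := by
  obtain ⟨ρ, hρ, h1, h2⟩ := exists_zero_of_not_RH hRH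
  obtain ⟨b, hb1, hb2⟩ := exists_between (show 1 - ρ.re < 1 / 2 by linarith)
  have key : ∀ ε : ℝ, ε * ε = 1 → ∀ X : ℝ, ∃ x > X, 4 ≤ x ∧ x ^ (-b) < ε * nicolasK x := by
    intro ε hε X
    by_contra! h
    refine not_eventually_bounded hρ h2 hb1 hb2 hε (X₀ := max X 4)
      (le_max_of_le_right (by norm_num)) fun x hx => ?_
    have hx4 : 4 < x := (le_max_right _ _).trans_lt hx
    have hl : 0 < Real.log x := Real.log_pos (by linarith)
    rw [kFun_eq_nicolasK (by linarith), ← mul_assoc]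
    gcongr
    exact h x ((le_max_left _ _).trans_lt hx) hx4.le
  refine ⟨b, by linarith, hb2, fun X => ⟨?_, ?_⟩⟩
  · simpa using key 1 (by norm_num) X
  · obtain ⟨x, hx, h4, h⟩ := key (-1) (by norm_num) X
    exact ⟨x, hx, h4, by linarith⟩

lemma exists_nicolasLog_neg (hRH : ¬ RiemannHypothesis) (X : ℝ) :
    ∃ x > X, 4 ≤ x ∧ nicolasLog x < 0 := by
  obtain ⟨b, hb0, hb, h⟩ := nicolasK_oscillates hRH
  obtain ⟨x, hx, h4, hK⟩ := (h X).2
  refine ⟨x, hx, h4, ?_⟩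
  linarith [nicolasLog_le (show 3 ≤ x by linarith), two_le_rpow h4 hb]

/-- Between two points where `nicolasK` is negative there is a maximum of `nicolasK t * t ^ b`; at
such a maximum `θ(y) - y` is nonnegative and of controlled size, so that the error of replacing
`log log θ(y)` by `log log y` is harmless. -/
lemma exists_nicolasLog_pos (hRH : ¬ RiemannHypothesis) (X : ℝ) :
    ∃ x > X, 4 ≤ x ∧ 0 < nicolasLog x := by
  obtain ⟨b, hb0, hb, h⟩ := nicolasK_oscillates hRH
  obtain ⟨x₁, hx₁, h4₁, hK₁⟩ := (h X).2
  obtain ⟨x, hx, h4, hK⟩ := (h x₁).1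
  obtain ⟨x₂, hx₂, -, hK₂⟩ := (h x).2
  have hc : ContinuousOn (fun t => nicolasK t * t ^ b) (Icc x₁ x₂) := fun t ht => by
    have : 4 ≤ t := h4₁.trans ht.1
    exact ((continuousAt_nicolasK (by linarith)).mul
      (Real.continuousAt_rpow_const t b (Or.inl (by linarith)))).continuousWithinAt
  obtain ⟨y, hy, hmax⟩ := isCompact_Icc.exists_isMaxOn ⟨x, hx.le, hx₂.le⟩ hc
  have hneg : ∀ t ≥ 4, nicolasK t < - t ^ (-b) → nicolasK t * t ^ b < 0 := fun t ht hlt => by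
    have ht0 : 0 < t := by linarith
    have := Real.rpow_pos_of_pos ht0 b
    have := Real.rpow_pos_of_pos ht0 (-b)
    exact mul_neg_of_neg_of_pos (by linarith) (by assumption)
  have hx0 : 0 < x := by linarith
  have hy4 : 4 ≤ y := h4₁.trans hy.1
  have hy0 : 0 < y := by linarith
  have hyb : 0 < y ^ b := Real.rpow_pos_of_pos hy0 b
  have hy1 : 1 < nicolasK y * y ^ b := by
    refine lt_of_lt_of_le ?_ (hmax ⟨hx.le, hx₂.le⟩)
    have hxb := Real.rpow_pos_of_pos hx0 b
    calc (1 : ℝ) = x ^ (-b) * x ^ b := by rw [← Real.rpow_add hx0]; simp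
      _ < nicolasK x * x ^ b := by gcongr
  have hKy : y ^ (-b) < nicolasK y := by
    rw [Real.rpow_neg hy0.le, inv_lt_iff_one_lt_mul₀ hyb]
    linarith
  have hyx₁ : x₁ < y := by
    refine lt_of_le_of_ne hy.1 fun e => ?_
    have := hneg x₁ h4₁ hK₁
    rw [e] at this; linarith
  have hyx₂ : y < x₂ := by
    refine lt_of_le_of_ne hy.2 fun e => ?_
    have := hneg x₂ (by linarith) hK₂
    rw [← e] at this; linarith
  have hp : 0 < y ^ (-b) := Real.rpow_pos_of_pos hy0 _
  obtain ⟨hθ, hS⟩ := nicolasK_local_max (by linarith) hb0 hyx₁ hyx₂ (hp.trans hKy)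
    fun t ht => hmax ht
  refine ⟨y, hx₁.trans hyx₁, hy4, ?_⟩
  have hll : Real.log (Real.log y) ≤ Real.log (Real.log (Chebyshev.theta y)) :=
    Real.log_le_log (Real.log_pos (by linarith)) (Real.log_le_log hy0 hθ.le)
  have h2y := two_le_rpow hy4 hb
  have hE := eulerLogSum_le y
  have e2 : 2 / y = 2 * (1 / y) := by ring
  have hlow : nicolasK y - (Chebyshev.theta y - y) / (y * Real.log y) ≤ nicolasLog y := by
    unfold nicolasLog nicolasK
    linarith
  have hbK : b * nicolasK y < 1 / 2 * nicolasK y := by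
    have := hp.trans hKy
    gcongr
  linarith

lemma log_bound_eq_exp {x : ℝ} (hx : 4 ≤ x) :
    Real.exp Real.eulerMascheroniConstant * Real.log (Chebyshev.theta x) =
      Real.exp (nicolasLog x + eulerLogSum x) := by
  rw [nicolasLog, sub_add_cancel, Real.exp_add,
    Real.exp_log (Real.log_pos (one_lt_theta (by linarith)))]

/-- A condition that holds for the primorials `∏_{p ≤ x} p` with arbitrarily large `x` holds for
infinitely many indices. -/
lemma infinite_of_frequently_floor {P : ℕ → Prop}
    (h : ∀ X : ℝ, ∃ x > X, P (Nat.count Nat.Prime (⌊x⌋₊ + 1))) : {k : ℕ | 1 ≤ k ∧ P k}.Infinite := by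
  refine Set.infinite_of_forall_exists_gt fun a => ?_
  obtain ⟨x, hx, hP⟩ := h (Nat.nth Nat.Prime (a + 1))
  have h1 : Nat.nth Nat.Prime (a + 1) ≤ ⌊x⌋₊ + 1 := (Nat.le_floor hx.le).trans (Nat.le_succ _)
  have h2 := Nat.count_monotone Nat.Prime h1
  rw [Nat.count_nth_of_infinite Nat.infinite_setOfPred_prime] at h2
  exact ⟨_, ⟨by omega, hP⟩, by omega⟩

end

/-- **Theorem 2(ii) (Nicolas).** If the Riemann Hypothesis is false, then both
`N_k / φ(N_k) < e^γ log log N_k` and `N_k / φ(N_k) > e^γ log log N_k` occur for infinitely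
many `k ≥ 1`. -/
theorem nicolas_oscillation_of_not_riemannHypothesis (hRH : ¬ RiemannHypothesis) :
    {k : ℕ | 1 ≤ k ∧
        (primorialOfFirstPrimes k : ℝ) / (Nat.totient (primorialOfFirstPrimes k) : ℝ) <
          Real.exp Real.eulerMascheroniConstant *
            Real.log (Real.log (primorialOfFirstPrimes k : ℝ))}.Infinite ∧
    {k : ℕ | 1 ≤ k ∧
        (primorialOfFirstPrimes k : ℝ) / (Nat.totient (primorialOfFirstPrimes k) : ℝ) >
          Real.exp Real.eulerMascheroniConstant *
            Real.log (Real.log (primorialOfFirstPrimes k : ℝ))}.Infinite := by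
  constructor
  · refine infinite_of_frequently_floor fun X => ?_
    obtain ⟨x, hx, h4, h⟩ := exists_nicolasLog_pos hRH X
    refine ⟨x, hx, ?_⟩
    rw [primorialOfFirstPrimes, prod_nth_div_totient, log_prod_nth, log_bound_eq_exp h4,
      Real.exp_lt_exp]
    linarith
  · refine infinite_of_frequently_floor fun X => ?_
    obtain ⟨x, hx, h4, h⟩ := exists_nicolasLog_neg hRH X
    refine ⟨x, hx, ?_⟩
    rw [primorialOfFirstPrimes, prod_nth_div_totient, log_prod_nth, log_bound_eq_exp h4, gt_iff_lt,
      Real.exp_lt_exp]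
    linarith
end

section
/- For every constant B > 1 there exists C > 0 and x_0 such that for all real x ≥ x_0, |x − ϑ(x)| ≤ C · x / (log x)^B, where ϑ(x) = ∑_{p ≤ x, p prime} log p. -/
/-!
The prime number theorem with an arbitrary power of the logarithm saved, proved by Fourier analysis
on the edge of the half-plane `Re s > 1`, with no contour shift.

Put `G(s) = (-ζ'/ζ(s) - ζ(s)) / (s (s + 1))`, which is regular at `s = 1` because the two poles
cancel. Mellin inversion for the weight `max (1 - u) 0`, applied termwise to the Dirichlet series
(`hasSum_hatWeight`), gives for `c > 1`
`∑_{n ≤ x} (Λ(n) - 1) (1 - n / x) = (1 / 2π) ∫ x ^ (c + it) G(c + it) dt`.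
The right-hand side is `x ^ c` times a Fourier integral at frequency `log x`. If every derivative of
`G` is bounded on `1 < Re s ≤ 2` by an integrable function of `Im s`, then `k` integrations by parts
give the bound `O(x ^ c / (log x) ^ k)` uniformly in `c`
(`exists_norm_integral_smoothedTransform_le`), and `c = 1 + 1 / log x` makes it `O(x / (log x) ^ k)`.

The bounds for the derivatives come from Cauchy's estimate: for every `η > 0` the function `ζ` has no
zeros in a region of width `≍ |t| ^ (-5η)` to the left of `Re s = 1`, where moreover `ζ`, its
derivative and `1 / ζ` are `O(|t| ^ O(η))` (`exists_zeta_bounds`). That region is obtained from the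
3-4-1 inequality and the growth bound `ζ(s) = O(|t| ^ (2ε))` for `Re s > 1 - ε`
(`exists_norm_riemannZeta_le`), itself read off from the comparison of `∑ n ^ (-s)` with an integral.
Since `η` may depend on `k`, the factor `1 / (s (s + 1))` leaves enough decay for integrability.

Finally `∑_{n ≤ x} Λ(n) (x - n) = x ^ 2 / 2 + O(x ^ 2 / (log x) ^ (2m))` is differenced with step
`x / (log x) ^ m`, using that `ψ` is monotone, to reach `ψ(x) = x + O(x / (log x) ^ m)`, and
`ψ - ϑ = O(√x log x)` is in Mathlib.
-/

/-- The first Chebyshev function `ϑ(x) = ∑_{p ≤ x} log p`, summing over primes `p ≤ x`. -/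
noncomputable def chebyshevTheta (x : ℝ) : ℝ :=
  ∑ p ∈ (Finset.range (⌊x⌋₊ + 1)).filter Nat.Prime, Real.log p

section

open Complex Filter Topology

/-! ### Growth of `ζ` near the line `Re s = 1` -/

lemma hasDerivAt_real_cpow {x : ℝ} (hx : 0 < x) (s : ℂ) :
    HasDerivAt (fun y : ℝ ↦ (y : ℂ) ^ s) (s * (x : ℂ) ^ (s - 1)) x := by
  have h := (hasDerivAt_id (x : ℂ)).cpow_const (c := s) (Or.inl (by simpa using hx))
  simpa using h.comp_ofReal

/-- Interpolation with weight `θ` between the trivial bound `2 N ^ (-Re s)` and the mean value bound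
`‖s‖ N ^ (-Re s - 1)`. -/
lemma norm_cpow_sub_cpow_le {N x : ℝ} (hN : 1 ≤ N) (hx : N ≤ x) (hx' : x ≤ N + 1) {s : ℂ}
    (hs : 0 ≤ s.re) {θ : ℝ} (hθ : 0 ≤ θ) (hθ' : θ ≤ 1) :
    ‖(N : ℂ) ^ (-s) - (x : ℂ) ^ (-s)‖ ≤ 2 * ‖s‖ ^ θ * N ^ (-s.re - θ) := by
  have hN0 : 0 < N := by linarith
  have hx0 : 0 < x := by linarith
  set A := ‖(N : ℂ) ^ (-s) - (x : ℂ) ^ (-s)‖ with hA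
  have h1 : A ≤ 2 * N ^ (-s.re) := by
    refine (norm_sub_le _ _).trans ?_
    rw [norm_cpow_eq_rpow_re_of_pos hN0, norm_cpow_eq_rpow_re_of_pos hx0, neg_re]
    have := Real.rpow_le_rpow_of_nonpos hN0 hx (by linarith : -s.re ≤ 0)
    linarith
  have h2 : A ≤ ‖s‖ * N ^ (-s.re - 1) := by
    have := (convex_Icc N (N + 1)).norm_image_sub_le_of_norm_hasDerivWithin_le
      (f := fun y : ℝ ↦ (y : ℂ) ^ (-s)) (f' := fun y : ℝ ↦ -s * (y : ℂ) ^ (-s - 1))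
      (C := ‖s‖ * N ^ (-s.re - 1))
      (fun y hy ↦ (hasDerivAt_real_cpow (by linarith [hy.1]) _).hasDerivWithinAt)
      (fun y hy ↦ ?_) (x := x) (y := N) ⟨hx, hx'⟩ ⟨le_rfl, by linarith⟩
    · refine this.trans (mul_le_of_le_one_right (by positivity) ?_)
      rw [Real.norm_eq_abs, abs_le]; constructor <;> linarith
    · rw [norm_mul, norm_neg, norm_cpow_eq_rpow_re_of_pos (by linarith [hy.1])]
      gcongr
      simp only [sub_re, neg_re, one_re]
      exact Real.rpow_le_rpow_of_nonpos hN0 hy.1 (by linarith)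
  have hA0 : 0 ≤ A := norm_nonneg _
  calc A = A ^ (1 - θ) * A ^ θ := by
        rw [← Real.rpow_add' hA0 (by simp)]; simp
    _ ≤ (2 * N ^ (-s.re)) ^ (1 - θ) * (‖s‖ * N ^ (-s.re - 1)) ^ θ := by
        gcongr
    _ = 2 ^ (1 - θ) * ‖s‖ ^ θ * (N ^ (-s.re * (1 - θ)) * N ^ ((-s.re - 1) * θ)) := by
        rw [Real.mul_rpow (by norm_num) (by positivity), Real.mul_rpow (by positivity)
          (by positivity), ← Real.rpow_mul hN0.le, ← Real.rpow_mul hN0.le]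
        ring
    _ = 2 ^ (1 - θ) * ‖s‖ ^ θ * N ^ (-s.re - θ) := by
        rw [← Real.rpow_add hN0]; ring_nf
    _ ≤ _ := by
        gcongr
        calc (2 : ℝ) ^ (1 - θ) ≤ 2 ^ (1 : ℝ) := by
              apply Real.rpow_le_rpow_of_exponent_le <;> linarith
          _ = 2 := by simp

/-- `(s - 1)` times `(n + 1) ^ (-s) - ∫ x in (n + 1)..(n + 2), x ^ (-s)`, written without
denominators so that it is entire in `s`. -/
noncomputable def zetaTerm (n : ℕ) (s : ℂ) : ℂ :=
  (s - 1) * ((n + 1 : ℝ) : ℂ) ^ (-s) + ((n + 2 : ℝ) : ℂ) ^ (1 - s) - ((n + 1 : ℝ) : ℂ) ^ (1 - s)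

lemma norm_zetaTerm_le (n : ℕ) {s : ℂ} (hs : 0 ≤ s.re) {θ : ℝ} (hθ : 0 ≤ θ) (hθ' : θ ≤ 1) :
    ‖zetaTerm n s‖ ≤ ‖s - 1‖ * (2 * ‖s‖ ^ θ * (n + 1 : ℝ) ^ (-s.re - θ)) := by
  have h1 : (1 : ℝ) ≤ n + 1 := by linarith [n.cast_nonneg (α := ℝ)]
  have := (convex_Icc (n + 1 : ℝ) (n + 1 + 1)).norm_image_sub_le_of_norm_hasDerivWithin_le
      (f := fun y : ℝ ↦ (s - 1) * (((n + 1 : ℝ) : ℂ) ^ (-s) * y) + (y : ℂ) ^ (1 - s))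
      (f' := fun y : ℝ ↦ (s - 1) * (((n + 1 : ℝ) : ℂ) ^ (-s) * 1) + (1 - s) * (y : ℂ) ^ (1 - s - 1))
      (C := ‖s - 1‖ * (2 * ‖s‖ ^ θ * (n + 1 : ℝ) ^ (-s.re - θ)))
      (fun y hy ↦ ((((hasDerivAt_id y).ofReal_comp.const_mul _).const_mul _).add
        (hasDerivAt_real_cpow (by linarith [hy.1]) _)).hasDerivWithinAt)
      (fun y hy ↦ ?_) (x := n + 1) (y := n + 1 + 1) ⟨le_rfl, by linarith⟩ ⟨by linarith, le_rfl⟩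
  · convert this using 1
    · congr 1
      simp only [zetaTerm]
      push_cast
      rw [show (n : ℂ) + 1 + 1 = n + 2 by ring]
      ring
    · simp
  · have e : (s - 1) * (((n + 1 : ℝ) : ℂ) ^ (-s) * 1) + (1 - s) * (y : ℂ) ^ (1 - s - 1)
        = (s - 1) * (((n + 1 : ℝ) : ℂ) ^ (-s) - (y : ℂ) ^ (-s)) := by
      rw [show 1 - s - 1 = -s by ring]; ring
    rw [e, norm_mul]
    gcongr
    exact norm_cpow_sub_cpow_le h1 hy.1 hy.2 hs hθ hθ'

lemma differentiable_zetaTerm (n : ℕ) : Differentiable ℂ (zetaTerm n) := by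
  have h1 : ((n + 1 : ℝ) : ℂ) ≠ 0 := by exact_mod_cast n.succ_ne_zero
  have h2 : ((n + 2 : ℝ) : ℂ) ≠ 0 := by exact_mod_cast (n + 1).succ_ne_zero
  unfold zetaTerm
  refine ((differentiable_id.sub_const _).mul (differentiable_id.neg.const_cpow (Or.inl h1))).add
    ((differentiable_id.const_sub 1).const_cpow (Or.inl h2)) |>.sub
    ((differentiable_id.const_sub 1).const_cpow (Or.inl h1))

lemma summable_shift_rpow {p : ℝ} (hp : 1 < p) : Summable (fun n : ℕ ↦ (n + 1 : ℝ) ^ (-p)) := by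
  have := (summable_nat_add_iff 1).2 (Real.summable_nat_rpow.2 (by linarith : -p < -1))
  simpa using this

/-- In the half-plane of absolute convergence the integrals telescope, and what remains is
`(s - 1) ζ(s) - 1`. -/
lemma hasSum_zetaTerm {s : ℂ} (hs : 1 < s.re) : HasSum (zetaTerm · s) (riemannZeta₁ s - 1) := by
  have hs1 : s ≠ 1 := by rintro rfl; simp at hs
  have h1 : HasSum (fun n : ℕ ↦ ((n + 1 : ℝ) : ℂ) ^ (-s)) (riemannZeta s) := by
    rw [zeta_eq_tsum_one_div_nat_add_one_cpow hs]
    have : Summable (fun n : ℕ ↦ 1 / ((n : ℂ) + 1) ^ s) := by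
      have := (summable_nat_add_iff 1).2 (Complex.summable_one_div_nat_cpow.2 hs)
      simpa using this
    convert this.hasSum using 2 with n
    rw [cpow_neg, one_div]; push_cast; rfl
  have h2 : HasSum (fun n : ℕ ↦ ((n + 2 : ℝ) : ℂ) ^ (1 - s) - ((n + 1 : ℝ) : ℂ) ^ (1 - s)) (-1) := by
    have hsum : Summable (fun n : ℕ ↦ ((n + 2 : ℝ) : ℂ) ^ (1 - s) - ((n + 1 : ℝ) : ℂ) ^ (1 - s)) := by
      have hz : Summable (fun n ↦ zetaTerm n s) := by
        refine Summable.of_norm_bounded ?_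
          (fun n ↦ norm_zetaTerm_le n (by linarith) le_rfl zero_le_one)
        have := summable_shift_rpow hs
        simpa using ((this.mul_left 2).mul_left ‖s - 1‖)
      refine (hz.sub (h1.summable.mul_left (s - 1))).congr fun n ↦ ?_
      simp only [zetaTerm]; ring
    refine (hsum.hasSum_iff_tendsto_nat).2 ?_
    have : ∀ n : ℕ, ∑ i ∈ Finset.range n,
        (((i + 2 : ℝ) : ℂ) ^ (1 - s) - ((i + 1 : ℝ) : ℂ) ^ (1 - s)) =
        ((n + 1 : ℝ) : ℂ) ^ (1 - s) - 1 := by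
      intro n
      have := Finset.sum_range_sub (fun i : ℕ ↦ ((i + 1 : ℝ) : ℂ) ^ (1 - s)) n
      simp only [Nat.cast_zero, zero_add, ofReal_one, one_cpow] at this
      rw [← this]
      refine Finset.sum_congr rfl fun i _ ↦ ?_
      push_cast
      rw [show (i : ℂ) + 1 + 1 = i + 2 by ring]
    simp_rw [this]
    have : Tendsto (fun n : ℕ ↦ ((n + 1 : ℝ) : ℂ) ^ (1 - s)) atTop (𝓝 0) := by
      rw [tendsto_zero_iff_norm_tendsto_zero]
      have h3 : Tendsto (fun n : ℕ ↦ (n + 1 : ℝ) ^ (-(s.re - 1))) atTop (𝓝 0) :=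
        (tendsto_rpow_neg_atTop (by linarith)).comp
          (tendsto_natCast_atTop_atTop.atTop_add tendsto_const_nhds)
      refine h3.congr fun n ↦ ?_
      rw [norm_cpow_eq_rpow_re_of_pos (by positivity)]
      simp
    simpa using this.sub_const 1
  have h3 := (h1.mul_left (s - 1)).add h2
  rw [riemannZeta_eq_inv_sub_mul hs1, mul_inv_cancel_left₀ (sub_ne_zero.2 hs1),
    ← sub_eq_add_neg] at h3
  simpa only [zetaTerm, add_sub_assoc] using h3

lemma summable_zetaTerm_bound {ε : ℝ} (hε : 0 < ε) :
    Summable (fun n : ℕ ↦ (n + 1 : ℝ) ^ (-(1 + ε))) := summable_shift_rpow (by linarith)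

lemma norm_zetaTerm_le' {ε : ℝ} (hε : 0 < ε) (hε' : ε ≤ 1 / 2) (n : ℕ) {s : ℂ}
    (hs : 1 - ε ≤ s.re) :
    ‖zetaTerm n s‖ ≤ ‖s - 1‖ * (2 * ‖s‖ ^ (2 * ε)) * (n + 1 : ℝ) ^ (-(1 + ε)) := by
  refine (norm_zetaTerm_le n (by linarith) (θ := 2 * ε) (by linarith) (by linarith)).trans ?_
  rw [← mul_assoc]
  gcongr
  · linarith [n.cast_nonneg (α := ℝ)]
  · linarith

/-- The series for `(s - 1) ζ(s) - 1` stays valid to the left of `Re s = 1`, by uniqueness of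
analytic continuation. -/
lemma hasSum_zetaTerm' {ε : ℝ} (hε : 0 < ε) (hε' : ε ≤ 1 / 2) {s : ℂ} (hs : 1 - ε < s.re) :
    HasSum (zetaTerm · s) (riemannZeta₁ s - 1) := by
  have hsum {w : ℂ} (hw : 1 - ε < w.re) : Summable (zetaTerm · w) :=
    Summable.of_norm_bounded ((summable_zetaTerm_bound hε).mul_left _)
      (fun n ↦ norm_zetaTerm_le' hε hε' n hw.le)
  set U : Set ℂ := {w | 1 - ε < w.re} with hU
  have hUo : IsOpen U := isOpen_lt continuous_const continuous_re
  have hdiff : DifferentiableOn ℂ (fun w ↦ ∑' n, zetaTerm n w) U := by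
    intro w hw
    set R := ‖w‖ + 1
    have hVo : IsOpen (U ∩ Metric.ball 0 R) := hUo.inter Metric.isOpen_ball
    have := differentiableOn_tsum_of_summable_norm (F := zetaTerm) (U := U ∩ Metric.ball 0 R)
      ((summable_zetaTerm_bound hε).mul_left ((R + 1) * (2 * R ^ (2 * ε))))
      (fun n ↦ (differentiable_zetaTerm n).differentiableOn) hVo ?_
    · exact (this.differentiableAt (hVo.mem_nhds ⟨hw, by simp [R]⟩)).differentiableWithinAt
    · rintro n v ⟨hv, hvR⟩
      have hvR' : ‖v‖ ≤ R := by simpa using (mem_ball_zero_iff.1 hvR).le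
      refine (norm_zetaTerm_le' hε hε' n (le_of_lt hv)).trans ?_
      gcongr
      exact (norm_sub_le _ _).trans (by simpa using hvR')
  have heq : Set.EqOn (fun w ↦ ∑' n, zetaTerm n w) (fun w ↦ riemannZeta₁ w - 1) U := by
    refine AnalyticOnNhd.eqOn_of_preconnected_of_eventuallyEq (hdiff.analyticOnNhd hUo)
      ((differentiable_riemannZeta₁.sub_const 1).differentiableOn.analyticOnNhd hUo)
      (convex_halfSpace_re_gt _).isPreconnected (z₀ := 2) (by simp [hU]; linarith) ?_
    filter_upwards [(isOpen_lt continuous_const continuous_re).mem_nhds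
      (show (2 : ℂ) ∈ {w : ℂ | 1 < w.re} by simp)] with w hw
    exact (hasSum_zetaTerm hw).tsum_eq
  have h := heq hs
  simp only at h
  rw [← h]
  exact (hsum hs).hasSum

lemma exists_norm_riemannZeta₁_sub_le {ε : ℝ} (hε : 0 < ε) (hε' : ε ≤ 1 / 2) :
    ∃ C : ℝ, 0 < C ∧ ∀ s : ℂ, 1 - ε < s.re →
      ‖riemannZeta₁ s - 1‖ ≤ C * (‖s - 1‖ * ‖s‖ ^ (2 * ε)) := by
  have hpos : 0 < ∑' n : ℕ, (n + 1 : ℝ) ^ (-(1 + ε)) :=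
    (summable_zetaTerm_bound hε).tsum_pos (fun n ↦ by positivity) 0 (by simp)
  refine ⟨2 * ∑' n : ℕ, (n + 1 : ℝ) ^ (-(1 + ε)), by positivity, fun s hs ↦ ?_⟩
  have h := ((summable_zetaTerm_bound hε).mul_left (‖s - 1‖ * (2 * ‖s‖ ^ (2 * ε)))).hasSum
  rw [tsum_mul_left] at h
  have := (hasSum_zetaTerm' hε hε' hs).norm_le_of_bounded h
    (fun n ↦ norm_zetaTerm_le' hε hε' n hs.le)
  linarith

/-- `|ζ(s)| ≪ |Im s| ^ (2ε)` for `1 - ε < Re s ≤ 3`: summing `norm_zetaTerm_le` with `θ = 2ε`. -/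
lemma exists_norm_riemannZeta_le {ε : ℝ} (hε : 0 < ε) (hε' : ε ≤ 1 / 2) :
    ∃ C : ℝ, 0 < C ∧ ∀ s : ℂ, 1 - ε < s.re → s.re ≤ 3 → 1 ≤ |s.im| →
      ‖riemannZeta s‖ ≤ C * |s.im| ^ (2 * ε) := by
  obtain ⟨C, hC, h⟩ := exists_norm_riemannZeta₁_sub_le hε hε'
  refine ⟨C * 4 ^ (2 * ε) + 1, by positivity, fun s hs hs3 him ↦ ?_⟩
  have h1 : 1 ≤ ‖s - 1‖ := him.trans (by simpa using abs_im_le_norm (s - 1))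
  have hs1 : s ≠ 1 := by rintro rfl; norm_num at him
  have h4 : ‖s‖ ≤ 4 * |s.im| := by
    have := norm_le_abs_re_add_abs_im s
    rw [abs_of_nonneg (by linarith : 0 ≤ s.re)] at this
    linarith
  have h5 : (1 : ℝ) ≤ |s.im| ^ (2 * ε) := Real.one_le_rpow him (by positivity)
  have h6 : ‖s‖ ^ (2 * ε) ≤ 4 ^ (2 * ε) * |s.im| ^ (2 * ε) := by
    rw [← Real.mul_rpow (by norm_num) (by positivity)]
    gcongr
  rw [riemannZeta_eq_inv_sub_mul hs1, norm_mul, norm_inv, inv_mul_le_iff₀ (by linarith)]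
  calc ‖riemannZeta₁ s‖ = ‖(riemannZeta₁ s - 1) + 1‖ := by simp
    _ ≤ C * (‖s - 1‖ * ‖s‖ ^ (2 * ε)) + 1 := (norm_add_le _ _).trans (by simpa using h s hs)
    _ ≤ C * (‖s - 1‖ * (4 ^ (2 * ε) * |s.im| ^ (2 * ε))) + ‖s - 1‖ * |s.im| ^ (2 * ε) := by
        gcongr
        nlinarith
    _ = _ := by ring

/-! ### The zero-free region -/

lemma exists_norm_riemannZeta_ofReal_le :
    ∃ C : ℝ, 0 < C ∧ ∀ x : ℝ, 0 < x → x ≤ 2 → ‖riemannZeta (1 + x)‖ ≤ C / x := by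
  obtain ⟨C, hC, h⟩ := exists_norm_riemannZeta₁_sub_le (ε := 1 / 2) (by norm_num) le_rfl
  refine ⟨C * (2 * 3) + 1, by positivity, fun x hx hx2 ↦ ?_⟩
  have hs1 : (1 + x : ℂ) ≠ 1 := by simpa using hx.ne'
  have h3 : ‖(1 + x : ℂ)‖ ≤ 3 := by
    refine (norm_add_le _ _).trans ?_
    simp [abs_of_pos hx]; linarith
  have hx' : ‖(x : ℂ)‖ = x := by simp [abs_of_pos hx]
  rw [riemannZeta_eq_inv_sub_mul hs1, norm_mul, norm_inv, add_sub_cancel_left, hx',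
    div_eq_inv_mul]
  gcongr
  calc ‖riemannZeta₁ (1 + x)‖ = ‖(riemannZeta₁ (1 + x) - 1) + 1‖ := by simp
    _ ≤ C * (‖(1 + x : ℂ) - 1‖ * ‖(1 + x : ℂ)‖ ^ (2 * (1 / 2 : ℝ))) + 1 :=
        (norm_add_le _ _).trans (by simpa using h (1 + x) (by simp; linarith))
    _ ≤ C * (2 * 3) + 1 := by
        rw [add_sub_cancel_left, hx', mul_one_div_cancel two_ne_zero, Real.rpow_one]
        gcongr

/-- The `3-4-1` inequality. -/
lemma one_le_norm_riemannZeta_product {x : ℝ} (hx : 0 < x) (t : ℝ) :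
    1 ≤ ‖riemannZeta (1 + x)‖ ^ 3 * ‖riemannZeta (1 + x + I * t)‖ ^ 4 *
      ‖riemannZeta (1 + x + 2 * I * t)‖ := by
  have := DirichletCharacter.norm_LFunction_product_ge_one (1 : DirichletCharacter ℂ 1) hx t
  simpa only [DirichletCharacter.LFunctionTrivChar, DirichletCharacter.LFunction_modOne_eq,
    norm_mul, norm_pow] using this

/-- For `η > 0` small, polynomial bounds with exponent `O(η)` for `ζ`, its derivative and `1 / ζ` hold
in a zero-free region of width `a |t| ^ (-5η)` to the left of `Re s = 1`. With
`|ζ(1 + x + it)| ≫ x ^ (3 / 4) |t| ^ (-η / 4)` from the 3-4-1 inequality at `x = b ^ 4 |t| ^ (-5η)`,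
the lower bound `≍ b ^ 3 |t| ^ (-4η)` exceeds the variation `≍ b ^ 4 |t| ^ (-4η)` of `ζ` across the
region as soon as `b` is small. -/
lemma exists_zeta_bounds {η : ℝ} (hη : 0 < η) (hη' : η ≤ 1 / 5) :
    ∃ a c C : ℝ, 0 < a ∧ a ≤ 1 ∧ 0 < c ∧ 0 < C ∧ ∀ s : ℂ, 2 ≤ |s.im| → s.re ≤ 5 / 2 →
      1 - a * |s.im| ^ (-(5 * η)) ≤ s.re →
      c * |s.im| ^ (-(4 * η)) ≤ ‖riemannZeta s‖ ∧ ‖riemannZeta s‖ ≤ C * |s.im| ^ η ∧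
      ‖deriv riemannZeta s‖ ≤ C * |s.im| ^ η := by
  set ε := η / 2 with hε
  have hε0 : 0 < ε := by positivity
  obtain ⟨C, hC, hζ⟩ := exists_norm_riemannZeta_le hε0 (by linarith)
  rw [show 2 * ε = η by rw [hε]; ring] at hζ
  obtain ⟨C₁, hC₁, hζ₁⟩ := exists_norm_riemannZeta_ofReal_le
  have two_rpow {p : ℝ} (hp0 : 0 ≤ p) (hp : p ≤ 1) {y : ℝ} (hy : 0 ≤ y) :
      (2 * y) ^ p ≤ 2 * y ^ p := by
    rw [Real.mul_rpow (by norm_num) hy]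
    gcongr
    exact (Real.rpow_le_rpow_of_exponent_le one_le_two hp).trans (by simp)
  -- Cauchy's estimate on a circle of radius `ε / 2`
  set D := C * 2 / (ε / 2) with hD
  have hD0 : 0 < D := by positivity
  have hderiv : ∀ s : ℂ, 1 - ε / 2 < s.re → s.re ≤ 5 / 2 → 2 ≤ |s.im| →
      ‖deriv riemannZeta s‖ ≤ D * |s.im| ^ η := by
    intro s hs hs2 him
    have key : ∀ z ∈ Metric.closedBall s (ε / 2),
        1 - ε < z.re ∧ z.re ≤ 3 ∧ 1 ≤ |z.im| ∧ |z.im| ≤ 2 * |s.im| := by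
      intro z hz
      rw [mem_closedBall_iff_norm] at hz
      have h1 := abs_le.1 ((abs_re_le_norm (z - s)).trans hz)
      have h2 : |z.im - s.im| ≤ ε / 2 := by simpa using (abs_im_le_norm (z - s)).trans hz
      rw [sub_re] at h1
      have h3 := abs_sub_abs_le_abs_sub z.im s.im
      have h4 := abs_sub_abs_le_abs_sub s.im z.im
      rw [abs_sub_comm] at h4
      refine ⟨by linarith, by linarith, by linarith, by linarith⟩
    have hd : DiffContOnCl ℂ riemannZeta (Metric.ball s (ε / 2)) := by
      refine DifferentiableOn.diffContOnCl_ball (U := Metric.closedBall s (ε / 2)) ?_ subset_rfl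
      intro z hz
      refine (differentiableAt_riemannZeta ?_).differentiableWithinAt
      rintro rfl
      have := (key 1 hz).2.2.1
      norm_num at this
    refine (norm_deriv_le_of_forall_mem_sphere_norm_le (C := C * (2 * |s.im| ^ η))
      (by positivity) hd fun z hz ↦ ?_).trans_eq (by rw [hD]; ring)
    obtain ⟨h1, h2, h3, h4⟩ := key z (Metric.sphere_subset_closedBall hz)
    refine (hζ z h1 h2 h3).trans ?_
    gcongr
    exact (Real.rpow_le_rpow (abs_nonneg _) h4 hη.le).trans
      (two_rpow hη.le (by linarith) (abs_nonneg _))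
  set K := C₁ ^ 3 * (C * 2) with hK
  have hK0 : 0 < K := by positivity
  set c₀ := 1 / (K + 1) with hc₀
  have hc₀0 : 0 < c₀ := by positivity
  have hc₀K : K * c₀ ^ 4 ≤ 1 := by
    have h1 : c₀ ≤ 1 := by rw [hc₀, div_le_one (by positivity)]; linarith
    have h2 : c₀ ^ 4 ≤ c₀ := by simpa using pow_le_pow_of_le_one hc₀0.le h1 (show 1 ≤ 4 by norm_num)
    have h3 : K * c₀ ≤ 1 := by rw [hc₀, mul_one_div, div_le_one (by positivity)]; linarith
    nlinarith
  set b := min (ε / 4) (c₀ / (4 * D)) with hb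
  have hb0 : 0 < b := by positivity
  have hbε : b ≤ ε / 4 := min_le_left _ _
  have hbD : 4 * D * b ≤ c₀ := by
    have : b ≤ c₀ / (4 * D) := min_le_right _ _
    rwa [le_div_iff₀ (by positivity), mul_comm] at this
  have hb4 : b ^ 4 ≤ b := by
    simpa using pow_le_pow_of_le_one hb0.le (by linarith) (show 1 ≤ 4 by norm_num)
  -- to the right of the region, the lower bound comes from the 3-4-1 inequality
  have hright : ∀ s : ℂ, 2 ≤ |s.im| → s.re ≤ 3 → 1 + b ^ 4 * |s.im| ^ (-(5 * η)) ≤ s.re →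
      c₀ * b ^ 3 * |s.im| ^ (-(4 * η)) ≤ ‖riemannZeta s‖ := by
    intro s him hs3 hs
    set M := |s.im| with hM
    have hM0 : 0 < M := by linarith
    have hpow : 0 < b ^ 4 * M ^ (-(5 * η)) := by positivity
    obtain ⟨x, hx⟩ : ∃ x, x = s.re - 1 := ⟨_, rfl⟩
    have hx0 : 0 < x := by linarith
    have h := one_le_norm_riemannZeta_product hx0 s.im
    have e1 : (1 + x + I * s.im : ℂ) = s := by
      apply Complex.ext <;> simp [hx]
    rw [e1] at h
    have h2 : ‖riemannZeta (1 + x + 2 * I * s.im)‖ ≤ C * (2 * M ^ η) := by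
      refine (hζ _ ?_ ?_ ?_).trans ?_
      · simp; linarith
      · simp; linarith
      · simp [abs_mul]; linarith
      · gcongr
        have : |(1 + x + 2 * I * s.im : ℂ).im| = 2 * M := by simp [abs_mul, hM]
        rw [this]
        exact two_rpow hη.le (by linarith) hM0.le
    have h1 := hζ₁ x hx0 (by linarith)
    have h3 : 1 ≤ (C₁ / x) ^ 3 * ‖riemannZeta s‖ ^ 4 * (C * (2 * M ^ η)) :=
      h.trans (by gcongr)
    have h4 : x ^ 3 * M ^ (-η) ≤ K * ‖riemannZeta s‖ ^ 4 := by
      have : (C₁ / x) ^ 3 * ‖riemannZeta s‖ ^ 4 * (C * (2 * M ^ η)) =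
          K * ‖riemannZeta s‖ ^ 4 / (x ^ 3 * M ^ (-η)) := by
        rw [Real.rpow_neg hM0.le, hK]; field_simp
      rw [this, one_le_div (by positivity)] at h3
      exact h3
    have h5 : (b ^ 4 * M ^ (-(5 * η))) ^ 3 * M ^ (-η) ≤ x ^ 3 * M ^ (-η) := by
      gcongr; linarith
    have h6 : (c₀ * b ^ 3 * M ^ (-(4 * η))) ^ 4 =
        c₀ ^ 4 * ((b ^ 4 * M ^ (-(5 * η))) ^ 3 * M ^ (-η)) := by
      have e2 : (M ^ (-(4 * η))) ^ 4 = M ^ (-(16 * η)) := by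
        rw [← Real.rpow_natCast, ← Real.rpow_mul hM0.le]; congr 1; push_cast; ring
      have e3 : (M ^ (-(5 * η))) ^ 3 * M ^ (-η) = M ^ (-(16 * η)) := by
        rw [← Real.rpow_natCast, ← Real.rpow_mul hM0.le, ← Real.rpow_add hM0]
        congr 1; push_cast; ring
      rw [mul_pow, e2, mul_pow (b ^ 4), mul_assoc _ _ (M ^ (-η)), e3]; ring
    refine le_of_pow_le_pow_left₀ (n := 4) (by norm_num) (norm_nonneg _) ?_
    rw [h6]
    calc _ ≤ c₀ ^ 4 * (K * ‖riemannZeta s‖ ^ 4) :=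
          mul_le_mul_of_nonneg_left (h5.trans h4) (by positivity)
      _ = (K * c₀ ^ 4) * ‖riemannZeta s‖ ^ 4 := by ring
      _ ≤ _ := mul_le_of_le_one_left (by positivity) hc₀K
  refine ⟨b ^ 4, c₀ * b ^ 3 / 2, max C D, by positivity, by linarith, by positivity,
    lt_max_of_lt_left hC, fun s him hs5 hs ↦ ?_⟩
  have hs3 : s.re ≤ 3 := by linarith
  set M := |s.im| with hM
  have hM1 : 1 ≤ M := by linarith
  have hM0 : 0 < M := by linarith
  have hMle : M ^ (-(5 * η)) ≤ 1 := Real.rpow_le_one_of_one_le_of_nonpos hM1 (by linarith)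
  have hwidth : b ^ 4 * M ^ (-(5 * η)) ≤ ε / 4 :=
    (mul_le_of_le_one_right (by positivity) hMle).trans (by linarith)
  have hu : ‖riemannZeta s‖ ≤ C * M ^ η := hζ s (by linarith) hs3 hM1
  refine ⟨?_, hu.trans (by gcongr; exact le_max_left _ _), ?_⟩
  · rcases le_total (1 + b ^ 4 * M ^ (-(5 * η))) s.re with hr | hr
    · refine le_trans ?_ (hright s him hs3 hr)
      have : 0 < c₀ * b ^ 3 * M ^ (-(4 * η)) := by positivity
      linarith
    -- to the left, compare with the point at the same height on the right edge
    set w := b ^ 4 * M ^ (-(5 * η)) with hw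
    have hw0 : 0 < w := by positivity
    set s₁ : ℂ := ⟨1 + w, s.im⟩ with hs₁
    have h1 := hright s₁ him (by simp [hs₁]; linarith) le_rfl
    have hconv : Convex ℝ (Set.Icc (1 - w) (1 + w) ×ℂ {s.im}) :=
      ((convex_Icc _ _).is_linear_preimage ⟨add_re, fun c z ↦ by simp⟩).inter
        ((convex_singleton _).is_linear_preimage ⟨add_im, fun c z ↦ by simp⟩)
    have h2 := hconv.norm_image_sub_le_of_norm_deriv_le (𝕜 := ℂ) (f := riemannZeta)
      (C := D * M ^ η) (x := s) (y := s₁) ?_ ?_ ?_ ?_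
    · have h3 : ‖s₁ - s‖ ≤ 2 * w := by
        refine (norm_le_abs_re_add_abs_im _).trans ?_
        simp only [hs₁, sub_re, sub_im, sub_self, abs_zero, add_zero]
        rw [abs_le]; constructor <;> linarith
      have h4 : D * M ^ η * (2 * w) ≤ c₀ * b ^ 3 / 2 * M ^ (-(4 * η)) := by
        have : M ^ η * M ^ (-(5 * η)) = M ^ (-(4 * η)) := by
          rw [← Real.rpow_add hM0]; ring_nf
        calc D * M ^ η * (2 * w) = (4 * D * b) * (b ^ 3 / 2 * (M ^ η * M ^ (-(5 * η)))) := by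
              rw [hw]; ring
          _ ≤ c₀ * (b ^ 3 / 2 * (M ^ η * M ^ (-(5 * η)))) := by gcongr
          _ = _ := by rw [this]; ring
      have h5 := norm_sub_norm_le (riemannZeta s₁) (riemannZeta s)
      have h6 : D * M ^ η * ‖s₁ - s‖ ≤ D * M ^ η * (2 * w) := by gcongr
      have h7 : c₀ * b ^ 3 * M ^ (-(4 * η)) ≤ ‖riemannZeta s₁‖ := h1
      linarith
    · rintro z ⟨hz, hz'⟩
      have hz' : z.im = s.im := hz'
      refine differentiableAt_riemannZeta ?_
      rintro rfl
      rw [hM, ← hz'] at hM0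
      simp at hM0
    · rintro z ⟨hz, hz'⟩
      have hz' : z.im = s.im := hz'
      have := hderiv z (by linarith [hz.1]) (by linarith [hz.2]) (by rw [hz']; exact him)
      rwa [hz'] at this
    · exact ⟨⟨hs, hr⟩, rfl⟩
    · exact ⟨⟨by simp [hs₁]; linarith, le_rfl⟩, rfl⟩
  · refine (hderiv s (by linarith) hs5 him).trans ?_
    gcongr
    exact le_max_right _ _

/-! ### The transform and its derivatives -/

/-- The function `(-ζ'/ζ(s) - ζ(s)) / (s (s + 1))`, with the removable singularity at `s = 1`
filled in: the poles of `-ζ'/ζ` and `ζ` cancel. -/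
noncomputable def smoothedTransform (s : ℂ) : ℂ :=
  (-(deriv riemannZeta₁ s / riemannZeta₁ s) - riemannZeta₀ s) / (s * (s + 1))

lemma smoothedTransform_eq {s : ℂ} (hs : s ≠ 1) (hζ : riemannZeta s ≠ 0) :
    smoothedTransform s =
      (-(deriv riemannZeta s / riemannZeta s) - riemannZeta s) / (s * (s + 1)) := by
  have h1 : s - 1 ≠ 0 := sub_ne_zero.2 hs
  have h2 : riemannZeta₁ s ≠ 0 := by
    rw [riemannZeta_eq_inv_sub_mul hs] at hζ
    exact right_ne_zero_of_mul hζ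
  rw [smoothedTransform, deriv_riemannZeta_eq_neg_inv_sub_sq_mul_add hs]
  congr 1
  nth_rw 2 [riemannZeta_eq_inv_sub_add hs]
  rw [riemannZeta_eq_inv_sub_mul hs]
  field_simp
  ring

lemma analyticAt_smoothedTransform {s : ℂ} (h0 : 0 < s.re) (hζ : riemannZeta₁ s ≠ 0) :
    AnalyticAt ℂ smoothedTransform s := by
  have h1 := differentiable_riemannZeta₁.analyticAt s
  refine ((h1.deriv.div h1 hζ).neg.sub (differentiable_riemannZeta₀.analyticAt s)).div
    (analyticAt_id.mul (analyticAt_id.add analyticAt_const)) ?_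
  refine mul_ne_zero ?_ ?_ <;> intro h <;> have := congrArg re h <;> simp at this <;> linarith

lemma riemannZeta₁_ne_zero {s : ℂ} (hs : 1 ≤ s.re) : riemannZeta₁ s ≠ 0 := by
  by_cases h : s = 1
  · simp [h]
  · have := riemannZeta_ne_zero_of_one_le_re hs
    rw [riemannZeta_eq_inv_sub_mul h] at this
    exact right_ne_zero_of_mul this

/-- Cauchy's estimate on a disc inside the zero-free region, whose radius is a small power of
`1 / |Im s|`. -/
lemma exists_norm_iteratedDeriv_smoothedTransform_le_of_large (k : ℕ) :
    ∃ C : ℝ, 0 < C ∧ ∀ s : ℂ, 1 < s.re → s.re ≤ 2 → 3 ≤ |s.im| →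
      ‖iteratedDeriv k smoothedTransform s‖ ≤ C * |s.im| ^ (-(3 / 2) : ℝ) := by
  -- the loss `M ^ (5η)` occurs `k + 1` times in Cauchy's estimate for the `k`-th derivative
  set η : ℝ := 1 / (10 * (k + 1)) with hη
  have hη0 : 0 < η := by positivity
  have hηk : 5 * η * (k + 1) = 1 / 2 := by rw [hη]; field_simp; norm_num
  have hη5 : 5 * η ≤ 1 / 2 := by nlinarith [k.cast_nonneg (α := ℝ)]
  obtain ⟨a, c, C, ha, ha1, hc, hC, hz⟩ := exists_zeta_bounds hη0 (by linarith)
  set K := (4 * C / c + 2 * C) * 4 with hK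
  have hK0 : 0 < K := by positivity
  refine ⟨k.factorial * K * (2 / a) ^ k, by positivity, fun s hs1 hs2 him ↦ ?_⟩
  set M := |s.im| with hM
  have hM0 : 0 < M := by linarith
  have hM1 : 1 ≤ M := by linarith
  have hMle : M ^ (-(5 * η)) ≤ 1 := Real.rpow_le_one_of_one_le_of_nonpos hM1 (by linarith)
  have hMpos : 0 < M ^ (-(5 * η)) := by positivity
  set r := a / 2 * M ^ (-(5 * η)) with hr
  have hr0 : 0 < r := by positivity
  have hr1 : r ≤ 1 / 2 := (mul_le_of_le_one_right (by positivity) hMle).trans (by linarith)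
  have key : ∀ z ∈ Metric.closedBall s r, riemannZeta z ≠ 0 ∧ z ≠ 1 ∧ 0 < z.re ∧
      ‖smoothedTransform z‖ ≤ K * M ^ (5 * η - 2) := by
    intro z hzr
    rw [mem_closedBall_iff_norm] at hzr
    have h1 := abs_le.1 ((abs_re_le_norm (z - s)).trans hzr)
    have h2 : |z.im - s.im| ≤ r := by simpa using (abs_im_le_norm (z - s)).trans hzr
    rw [sub_re] at h1
    have h3 := abs_sub_abs_le_abs_sub z.im s.im
    have h4 := abs_sub_abs_le_abs_sub s.im z.im
    rw [abs_sub_comm] at h4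
    have hlow : M / 2 ≤ |z.im| := by linarith
    have hupp : |z.im| ≤ 2 * M := by linarith
    have hzpos : 0 < |z.im| := by linarith
    have neg_pow {p : ℝ} (hp : 0 ≤ p) (hp1 : p ≤ 1) : M ^ (-p) / 2 ≤ |z.im| ^ (-p) := by
      calc M ^ (-p) / 2 = M ^ (-p) * 2 ^ (-1 : ℝ) := by rw [Real.rpow_neg_one]; ring
        _ ≤ M ^ (-p) * 2 ^ (-p) := by
            gcongr
            · norm_num
        _ = (2 * M) ^ (-p) := by rw [Real.mul_rpow (by norm_num) hM0.le]; ring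
        _ ≤ _ := Real.rpow_le_rpow_of_nonpos hzpos hupp (by linarith)
    have hpow : |z.im| ^ η ≤ 2 * M ^ η := by
      calc |z.im| ^ η ≤ (2 * M) ^ η := by gcongr
        _ = 2 ^ η * M ^ η := by rw [Real.mul_rpow (by norm_num) hM0.le]
        _ ≤ 2 ^ (1 : ℝ) * M ^ η := by
            gcongr
            · norm_num
            · linarith
        _ = 2 * M ^ η := by simp
    have h5 := neg_pow (p := 5 * η) (by positivity) (by linarith)
    have h6 := neg_pow (p := 4 * η) (by positivity) (by linarith)
    obtain ⟨hb1, hb2, hb3⟩ := hz z (by linarith) (by linarith) (by nlinarith)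
    have hlow' : c / 2 * M ^ (-(4 * η)) ≤ ‖riemannZeta z‖ := by
      refine le_trans ?_ hb1
      calc _ = c * (M ^ (-(4 * η)) / 2) := by ring
        _ ≤ _ := by gcongr
    have hpos : 0 < c / 2 * M ^ (-(4 * η)) := by positivity
    have hζ0 : riemannZeta z ≠ 0 := norm_pos_iff.1 (hpos.trans_le hlow')
    have hz1 : z ≠ 1 := by rintro rfl; simp at hzpos
    refine ⟨hζ0, hz1, by linarith, ?_⟩
    have hn1 : M / 2 ≤ ‖z‖ := hlow.trans (abs_im_le_norm z)
    have hn2 : M / 2 ≤ ‖z + 1‖ := hlow.trans (by simpa using abs_im_le_norm (z + 1))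
    rw [smoothedTransform_eq hz1 hζ0, norm_div, norm_mul]
    have hnum : ‖-(deriv riemannZeta z / riemannZeta z) - riemannZeta z‖ ≤
        (4 * C / c + 2 * C) * M ^ (5 * η) := by
      calc _ ≤ ‖deriv riemannZeta z‖ / ‖riemannZeta z‖ + ‖riemannZeta z‖ := by
            refine (norm_sub_le _ _).trans ?_
            rw [norm_neg, norm_div]
        _ ≤ C * (2 * M ^ η) / (c / 2 * M ^ (-(4 * η))) + C * (2 * M ^ η) := by
            have : C * |z.im| ^ η ≤ C * (2 * M ^ η) := by gcongr
            gcongr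
            · exact hb3.trans this
            · exact hb2.trans this
        _ = 4 * C / c * (M ^ η * M ^ (4 * η)) + 2 * C * M ^ η := by
            rw [Real.rpow_neg hM0.le]; field_simp; ring
        _ ≤ 4 * C / c * M ^ (5 * η) + 2 * C * M ^ (5 * η) := by
            rw [← Real.rpow_add hM0, show η + 4 * η = 5 * η by ring]
            gcongr
            · linarith
        _ = _ := by ring
    calc _ ≤ (4 * C / c + 2 * C) * M ^ (5 * η) / (M / 2 * (M / 2)) := by gcongr
      _ = K * M ^ (5 * η - 2) := by
          rw [Real.rpow_sub hM0, Real.rpow_two, hK]; field_simp; ring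
  have hd : DiffContOnCl ℂ smoothedTransform (Metric.ball s r) := by
    refine DifferentiableOn.diffContOnCl_ball (U := Metric.closedBall s r) ?_ subset_rfl
    intro z hzr
    obtain ⟨h1, h2, h3, -⟩ := key z hzr
    refine (analyticAt_smoothedTransform h3 ?_).differentiableAt.differentiableWithinAt
    rw [riemannZeta_eq_inv_sub_mul h2] at h1
    exact right_ne_zero_of_mul h1
  refine (norm_iteratedDeriv_le_of_forall_mem_sphere_norm_le k hr0 hd
    fun z hzr ↦ (key z (Metric.sphere_subset_closedBall hzr)).2.2.2).trans_eq ?_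
  have e1 : (r ^ k)⁻¹ = (2 / a) ^ k * M ^ (5 * η * k) := by
    have : r⁻¹ = 2 / a * M ^ (5 * η) := by rw [hr, Real.rpow_neg hM0.le]; field_simp
    rw [← inv_pow, this, mul_pow, ← Real.rpow_natCast (M ^ _), ← Real.rpow_mul hM0.le]
  have e2 : M ^ (5 * η - 2) * M ^ (5 * η * k) = M ^ (-(3 / 2) : ℝ) := by
    rw [← Real.rpow_add hM0]; congr 1; linarith
  rw [div_eq_mul_inv, e1, ← e2]; ring

/-- Every derivative of the transform is bounded on `1 < Re s ≤ 2` by one function of `Im s`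
that is integrable on vertical lines. -/
lemma exists_norm_iteratedDeriv_smoothedTransform_le (k : ℕ) :
    ∃ C : ℝ, 0 < C ∧ ∀ s : ℂ, 1 < s.re → s.re ≤ 2 →
      ‖iteratedDeriv k smoothedTransform s‖ ≤ C * (1 + ‖s.im‖ ^ 2) ^ (-(3 / 2) / 2 : ℝ) := by
  obtain ⟨C, hC, h⟩ := exists_norm_iteratedDeriv_smoothedTransform_le_of_large k
  have hcomp : IsCompact (Set.Icc (1 : ℝ) 2 ×ℂ Set.Icc (-3 : ℝ) 3) :=
    isCompact_Icc.reProdIm isCompact_Icc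
  obtain ⟨B, hB⟩ := hcomp.exists_bound_of_continuousOn (f := iteratedDeriv k smoothedTransform)
    (fun z hz ↦ by
      have hz1 : 1 ≤ z.re := hz.1.1
      rw [iteratedDeriv_eq_iterate]
      exact ((analyticAt_smoothedTransform (by linarith)
        (riemannZeta₁_ne_zero hz1)).iterated_deriv k).continuousAt.continuousWithinAt)
  refine ⟨2 * C + 10 * |B|, by positivity, fun s hs1 hs2 ↦ ?_⟩
  rw [Real.norm_eq_abs, sq_abs]
  have hp : 0 < (1 + s.im ^ 2) ^ (-(3 / 2) / 2 : ℝ) := by positivity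
  rcases le_total 3 |s.im| with him | him
  · refine (h s hs1 hs2 him).trans ?_
    have : |s.im| ^ (-(3 / 2) : ℝ) ≤ 2 * (1 + s.im ^ 2) ^ (-(3 / 2) / 2 : ℝ) := by
      have h0 : 0 < |s.im| := by linarith
      have h1 : 1 + s.im ^ 2 ≤ 2 * s.im ^ 2 := by rw [← sq_abs]; nlinarith
      have h2 : (2 * s.im ^ 2) ^ (-(3 / 2) / 2 : ℝ) ≤ (1 + s.im ^ 2) ^ (-(3 / 2) / 2 : ℝ) :=
        Real.rpow_le_rpow_of_nonpos (by positivity) h1 (by norm_num)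
      have h3 : (2 * s.im ^ 2) ^ (-(3 / 2) / 2 : ℝ) =
          2 ^ (-(3 / 2) / 2 : ℝ) * |s.im| ^ (-(3 / 2) : ℝ) := by
        rw [Real.mul_rpow (by norm_num) (by positivity), ← sq_abs, ← Real.rpow_natCast,
          ← Real.rpow_mul (abs_nonneg _)]
        norm_num
      have h4 : (1 / 2 : ℝ) ≤ 2 ^ (-(3 / 2) / 2 : ℝ) := by
        rw [one_div, ← Real.rpow_neg_one]
        exact Real.rpow_le_rpow_of_exponent_le (by norm_num) (by norm_num)
      have h5 : 0 < |s.im| ^ (-(3 / 2) : ℝ) := by positivity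
      nlinarith
    nlinarith [abs_nonneg B, mul_nonneg (abs_nonneg B) hp.le]
  · have h1 := (hB s ⟨⟨hs1.le, hs2⟩, abs_le.1 him⟩).trans (le_abs_self B)
    have h2 : (1 / 10 : ℝ) ≤ (1 + s.im ^ 2) ^ (-(3 / 2) / 2 : ℝ) := by
      have h3 : 1 + s.im ^ 2 ≤ 10 := by rw [← sq_abs]; nlinarith [abs_nonneg s.im]
      calc (1 / 10 : ℝ) = 10 ^ (-1 : ℝ) := by rw [Real.rpow_neg_one, one_div]
        _ ≤ 10 ^ (-(3 / 2) / 2 : ℝ) :=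
          Real.rpow_le_rpow_of_exponent_le (by norm_num) (by norm_num)
        _ ≤ _ := Real.rpow_le_rpow_of_nonpos (by positivity) h3 (by norm_num)
    nlinarith [abs_nonneg B, mul_nonneg hC.le hp.le]

/-! ### Fourier decay on vertical lines -/

/-- The `j`-th derivative of `t ↦ smoothedTransform (c + t * I)`. -/
noncomputable def verticalDeriv (c : ℝ) (j : ℕ) (t : ℝ) : ℂ :=
  I ^ j * iteratedDeriv j smoothedTransform (c + t * I)

lemma hasDerivAt_verticalDeriv {c : ℝ} (hc : 1 < c) (j : ℕ) (t : ℝ) :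
    HasDerivAt (verticalDeriv c j) (verticalDeriv c (j + 1) t) t := by
  have hre : (c + t * I : ℂ).re = c := by simp
  have h1 : HasDerivAt (iteratedDeriv j smoothedTransform)
      (iteratedDeriv (j + 1) smoothedTransform (c + t * I)) (c + t * I) := by
    rw [iteratedDeriv_succ]
    apply DifferentiableAt.hasDerivAt
    rw [iteratedDeriv_eq_iterate]
    exact ((analyticAt_smoothedTransform (by rw [hre]; linarith)
        (riemannZeta₁_ne_zero (by rw [hre]; linarith))).iterated_deriv j).differentiableAt
  have h2 : HasDerivAt (fun t : ℝ ↦ (c + t * I : ℂ)) I t := by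
    simpa using ((hasDerivAt_id t).ofReal_comp.mul_const I).const_add (c : ℂ)
  have h3 := (h1.comp t h2).const_mul (I ^ j)
  refine h3.congr_deriv ?_
  rw [verticalDeriv]; ring

lemma continuous_verticalDeriv {c : ℝ} (hc : 1 < c) (j : ℕ) : Continuous (verticalDeriv c j) :=
  continuous_iff_continuousAt.2 fun t ↦ (hasDerivAt_verticalDeriv hc j t).continuousAt

lemma exists_norm_verticalDeriv_le (j : ℕ) : ∃ C : ℝ, 0 < C ∧ ∀ c : ℝ, 1 < c → c ≤ 2 → ∀ t : ℝ,
    ‖verticalDeriv c j t‖ ≤ C * (1 + ‖t‖ ^ 2) ^ (-(3 / 2) / 2 : ℝ) := by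
  obtain ⟨C, hC, h⟩ := exists_norm_iteratedDeriv_smoothedTransform_le j
  refine ⟨C, hC, fun c hc hc2 t ↦ ?_⟩
  simpa [verticalDeriv] using h (c + t * I) (by simpa) (by simpa)

lemma integrable_majorant : MeasureTheory.Integrable
    (fun t : ℝ ↦ (1 + ‖t‖ ^ 2) ^ (-(3 / 2) / 2 : ℝ)) :=
  integrable_rpow_neg_one_add_norm_sq (by norm_num)

lemma integrable_verticalDeriv {c : ℝ} (hc : 1 < c) (hc2 : c ≤ 2) (j : ℕ) :
    MeasureTheory.Integrable (verticalDeriv c j) := by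
  obtain ⟨C, hC, h⟩ := exists_norm_verticalDeriv_le j
  exact (integrable_majorant.const_mul C).mono' (continuous_verticalDeriv hc j).aestronglyMeasurable
    (.of_forall fun t ↦ h c hc hc2 t)

open FourierTransform in
lemma fourier_verticalDeriv {c : ℝ} (hc : 1 < c) (hc2 : c ≤ 2) (j : ℕ) (w : ℝ) :
    𝓕 (verticalDeriv c j) w = (2 * Real.pi * I * w) ^ j * 𝓕 (verticalDeriv c 0) w := by
  induction j with
  | zero => simp
  | succ j ih =>
    have hd : deriv (verticalDeriv c j) = verticalDeriv c (j + 1) :=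
      funext fun t ↦ (hasDerivAt_verticalDeriv hc j t).deriv
    have := congrFun (Real.fourier_deriv (integrable_verticalDeriv hc hc2 j)
      (fun t ↦ (hasDerivAt_verticalDeriv hc j t).differentiableAt)
      (hd ▸ integrable_verticalDeriv hc hc2 (j + 1))) w
    rw [hd] at this
    rw [this, smul_eq_mul, ih]
    ring

/-- Repeated integration by parts: the Fourier integral of the transform along a vertical line
decays faster than any power, uniformly in the line. -/
lemma exists_norm_integral_smoothedTransform_le (k : ℕ) :
    ∃ C : ℝ, 0 < C ∧ ∀ c : ℝ, 1 < c → c ≤ 2 → ∀ y : ℝ, 0 < y →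
      ‖∫ t : ℝ, cexp (y * t * I) * smoothedTransform (c + t * I)‖ ≤ C / y ^ k := by
  obtain ⟨C, hC, h⟩ := exists_norm_verticalDeriv_le k
  set J := ∫ t : ℝ, C * (1 + ‖t‖ ^ 2) ^ (-(3 / 2) / 2 : ℝ) with hJ
  have hJ0 : 0 ≤ J := MeasureTheory.integral_nonneg fun t ↦ by positivity
  refine ⟨J + 1, by linarith, fun c hc hc2 y hy ↦ ?_⟩
  have key : ∀ j : ℕ, FourierTransform.fourier (verticalDeriv c j) (-y / (2 * Real.pi)) =
      ∫ t : ℝ, cexp (y * t * I) * verticalDeriv c j t := by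
    intro j
    rw [Real.fourier_eq']
    congr 1 with t
    rw [smul_eq_mul]
    congr 2
    simp
    field_simp
  have h1 := fourier_verticalDeriv hc hc2 k (-y / (2 * Real.pi))
  rw [key, key] at h1
  have h2 : ‖∫ t : ℝ, cexp (y * t * I) * verticalDeriv c k t‖ ≤ J := by
    refine MeasureTheory.norm_integral_le_of_norm_le (integrable_majorant.const_mul C)
      (.of_forall fun t ↦ ?_)
    have : ‖cexp (y * t * I)‖ = 1 := by
      have := norm_exp_ofReal_mul_I (y * t)
      push_cast at this; exact this
    rw [norm_mul, this, one_mul]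
    exact h c hc hc2 t
  have h3 : ‖(2 * Real.pi * I * (-y / (2 * Real.pi) : ℝ) : ℂ)‖ = y := by
    have : (2 * Real.pi * I * (-y / (2 * Real.pi) : ℝ) : ℂ) = -(y * I) := by
      push_cast
      have : (Real.pi : ℂ) ≠ 0 := by exact_mod_cast Real.pi_ne_zero
      field_simp
    rw [this]; simp [hy.le]
  rw [h1, norm_mul, norm_pow, h3] at h2
  have e : (fun t : ℝ ↦ cexp (y * t * I) * verticalDeriv c 0 t) =
      fun t : ℝ ↦ cexp (y * t * I) * smoothedTransform (c + t * I) := by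
    ext t; simp [verticalDeriv]
  rw [e] at h2
  rw [le_div_iff₀ (by positivity), mul_comm]
  linarith

/-! ### Perron's formula with a hat weight -/

/-- The hat weight `u ↦ max (1 - u) 0`, complex-valued. -/
noncomputable def hatWeight (u : ℝ) : ℂ := (max (1 - u) 0 : ℝ)

lemma hasMellin_hatWeight {s : ℂ} (hs : 0 < s.re) :
    HasMellin hatWeight s (1 / (s * (s + 1))) := by
  have h1 := hasMellin_one_Ioc hs
  have h2 := hasMellin_cpow_Ioc 1 (s := s) (by simp; linarith)
  have h3 := hasMellin_sub h1.1 h2.1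
  rw [h1.2, h2.2] at h3
  have e : Set.EqOn (fun t : ℝ ↦ Set.indicator (Set.Ioc 0 1) (fun _ ↦ 1 : ℝ → ℂ) t -
      Set.indicator (Set.Ioc 0 1) (fun t ↦ (t : ℂ) ^ (1 : ℂ) : ℝ → ℂ) t) hatWeight (Set.Ioi 0) := by
    intro t ht
    by_cases h : t ≤ 1
    · have : t ∈ Set.Ioc (0 : ℝ) 1 := ⟨ht, h⟩
      simp [this, hatWeight, h]
    · have : t ∉ Set.Ioc (0 : ℝ) 1 := fun h' ↦ h h'.2
      rw [hatWeight, max_eq_right (by linarith)]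
      simp [this]
  have hs0 : s ≠ 0 := by rintro rfl; simp at hs
  have hs1 : s + 1 ≠ 0 := by intro h; have := congrArg re h; simp at this; linarith
  have hval : 1 / s - 1 / (s + 1) = 1 / (s * (s + 1)) := by field_simp; ring
  rw [hval] at h3
  refine ⟨h3.1.congr_fun (fun t ht ↦ by simp only [e ht]) measurableSet_Ioi, ?_⟩
  rw [← h3.2]
  exact (MeasureTheory.setIntegral_congr_fun measurableSet_Ioi
    (fun t ht ↦ by simp only [e ht])).symm

lemma continuous_hatWeight : Continuous hatWeight := by
  unfold hatWeight; fun_prop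

lemma norm_one_div_mul_le {c : ℝ} (hc : 1 < c) (t : ℝ) :
    ‖1 / ((c + t * I : ℂ) * (c + t * I + 1))‖ ≤ (1 + t ^ 2)⁻¹ := by
  have h1 : ∀ a : ℝ, 1 < a → √(1 + t ^ 2) ≤ ‖(a + t * I : ℂ)‖ := by
    intro a ha
    rw [Complex.norm_add_mul_I]
    exact Real.sqrt_le_sqrt (by nlinarith)
  have h2 := h1 (c + 1) (by linarith)
  have h0 : 0 < 1 + t ^ 2 := by positivity
  rw [one_div, norm_inv, norm_mul]
  gcongr
  calc 1 + t ^ 2 = √(1 + t ^ 2) * √(1 + t ^ 2) := (Real.mul_self_sqrt h0.le).symm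
    _ ≤ _ := by
      gcongr
      · exact h1 c hc
      · refine h2.trans_eq (congrArg _ ?_)
        push_cast; ring

lemma integrable_one_div_mul {c : ℝ} (hc : 1 < c) :
    MeasureTheory.Integrable fun t : ℝ ↦ 1 / ((c + t * I : ℂ) * (c + t * I + 1)) := by
  refine integrable_inv_one_add_sq.mono' ?_ (.of_forall fun t ↦ norm_one_div_mul_le hc t)
  refine Continuous.aestronglyMeasurable ?_
  refine continuous_const.div (by fun_prop) fun t ↦ ?_
  refine mul_ne_zero ?_ ?_ <;> intro h <;> have := congrArg re h <;> simp at this <;> linarith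

/-- Mellin inversion for the hat weight. -/
lemma integral_cpow_hatWeight {c u : ℝ} (hc : 1 < c) (hu : 0 < u) :
    ∫ t : ℝ, (u : ℂ) ^ (-(c + t * I : ℂ)) * (1 / ((c + t * I : ℂ) * (c + t * I + 1))) =
      2 * Real.pi * hatWeight u := by
  have hm : ∀ t : ℝ, mellin hatWeight (c + t * I) =
      1 / ((c + t * I : ℂ) * (c + t * I + 1)) := fun t ↦
    (hasMellin_hatWeight (by simp; linarith)).2
  have h := mellinInv_mellin_eq c hatWeight hu (hasMellin_hatWeight (by simp; linarith)).1
    (by simp only [VerticalIntegrable, hm]; exact integrable_one_div_mul hc)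
    continuous_hatWeight.continuousAt
  simp only [mellinInv, hm, smul_eq_mul] at h
  rw [← h, Complex.real_smul]
  have : (Real.pi : ℂ) ≠ 0 := by exact_mod_cast Real.pi_ne_zero
  push_cast
  rw [← mul_assoc, mul_one_div_cancel (by simp [this]), one_mul]

open ArithmeticFunction LSeries in
/-- Perron's formula for `Λ - 1` against the hat weight: Mellin inversion applied termwise to the
Dirichlet series. The term `n = 0` is set apart because `Λ(0) - 1 ≠ 0`. -/
lemma hasSum_hatWeight {c x : ℝ} (hc : 1 < c) (hx : 0 < x) :
    HasSum (fun n : ℕ ↦ if n = 0 then 0 else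
        ((vonMangoldt n : ℂ) - 1) * (2 * Real.pi * hatWeight (n / x)))
      (∫ t : ℝ, (x : ℂ) ^ (c + t * I : ℂ) * smoothedTransform (c + t * I)) := by
  set a : ℕ → ℂ := (fun n ↦ (vonMangoldt n : ℂ)) - 1 with ha
  have hx0 : (x : ℂ) ≠ 0 := by exact_mod_cast hx.ne'
  have hre : ∀ t : ℝ, (c + t * I : ℂ).re = c := by simp
  have hΛ : ∀ s : ℂ, 1 < s.re → LSeriesSummable (fun n ↦ (vonMangoldt n : ℂ)) s :=
    fun s hs ↦ LSeriesSummable_vonMangoldt hs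
  have h1 : ∀ s : ℂ, 1 < s.re → LSeriesSummable 1 s := fun s hs ↦ LSeriesSummable_one_iff.2 hs
  have hs : ∀ s : ℂ, 1 < s.re → LSeriesSummable a s := fun s hs ↦ (hΛ s hs).sub (h1 s hs)
  set F : ℕ → ℝ → ℂ := fun n t ↦ (x : ℂ) ^ (c + t * I : ℂ) * LSeries.term a (c + t * I) n *
    (1 / ((c + t * I : ℂ) * (c + t * I + 1))) with hF
  have hFn : ∀ n t, ‖F n t‖ = x ^ c * ‖LSeries.term a c n‖ *
      ‖1 / ((c + t * I : ℂ) * (c + t * I + 1))‖ := by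
    intro n t
    rw [hF]
    simp only [norm_mul, norm_term_eq, hre, ofReal_re]
    rw [norm_cpow_eq_rpow_re_of_pos hx, hre]
  have hF1 : ∀ n : ℕ, n ≠ 0 → ∀ t, F n t = a n * (((n / x : ℝ) : ℂ) ^ (-(c + t * I : ℂ)) *
      (1 / ((c + t * I : ℂ) * (c + t * I + 1)))) := by
    intro n hn t
    have : (((n / x : ℝ) : ℂ)) ^ (-(c + t * I : ℂ)) =
        (x : ℂ) ^ (c + t * I : ℂ) / (n : ℂ) ^ (c + t * I : ℂ) := by
      have : (n / x : ℝ) = n * x⁻¹ := rfl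
      rw [this, ofReal_mul, mul_cpow_ofReal_nonneg (by positivity) (by positivity), cpow_neg,
        ofReal_inv, inv_cpow, cpow_neg, inv_inv, ofReal_natCast]
      · field_simp
      · rw [arg_ofReal_of_nonneg hx.le]; exact Real.pi_pos.ne
    rw [this]
    simp only [hF, LSeries.term_of_ne_zero hn]
    ring
  have hFint : ∀ n, MeasureTheory.Integrable (F n) := by
    intro n
    rcases eq_or_ne n 0 with rfl | hn
    · simp [hF]
    refine ((integrable_one_div_mul hc).norm.const_mul (x ^ c * ‖LSeries.term a c n‖)).mono' ?_
      (.of_forall fun t ↦ (hFn n t).le)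
    refine MeasureTheory.AEStronglyMeasurable.mul ?_
      (integrable_one_div_mul hc).aestronglyMeasurable
    refine Continuous.aestronglyMeasurable ?_
    simp only [LSeries.term_of_ne_zero hn]
    have hn0 : (n : ℂ) ≠ 0 := by exact_mod_cast hn
    refine Continuous.mul ?_ (continuous_const.div ?_ fun t ↦ ?_)
    · exact Continuous.const_cpow (by fun_prop) (.inl hx0)
    · exact Continuous.const_cpow (by fun_prop) (.inl hn0)
    · simp [cpow_eq_zero_iff, hn0]
  have hsum : Summable fun n ↦ ∫ t, ‖F n t‖ := by
    simp only [hFn, MeasureTheory.integral_const_mul]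
    refine Summable.mul_right _ (Summable.mul_left _ ?_)
    exact (hs c (by simpa)).norm
  have key := MeasureTheory.hasSum_integral_of_summable_integral_norm hFint hsum
  have e1 : ∀ n : ℕ, (if n = 0 then 0 else
      ((vonMangoldt n : ℂ) - 1) * (2 * Real.pi * hatWeight (n / x))) = ∫ t, F n t := by
    intro n
    split_ifs with hn
    · subst hn; simp [hF]
    · simp only [hF1 n hn, MeasureTheory.integral_const_mul]
      rw [integral_cpow_hatWeight hc (by positivity)]
      simp [ha]
  have e2 : ∫ t : ℝ, (x : ℂ) ^ (c + t * I : ℂ) * smoothedTransform (c + t * I) =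
      ∫ t, ∑' n, F n t := by
    congr 1 with t
    have hst : 1 < (c + t * I : ℂ).re := by rw [hre]; exact hc
    have hne : (c + t * I : ℂ) ≠ 1 := fun h ↦ by rw [h] at hst; simp at hst
    simp only [hF]
    rw [tsum_mul_right, tsum_mul_left]
    change _ = (x : ℂ) ^ (c + t * I : ℂ) * LSeries a (c + t * I) * _
    rw [ha, LSeries_sub (hΛ _ hst) (h1 _ hst), LSeries_vonMangoldt_eq_deriv_riemannZeta_div hst,
      LSeries_one_eq_riemannZeta hst,
      smoothedTransform_eq hne (riemannZeta_ne_zero_of_one_le_re hst.le)]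
    ring
  rw [e2, funext e1]
  exact key

/-- The error term for the smoothed sum, obtained on the line `Re s = 1 + 1 / log x`; the factor
`1 / (log x) ^ k` is the Fourier decay at frequency `log x`. -/
lemma exists_abs_sum_vonMangoldt_sub_one_le (k : ℕ) :
    ∃ C : ℝ, 0 < C ∧ ∀ x : ℝ, Real.exp 1 ≤ x →
      |∑ n ∈ Finset.Ioc 0 ⌊x⌋₊, (ArithmeticFunction.vonMangoldt n - 1) * (x - n)| ≤
        C * x ^ 2 / Real.log x ^ k := by
  obtain ⟨C, hC, h⟩ := exists_norm_integral_smoothedTransform_le k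
  refine ⟨C * Real.exp 1, by positivity, fun x hx ↦ ?_⟩
  have hx0 : 0 < x := (Real.exp_pos 1).trans_le hx
  have hy : 1 ≤ Real.log x := (Real.le_log_iff_exp_le hx0).2 hx
  set y := Real.log x with hyx
  -- on this line `x ^ c = e * x`
  set c := 1 + 1 / y with hc
  have hy0 : 0 < y := by linarith
  have hc1 : 1 < c := by rw [hc]; have : 0 < 1 / y := by positivity
                         linarith
  have hc2 : c ≤ 2 := by rw [hc]; have : 1 / y ≤ 1 := by rw [div_le_one hy0]; exact hy
                         linarith
  have hxc : x ^ c = Real.exp 1 * x := by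
    rw [Real.rpow_def_of_pos hx0, ← hyx, hc, mul_add, mul_one_div_cancel hy0.ne', mul_one,
      Real.exp_add, hyx, Real.exp_log hx0, mul_comm]
  have hI : ∫ t : ℝ, (x : ℂ) ^ (c + t * I : ℂ) * smoothedTransform (c + t * I) =
      (x ^ c : ℝ) * ∫ t : ℝ, cexp (y * t * I) * smoothedTransform (c + t * I) := by
    rw [← MeasureTheory.integral_const_mul]
    congr 1 with t
    have hx0' : (x : ℂ) ≠ 0 := by exact_mod_cast hx0.ne'
    rw [cpow_add _ _ hx0', ofReal_cpow hx0.le, cpow_def_of_ne_zero hx0' (t * I), ← ofReal_log hx0.le,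
      ← hyx]
    ring_nf
  have hS := hasSum_hatWeight hc1 hx0
  have hfin := hasSum_sum_of_ne_finset_zero (L := .unconditional ℕ) (s := Finset.Ioc 0 ⌊x⌋₊) (f := fun n : ℕ ↦
      if n = 0 then 0 else ((ArithmeticFunction.vonMangoldt n : ℂ) - 1) *
        (2 * Real.pi * hatWeight (n / x))) (by
    intro n hn
    rcases Nat.eq_zero_or_pos n with h0 | h0
    · simp [h0]
    · have h1 : ⌊x⌋₊ < n := by
        by_contra! h'; exact hn (Finset.mem_Ioc.2 ⟨h0, h'⟩)
      have h2 : x ≤ n := ((Nat.floor_lt hx0.le).1 h1).le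
      have : hatWeight (n / x) = 0 := by
        rw [hatWeight, max_eq_right, ofReal_zero]
        have := (one_le_div hx0).2 h2
        linarith
      simp [this])
  have heq := hS.unique hfin
  have hconv : ∑ n ∈ Finset.Ioc 0 ⌊x⌋₊, (if n = 0 then 0 else
        ((ArithmeticFunction.vonMangoldt n : ℂ) - 1) * (2 * Real.pi * hatWeight (n / x))) =
      ((2 * Real.pi / x * ∑ n ∈ Finset.Ioc 0 ⌊x⌋₊,
        (ArithmeticFunction.vonMangoldt n - 1) * (x - n) : ℝ) : ℂ) := by
    rw [Finset.mul_sum]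
    push_cast
    refine Finset.sum_congr rfl fun n hn ↦ ?_
    obtain ⟨h0, h1⟩ := Finset.mem_Ioc.1 hn
    have h2 : (n : ℝ) ≤ x := (Nat.le_floor_iff hx0.le).1 h1
    have hx0' : (x : ℂ) ≠ 0 := by exact_mod_cast hx0.ne'
    rw [if_neg h0.ne', hatWeight, max_eq_left (by rw [sub_nonneg]; exact (div_le_one hx0).2 h2)]
    push_cast
    field_simp
  rw [hI, hconv] at heq
  have hn := congrArg norm heq
  rw [norm_mul, norm_real, norm_real, Real.norm_of_nonneg (by positivity), hxc, Real.norm_eq_abs,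
    abs_mul, abs_of_pos (by positivity)] at hn
  have hb := h c hc1 hc2 y hy0
  set S := |∑ n ∈ Finset.Ioc 0 ⌊x⌋₊, (ArithmeticFunction.vonMangoldt n - 1) * (x - n)|
  have h3 : 2 * Real.pi / x * S ≤ Real.exp 1 * x * (C / y ^ k) := by
    rw [← hn]; gcongr
  have h4 : 1 / x * S ≤ 2 * Real.pi / x * S := by
    gcongr
    linarith [Real.pi_gt_three]
  have h5 : S = x * (1 / x * S) := by field_simp
  rw [h5]
  calc x * (1 / x * S) ≤ x * (Real.exp 1 * x * (C / y ^ k)) := 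
      mul_le_mul_of_nonneg_left (h4.trans h3) hx0.le
    _ = _ := by ring

/-! ### From the smoothed sum to `ϑ` -/

/-- The integral `∫₀ˣ ψ` of the second Chebyshev function, as the weighted sum
`∑_{n ≤ x} Λ(n) (x - n)`. -/
noncomputable def psiPrimitive (x : ℝ) : ℝ :=
  ∑ n ∈ Finset.Ioc 0 ⌊x⌋₊, ArithmeticFunction.vonMangoldt n * (x - n)

lemma mul_psi_le_psiPrimitive_sub {y z : ℝ} (hyz : y ≤ z) (hy : 0 ≤ y) :
    (z - y) * Chebyshev.psi y ≤ psiPrimitive z - psiPrimitive y := by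
  have hsub : Finset.Ioc 0 ⌊y⌋₊ ⊆ Finset.Ioc 0 ⌊z⌋₊ :=
    Finset.Ioc_subset_Ioc_right (Nat.floor_mono hyz)
  have h1 := Finset.sum_le_sum_of_subset_of_nonneg hsub
    (f := fun n : ℕ ↦ ArithmeticFunction.vonMangoldt n * (z - n)) (fun n hn _ ↦
      mul_nonneg ArithmeticFunction.vonMangoldt_nonneg
        (sub_nonneg.2 ((Nat.le_floor_iff (hy.trans hyz)).1 (Finset.mem_Ioc.1 hn).2)))
  have h2 : (z - y) * Chebyshev.psi y + psiPrimitive y =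
      ∑ n ∈ Finset.Ioc 0 ⌊y⌋₊, ArithmeticFunction.vonMangoldt n * (z - n) := by
    rw [Chebyshev.psi, psiPrimitive, Finset.mul_sum, ← Finset.sum_add_distrib]
    exact Finset.sum_congr rfl fun n _ ↦ by ring
  rw [psiPrimitive]
  linarith

lemma psiPrimitive_sub_le_mul_psi {y z : ℝ} (hyz : y ≤ z) :
    psiPrimitive z - psiPrimitive y ≤ (z - y) * Chebyshev.psi z := by
  have hsub : Finset.Ioc 0 ⌊y⌋₊ ⊆ Finset.Ioc 0 ⌊z⌋₊ :=
    Finset.Ioc_subset_Ioc_right (Nat.floor_mono hyz)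
  have h1 := Finset.sum_le_sum_of_subset_of_nonneg hsub
    (f := fun n : ℕ ↦ ArithmeticFunction.vonMangoldt n * (n - y)) (fun n hn hn' ↦ by
      refine mul_nonneg ArithmeticFunction.vonMangoldt_nonneg (sub_nonneg.2 ?_)
      refine (Nat.lt_of_floor_lt (lt_of_not_ge fun h ↦ hn' ?_)).le
      exact Finset.mem_Ioc.2 ⟨(Finset.mem_Ioc.1 hn).1, h⟩)
  have h2 : (z - y) * Chebyshev.psi z - psiPrimitive z =
      ∑ n ∈ Finset.Ioc 0 ⌊z⌋₊, ArithmeticFunction.vonMangoldt n * (n - y) := by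
    rw [Chebyshev.psi, psiPrimitive, Finset.mul_sum, ← Finset.sum_sub_distrib]
    exact Finset.sum_congr rfl fun n _ ↦ by ring
  have h3 : -psiPrimitive y =
      ∑ n ∈ Finset.Ioc 0 ⌊y⌋₊, ArithmeticFunction.vonMangoldt n * (n - y) := by
    rw [psiPrimitive, ← Finset.sum_neg_distrib]
    exact Finset.sum_congr rfl fun n _ ↦ by ring
  linarith

lemma abs_sum_sub_le {x : ℝ} (hx : 1 ≤ x) :
    |∑ n ∈ Finset.Ioc 0 ⌊x⌋₊, (x - n) - x ^ 2 / 2| ≤ x := by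
  have h : ∀ N : ℕ, ∑ n ∈ Finset.Ioc 0 N, (x - n) = N * x - N * (N + 1) / 2 := by
    intro N
    induction N with
    | zero => simp
    | succ N ih => rw [Finset.sum_Ioc_succ_top (Nat.zero_le N), ih]; push_cast; ring
  have h1 := Nat.floor_le (zero_le_one.trans hx)
  have h2 := (Nat.lt_floor_add_one x).le
  have h0 : (0 : ℝ) ≤ ⌊x⌋₊ := Nat.cast_nonneg _
  rw [h, abs_le]
  constructor <;> nlinarith

lemma eventually_log_rpow_le (a : ℝ) {b : ℝ} (hb : 0 < b) :
    ∀ᶠ x : ℝ in atTop, Real.log x ^ a ≤ x ^ b := by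
  filter_upwards [(isLittleO_log_rpow_rpow_atTop a hb).bound one_pos, eventually_ge_atTop 1]
    with x hx hx1
  rw [one_mul] at hx
  have h0 : 0 ≤ Real.log x := Real.log_nonneg hx1
  rwa [Real.norm_of_nonneg (by positivity), Real.norm_of_nonneg (by positivity)] at hx

lemma exists_abs_psiPrimitive_sub_le (k : ℕ) : ∃ C : ℝ, 0 < C ∧ ∀ᶠ x : ℝ in atTop,
    |psiPrimitive x - x ^ 2 / 2| ≤ C * x ^ 2 / Real.log x ^ k := by
  obtain ⟨C, hC, h⟩ := exists_abs_sum_vonMangoldt_sub_one_le k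
  refine ⟨C + 1, by linarith, ?_⟩
  filter_upwards [eventually_ge_atTop (Real.exp 1), eventually_log_rpow_le k one_pos] with x hx hk
  have hx0 : 0 < x := (Real.exp_pos 1).trans_le hx
  have hy : 1 ≤ Real.log x := (Real.le_log_iff_exp_le hx0).2 hx
  have hx1 : 1 ≤ x := (Real.one_le_exp zero_le_one).trans hx
  rw [Real.rpow_one, Real.rpow_natCast] at hk
  have h1 := h x hx
  have h2 := abs_sum_sub_le hx1
  have h3 : psiPrimitive x - x ^ 2 / 2 =
      ∑ n ∈ Finset.Ioc 0 ⌊x⌋₊, (ArithmeticFunction.vonMangoldt n - 1) * (x - n) +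
        (∑ n ∈ Finset.Ioc 0 ⌊x⌋₊, (x - n) - x ^ 2 / 2) := by
    rw [← add_sub_assoc, ← Finset.sum_add_distrib, psiPrimitive]
    congr 1
    exact Finset.sum_congr rfl fun n _ ↦ by ring
  have h4 : x ≤ x ^ 2 / Real.log x ^ k := by
    rw [le_div_iff₀ (by positivity), sq]
    gcongr
  rw [h3]
  refine (abs_add_le _ _).trans ((add_le_add h1 (h2.trans h4)).trans_eq ?_)
  ring

/-- Differencing `psiPrimitive` with step `x / (log x) ^ m`, which balances the second-order term of
`x ^ 2 / 2` against an error `x ^ 2 / (log x) ^ (2 * m)`. Monotonicity of `ψ` makes the difference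
quotients one-sided bounds for `ψ x`. -/
lemma exists_abs_psi_sub_le (m : ℕ) (hm : m ≠ 0) : ∃ C : ℝ, 0 < C ∧ ∀ᶠ x : ℝ in atTop,
    |Chebyshev.psi x - x| ≤ C * x / Real.log x ^ m := by
  obtain ⟨C, hC, h⟩ := exists_abs_psiPrimitive_sub_le (2 * m)
  refine ⟨1 / 2 + 5 * C + C * 2 ^ (2 * m), by positivity, ?_⟩
  obtain ⟨x₁, hx₁⟩ := eventually_atTop.1 h
  filter_upwards [eventually_ge_atTop (2 * x₁), eventually_ge_atTop x₁, eventually_ge_atTop 4,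
    eventually_ge_atTop (Real.exp 2)] with x hx2 hx1 hx4 hxe
  have hx0 : 0 < x := by linarith
  set L := Real.log x with hL
  have hL2 : 2 ≤ L := (Real.le_log_iff_exp_le hx0).2 hxe
  have hL0 : 0 < L := by linarith
  set δ := (L ^ m)⁻¹ with hδ
  have hδ0 : 0 < δ := by positivity
  have hδ2 : δ ≤ 1 / 2 := by
    rw [hδ, ← one_div]
    exact one_div_le_one_div_of_le (by norm_num) (hL2.trans (le_self_pow₀ (by linarith) hm))
  have hδk : δ ^ 2 = (L ^ (2 * m))⁻¹ := by rw [hδ, inv_pow, ← pow_mul, mul_comm]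
  have hbound : ∀ z κ : ℝ, x₁ ≤ z → 0 ≤ z → 0 < κ → κ * L ≤ Real.log z →
      |psiPrimitive z - z ^ 2 / 2| ≤ C * (z ^ 2 * (κ⁻¹) ^ (2 * m) * δ ^ 2) := by
    intro z κ hz hz0 hκ hlog
    refine (hx₁ z hz).trans ?_
    rw [hδk, inv_pow, mul_assoc (z ^ 2), ← mul_inv, ← mul_pow, ← div_eq_mul_inv, ← mul_div_assoc]
    gcongr
  have e0 := hbound x 1 hx1 hx0.le one_pos (by rw [one_mul])
  have e1 := hbound (x + x * δ) 1 (by nlinarith) (by positivity) one_pos (by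
    rw [one_mul]; exact Real.log_le_log hx0 (by nlinarith))
  have hhalf : x / 2 ≤ x - x * δ := by nlinarith
  -- `κ = 2⁻¹`, because `log (x - x * δ) ≥ log (x / 2) ≥ (log x) / 2`
  have e2 := hbound (x - x * δ) 2⁻¹ (by linarith) (by linarith) (by norm_num) (by
    refine le_trans ?_ (Real.log_le_log (by linarith) hhalf)
    rw [Real.log_div hx0.ne' two_ne_zero, ← hL]
    have : Real.log 4 ≤ L := Real.log_le_log (by norm_num) hx4
    rw [show (4 : ℝ) = 2 ^ 2 by norm_num, Real.log_pow] at this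
    push_cast at this
    linarith)
  rw [inv_one, one_pow, mul_one] at e0 e1
  rw [inv_inv] at e2
  have hxd : 0 < x * δ := by positivity
  have e1' : |psiPrimitive (x + x * δ) - (x + x * δ) ^ 2 / 2| ≤ C * (4 * x ^ 2 * δ ^ 2) := by
    refine e1.trans ?_
    gcongr
    nlinarith
  have e2' : |psiPrimitive (x - x * δ) - (x - x * δ) ^ 2 / 2| ≤
      C * (x ^ 2 * 2 ^ (2 * m) * δ ^ 2) := by
    refine e2.trans ?_
    gcongr
    · linarith
    · linarith
  have up := mul_psi_le_psiPrimitive_sub (y := x) (z := x + x * δ) (by linarith) hx0.le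
  have lo := psiPrimitive_sub_le_mul_psi (y := x - x * δ) (z := x) (by linarith)
  rw [add_sub_cancel_left] at up
  rw [sub_sub_cancel] at lo
  have hrw : (1 / 2 + 5 * C + C * 2 ^ (2 * m)) * x / L ^ m =
      (1 / 2 + 5 * C + C * 2 ^ (2 * m)) * (x * δ) := by rw [hδ]; ring
  rw [hrw]
  rw [abs_le] at e0 e1' e2' ⊢
  have hQ : (0 : ℝ) < 2 ^ (2 * m) := by positivity
  set Q : ℝ := 2 ^ (2 * m)
  have hsq : 0 < C * (x * δ) ^ 2 := by positivity
  have hsqQ : 0 < C * Q * (x * δ) ^ 2 := by positivity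
  constructor
  · refine le_of_mul_le_mul_left ?_ hxd
    nlinarith [e0.1, e2'.2]
  · refine le_of_mul_le_mul_left ?_ hxd
    nlinarith [e0.1, e1'.2]

lemma chebyshevTheta_eq_theta (x : ℝ) : chebyshevTheta x = Chebyshev.theta x := by
  rw [Chebyshev.theta_eq_sum_Icc, chebyshevTheta]
  congr 2
  ext n
  simp

end

/-- **Theorem 5(ii).** For every `B > 1` there exist `C > 0` and `x₀` such that
`|x − ϑ(x)| ≤ C · x / (log x)^B` for all `x ≥ x₀`. -/
theorem chebyshevTheta_error_log_power :
    ∀ B : ℝ, 1 < B → ∃ C : ℝ, 0 < C ∧ ∃ x₀ : ℝ, ∀ x : ℝ, x₀ ≤ x →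
      |x - chebyshevTheta x| ≤ C * x / Real.log x ^ B := by
  intro B hB
  obtain ⟨C, hC, h⟩ := exists_abs_psi_sub_le ⌈B⌉₊ (by
    rw [Ne, Nat.ceil_eq_zero]; linarith)
  refine ⟨C + 2, by linarith, Filter.eventually_atTop.1 ?_⟩
  filter_upwards [h, eventually_log_rpow_le (B + 1) (b := 1 / 2) (by norm_num),
    Filter.eventually_ge_atTop (Real.exp 1)] with x hψ hlog hx
  have hx0 : 0 < x := (Real.exp_pos 1).trans_le hx
  have hL : 1 ≤ Real.log x := (Real.le_log_iff_exp_le hx0).2 hx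
  have hx1 : 1 ≤ x := (Real.one_le_exp zero_le_one).trans hx
  have hL0 : 0 < Real.log x := by linarith
  have hLB : 0 < Real.log x ^ B := by positivity
  have h1 : C * x / Real.log x ^ ⌈B⌉₊ ≤ C * x / Real.log x ^ B := by
    rw [← Real.rpow_natCast]
    have := Real.rpow_le_rpow_of_exponent_le hL (Nat.le_ceil B)
    gcongr
  have h2 : 2 * √x * Real.log x ≤ 2 * x / Real.log x ^ B := by
    rw [Real.rpow_add_one hL0.ne', ← Real.sqrt_eq_rpow] at hlog
    rw [le_div_iff₀ hLB]
    nlinarith [Real.mul_self_sqrt hx0.le, mul_le_mul_of_nonneg_left hlog (Real.sqrt_nonneg x)]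
  have h3 := Chebyshev.abs_psi_sub_theta_le_sqrt_mul_log hx1
  rw [chebyshevTheta_eq_theta, abs_sub_comm,
    show Chebyshev.theta x - x = (Chebyshev.psi x - x) - (Chebyshev.psi x - Chebyshev.theta x) by
      ring]
  refine (abs_sub _ _).trans ((add_le_add (hψ.trans h1) (h3.trans h2)).trans_eq ?_)
  ring
end
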